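/- arXiv:1112.4346 — 3 statements merged into one kernel-verified Lean document; each statement's English description precedes it below -/
import Mathlib

section
/- For every k ∈ ℕ (k ≥ 1) and every α > 0, there exists a constant C = C(k, α) > 0 such that for every α-separated trigonometric polynomial f(x) = Σ_{n=1}^N c_n e^{iλ_n x}, the maximal dyadic partial sum operator S* f(x) := sup_{j ∈ ℕ} |Σ_{n : |λ_n| ≤ 2^j} c_n e^{iλ_n x}| satisfies ‖S* f‖_{S^{2^k}} ≤ C ‖f‖_{S^{2^k}}. -/
/-- A trigonometric polynomial `x ↦ Σ_{n<N} c_n e^{iλ_n x}` with strictly increasing real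
exponents. -/
structure TrigPoly where
  N : ℕ
  c : ℕ → ℂ
  Λ : ℕ → ℝ
  mono : ∀ n, n + 1 < N → Λ n < Λ (n + 1)

/-- Evaluation of a trigonometric polynomial. -/
noncomputable def TrigPoly.eval (P : TrigPoly) (x : ℝ) : ℂ :=
  ∑ n ∈ Finset.range P.N, P.c n * Complex.exp (Complex.I * (P.Λ n : ℂ) * (x : ℂ))

/-- `α`-separation of the exponents: `λ_{n+1} - λ_n > α`. -/
def TrigPoly.sep (P : TrigPoly) (α : ℝ) : Prop :=
  ∀ n, n + 1 < P.N → α < P.Λ (n + 1) - P.Λ n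

/-- The Stepanov norm `‖f‖_{S^p} = (sup_{x ∈ ℝ} ∫_x^{x+1} |f(s)|^p ds)^{1/p}` of a function
`f : ℝ → ℝ`. -/
noncomputable def stepanovNorm (p : ℝ) (f : ℝ → ℝ) : ℝ :=
  (⨆ x : ℝ, ∫ s in x..(x + 1), |f s| ^ p) ^ (1 / p)

/-- The maximal dyadic partial sum operator
`S* f(x) = sup_{j ∈ ℕ} |Σ_{|λ_n| ≤ 2^j} c_n e^{iλ_n x}|`. -/
noncomputable def TrigPoly.maxDyadic (P : TrigPoly) (x : ℝ) : ℝ :=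
  ⨆ j : ℕ, ‖∑ n ∈ Finset.range P.N,
    if |P.Λ n| ≤ (2 : ℝ) ^ j then P.c n * Complex.exp (Complex.I * (P.Λ n : ℂ) * (x : ℂ))
    else 0‖

/-!
The powers of two come from Cotlar's method, which doubles the exponent of an inequality. For the
projections `S_t` onto the frequencies `n ≤ t` on the circle, `|S_t f|² ≤ 2 Re S_0 (f · conj S_t f)`
yields the vector-valued Riesz inequality in `L^{2^k}` starting from `L²`; by Abel summation it
extends to multipliers of bounded variation. Similarly, for `f` with positive frequencies, `|f|²` is
the square function `∑ t⁻³ |S_t D f|²` plus twice the real part of a paraproduct, so that the square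
function inequalities, and with them the inequality for dyadic blocks, double their exponent.

For the maximal operator, if `f` has positive frequencies then
`S_{2b} (f²) = (S_b f)² + 2 S_{2b} (S_b f · (S_{2b} f - S_b f))`, which bounds `max |S_b f|²` by the
maximal operator applied to `f²` and by dyadic blocks. In `L²` the cutoff at `b` is compared with
the Abel mean of parameter `1 - ba` along the rotation by a small angle `a`: the errors are square
summable over dyadic `b`, and Abel means satisfy a maximal inequality by the `TT*` method.

For real frequencies, each `λ_n` is rounded to the lattice of mesh `δ / K` and smeared over `K`
lattice points, which multiplies the sum by a kernel that is bounded below near `0` and decays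
at scale `1 / δ`. As the frequencies are `4δ`-separated, each dyadic cutoff can be moved slightly
so that it splits no smeared frequency, and the resulting bound survives the limit `K → ∞`.
-/

open Finset
open scoped Pointwise

namespace StepanovMaximal

local notation "𝓛" => LaurentPolynomial ℂ

section CircleMean

/-- The mean of `F : ℝ → ℝ` over one period `[-π, π]`; functions on the circle are written in the
angular variable. -/
noncomputable def mean (F : ℝ → ℝ) : ℝ := (2 * Real.pi)⁻¹ * ∫ u in (-Real.pi)..Real.pi, F u

variable {F G X Y : ℝ → ℝ}

lemma mean_mono (h : ∀ u, F u ≤ G u) (hF : Continuous F := by fun_prop)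
    (hG : Continuous G := by fun_prop) : mean F ≤ mean G := by
  have := Real.pi_pos
  exact mul_le_mul_of_nonneg_left (intervalIntegral.integral_mono_on (by linarith)
    (hF.intervalIntegrable _ _) (hG.intervalIntegrable _ _) fun u _ => h u) (by positivity)

lemma mean_pow_mono (h0 : ∀ u, 0 ≤ F u) (h : ∀ u, F u ≤ G u) (m : ℕ)
    (hF : Continuous F := by fun_prop) (hG : Continuous G := by fun_prop) :
    mean (fun u => F u ^ m) ≤ mean (fun u => G u ^ m) :=
  mean_mono (fun u => pow_le_pow_left₀ (h0 u) (h u) m) (hF.pow m) (hG.pow m)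

lemma mean_const_mul (c : ℝ) (F : ℝ → ℝ) : mean (fun u => c * F u) = c * mean F := by
  rw [mean, intervalIntegral.integral_const_mul, mean]; ring

lemma mean_add (hF : Continuous F := by fun_prop) (hG : Continuous G := by fun_prop) :
    mean (fun u => F u + G u) = mean F + mean G := by
  rw [mean, intervalIntegral.integral_add (hF.intervalIntegrable _ _) (hG.intervalIntegrable _ _),
    mul_add, mean, mean]

lemma mean_sum {ι : Type*} {s : Finset ι} {F : ι → ℝ → ℝ} (hF : ∀ i ∈ s, Continuous (F i)) :
    mean (fun u => ∑ i ∈ s, F i u) = ∑ i ∈ s, mean (F i) := by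
  rw [mean, intervalIntegral.integral_finsetSum fun i hi => (hF i hi).intervalIntegrable _ _,
    mul_sum]
  rfl

lemma mean_comp_add_right (hF : Function.Periodic F (2 * Real.pi)) (a : ℝ) :
    mean (fun u => F (u + a)) = mean F := by
  rw [mean, mean, intervalIntegral.integral_comp_add_right]
  congr 1
  convert hF.intervalIntegral_add_eq (-Real.pi + a) (-Real.pi) using 2 <;> ring

lemma mean_sq_le_of_mean_sq_le_add {c K : ℝ} (hX : Continuous X) (hY : Continuous Y)
    (h : mean (fun u => X u ^ 2) ≤ c * mean (fun u => Y u ^ 2) + K * mean (fun u => X u * Y u)) :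
    mean (fun u => X u ^ 2) ≤ (2 * c + K ^ 2) * mean (fun u => Y u ^ 2) := by
  have cross : K * mean (fun u => X u * Y u) ≤
      1 / 2 * mean (fun u => X u ^ 2) + K ^ 2 / 2 * mean (fun u => Y u ^ 2) := by
    rw [← mean_const_mul, ← mean_const_mul, ← mean_const_mul, ← mean_add]
    exact mean_mono fun u => by nlinarith [sq_nonneg (X u - K * Y u)]
  linarith

lemma add_pow_le_two_pow_mul {a b : ℝ} (ha : 0 ≤ a) (hb : 0 ≤ b) (n : ℕ) :
    (a + b) ^ n ≤ 2 ^ n * (a ^ n + b ^ n) :=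
  (add_pow_le ha hb n).trans <| by gcongr <;> [norm_num; omega]

lemma mean_pow_le_of_le_add_of_mean_pow_le {A B w : ℝ → ℝ} {K : ℝ} {m : ℕ} (hA : Continuous A)
    (hB : Continuous B) (hw : Continuous w) (A0 : ∀ u, 0 ≤ A u) (B0 : ∀ u, 0 ≤ B u)
    (w0 : ∀ u, 0 ≤ w u) (h : ∀ u, A u ≤ B u + 2 * w u)
    (hK : mean (fun u => w u ^ (2 * m)) ≤ K * mean (fun u => (A u * B u) ^ m)) :
    mean (fun u => A u ^ (2 * m)) ≤
      (2 * 4 ^ m + (16 ^ m * K) ^ 2) * mean (fun u => B u ^ (2 * m)) := by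
  have pointwise (u : ℝ) : A u ^ (2 * m) ≤ 4 ^ m * B u ^ (2 * m) + 16 ^ m * w u ^ (2 * m) := by
    refine (pow_le_pow_left₀ (A0 u) (h u) _).trans ?_
    refine (add_pow_le_two_pow_mul (B0 u) (by linarith [w0 u]) _).trans_eq ?_
    rw [mul_pow, pow_mul 2 2 m, show (16 : ℝ) = 4 * 4 by norm_num, mul_pow]
    norm_num; ring
  have split := mean_mono pointwise
  rw [mean_add, mean_const_mul, mean_const_mul] at split
  have key := mean_sq_le_of_mean_sq_le_add (X := fun u => A u ^ m) (Y := fun u => B u ^ m)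
    (c := 4 ^ m) (K := 16 ^ m * K) (by fun_prop) (by fun_prop)
  simp only [← pow_mul, mul_comm m 2, ← mul_pow] at key
  refine key (split.trans ?_)
  rw [mul_assoc]
  gcongr

end CircleMean

section Polynomials

/-- Evaluation of a Laurent polynomial at the point `e^{iu}` of the unit circle. -/
noncomputable def ev (u : ℝ) : 𝓛 →ₐ[ℂ] ℂ :=
  AddMonoidAlgebra.lift ℂ ℂ ℤ (Circle.coeHom.comp (zpowersHom Circle (Circle.exp u)))

lemma ev_single (u : ℝ) (n : ℤ) (c : ℂ) :
    ev u (AddMonoidAlgebra.single n c) = c * Circle.exp (n * u) := by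
  rw [ev, AddMonoidAlgebra.lift_single, Circle.exp_intCast_mul, smul_eq_mul]
  rfl

lemma ev_eq_sum (u : ℝ) {f : 𝓛} {s : Finset ℤ} (h : f.coeff.support ⊆ s) :
    ev u f = ∑ n ∈ s, f.coeff n * Circle.exp (n * u) := by
  conv_lhs => rw [← AddMonoidAlgebra.sum_coeff_single f]
  rw [Finsupp.sum_of_support_subset _ h _ (by simp), map_sum]
  simp only [ev_single]

@[fun_prop]
lemma continuous_ev (f : 𝓛) : Continuous fun u => ev u f := by
  simp only [ev_eq_sum _ (Subset.refl f.coeff.support)]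
  fun_prop

lemma periodic_ev (f : 𝓛) : Function.Periodic (fun u => ev u f) (2 * Real.pi) := by
  intro u
  simp only [ev, Circle.exp_add, Circle.exp_two_pi, mul_one]

/-- The polynomial whose values on the unit circle are the complex conjugates of those of `f`. -/
noncomputable def adj : 𝓛 →+* 𝓛 :=
  (LaurentPolynomial.invert : 𝓛 ≃ₐ[ℂ] 𝓛).toRingEquiv.toRingHom.comp
    (AddMonoidAlgebra.mapRingHom ℤ (starRingEnd ℂ))

@[simp]
lemma coeff_adj (f : 𝓛) (n : ℤ) : (adj f).coeff n = starRingEnd ℂ (f.coeff (-n)) := by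
  simp [adj]

@[simp]
lemma ev_adj (u : ℝ) (f : 𝓛) : ev u (adj f) = starRingEnd ℂ (ev u f) := by
  have h : (adj f).coeff.support ⊆ f.coeff.support.image (fun n => -n) := fun n hn => by
    simpa [neg_eq_iff_eq_neg] using hn
  rw [ev_eq_sum u h, ev_eq_sum u (Subset.refl f.coeff.support), sum_image (by simp), map_sum]
  refine sum_congr rfl fun n _ => ?_
  rw [coeff_adj, neg_neg, map_mul (starRingEnd ℂ), ← Circle.coe_inv_eq_conj, ← Circle.exp_neg,
    Int.cast_neg, neg_mul]

lemma adj_adj (f : 𝓛) : adj (adj f) = f := by ext n; simp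

lemma integral_exp_int_mul {n : ℤ} (hn : n ≠ 0) :
    ∫ u in (-Real.pi)..Real.pi, (Circle.exp (n * u) : ℂ) = 0 := by
  have hI : (n : ℂ) * Complex.I ≠ 0 := by simp [hn]
  have h : ∀ u : ℝ, (Circle.exp (n * u) : ℂ) = Complex.exp (n * Complex.I * u) := fun u => by
    rw [Circle.coe_exp]; push_cast; ring_nf
  simp only [h]
  rw [integral_exp_mul_complex hI, div_eq_zero_iff, sub_eq_zero]
  refine Or.inl (Complex.exp_eq_exp_iff_exists_int.2 ⟨n, ?_⟩)
  push_cast; ring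

lemma integral_ev (f : 𝓛) :
    ∫ u in (-Real.pi)..Real.pi, ev u f = 2 * Real.pi * f.coeff 0 := by
  simp only [ev_eq_sum _ (Subset.refl f.coeff.support)]
  rw [intervalIntegral.integral_finsetSum fun n _ =>
    Continuous.intervalIntegrable (by fun_prop) _ _]
  simp only [intervalIntegral.integral_const_mul]
  rw [sum_eq_single 0 (fun n _ hn => by rw [integral_exp_int_mul hn, mul_zero])
    fun h => by simp [Finsupp.notMem_support_iff.1 h]]
  simp
  ring

lemma mean_re_ev (f : 𝓛) : mean (fun u => (ev u f).re) = (f.coeff 0).re := by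
  have h := congrArg Complex.re (integral_ev f)
  rw [← Complex.reCLM_apply,
    ← Complex.reCLM.intervalIntegral_comp_comm ((continuous_ev f).intervalIntegrable _ _)] at h
  simp only [Complex.reCLM_apply] at h
  rw [mean, h]
  have := Real.pi_pos
  norm_cast
  rw [Complex.re_ofReal_mul]
  field_simp

lemma coeff_mul_adj_zero (f : 𝓛) :
    (f * adj f).coeff 0 = ∑ n ∈ f.coeff.support, (‖f.coeff n‖ ^ 2 : ℝ) := by
  rw [AddMonoidAlgebra.coeff_mul_apply_left, Finsupp.sum]
  push_cast
  refine sum_congr rfl fun n _ => ?_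
  rw [coeff_adj, add_zero, neg_neg, Complex.mul_conj']

lemma ev_mul_adj (u : ℝ) (f : 𝓛) : ev u (f * adj f) = (‖ev u f‖ ^ 2 : ℝ) := by
  rw [map_mul, ev_adj, Complex.mul_conj']; norm_cast

lemma mean_norm_ev_sq (f : 𝓛) :
    mean (fun u => ‖ev u f‖ ^ 2) = ∑ n ∈ f.coeff.support, ‖f.coeff n‖ ^ 2 := by
  have h := mean_re_ev (f * adj f)
  simpa only [ev_mul_adj, coeff_mul_adj_zero, Complex.ofReal_re, ← Complex.ofReal_sum] using h

end Polynomials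

section Multipliers

/-- The Fourier multiplier with symbol `φ`. -/
noncomputable def mult (φ : ℤ → ℂ) : 𝓛 →ₗ[ℂ] 𝓛 where
  toFun f := .ofCoeff (Finsupp.onFinset f.coeff.support (fun n => φ n * f.coeff n) fun n h =>
    Finsupp.mem_support_iff.2 (right_ne_zero_of_mul h))
  map_add' f g := by ext n; simp [mul_add]
  map_smul' c f := by ext n; simp [mul_left_comm]

@[simp]
lemma coeff_mult (φ : ℤ → ℂ) (f : 𝓛) (n : ℤ) : (mult φ f).coeff n = φ n * f.coeff n := rfl

lemma mult_mult (φ ψ : ℤ → ℂ) (f : 𝓛) : mult φ (mult ψ f) = mult (fun n => φ n * ψ n) f := by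
  ext n; simp [mul_assoc]

/-- The Riesz projection `S_t` onto the frequencies `n ≤ t`. -/
noncomputable def lowPass (t : ℤ) : 𝓛 →ₗ[ℂ] 𝓛 := mult fun n => if n ≤ t then 1 else 0

@[simp]
lemma coeff_lowPass (t : ℤ) (f : 𝓛) (n : ℤ) :
    (lowPass t f).coeff n = if n ≤ t then f.coeff n else 0 := by
  simp [lowPass]

/-- `SpecIn A f`: the frequencies of `f` all lie in `A`. -/
def SpecIn (A : Set ℤ) (f : 𝓛) : Prop := ∀ n, f.coeff n ≠ 0 → n ∈ A

variable {A B C : Set ℤ} {f g : 𝓛}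

lemma SpecIn.mono (hf : SpecIn A f) (h : A ⊆ B) : SpecIn B f := fun n hn => h (hf n hn)

lemma SpecIn.add (hf : SpecIn A f) (hg : SpecIn A g) : SpecIn A (f + g) := fun n hn => by
  by_contra h
  exact hn (by simp [not_not.1 (mt (hf n) h), not_not.1 (mt (hg n) h)])

lemma SpecIn.smul (c : ℂ) (hf : SpecIn A f) : SpecIn A (c • f) := fun n hn =>
  hf n fun h => hn (by simp [h])

lemma SpecIn.sum {ι : Type*} {s : Finset ι} {f : ι → 𝓛} (hf : ∀ i ∈ s, SpecIn A (f i)) :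
    SpecIn A (∑ i ∈ s, f i) :=
  sum_induction f (SpecIn A) (fun _ _ => SpecIn.add) (fun _ h => (h rfl).elim) hf

lemma SpecIn.mult (φ : ℤ → ℂ) (hf : SpecIn A f) : SpecIn A (mult φ f) := fun n hn =>
  hf n (right_ne_zero_of_mul hn)

lemma SpecIn.mul (hf : SpecIn A f) (hg : SpecIn B g)
    (h : ∀ a ∈ A, ∀ b ∈ B, a + b ∈ C) : SpecIn C (f * g) := fun n hn => by
  obtain ⟨a, ha, b, hb, rfl⟩ := mem_add.1
    (AddMonoidAlgebra.support_coeff_mul_subset f g (Finsupp.mem_support_iff.2 hn))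
  exact h a (hf a (Finsupp.mem_support_iff.1 ha)) b (hg b (Finsupp.mem_support_iff.1 hb))

lemma SpecIn.adj (hf : SpecIn A f) : SpecIn (-A) (adj f) := fun n hn =>
  hf (-n) fun h => hn (by simp [h])

lemma specIn_lowPass (t : ℤ) (f : 𝓛) : SpecIn (Set.Iic t) (lowPass t f) := fun n hn => by
  by_contra h
  exact hn (by simp [show ¬ n ≤ t from h])

lemma specIn_sub_lowPass (t : ℤ) (f : 𝓛) : SpecIn (Set.Ioi t) (f - lowPass t f) := fun n hn => by
  by_contra h
  exact hn (by simp [not_lt.1 (show ¬ t < n from h)])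

lemma lowPass_eq_self {t : ℤ} (hf : SpecIn (Set.Iic t) f) : lowPass t f = f := by
  ext n
  by_cases h : f.coeff n = 0
  · simp [h]
  · simp [show n ≤ t from hf n h]

lemma lowPass_eq_zero {t : ℤ} (hf : SpecIn (Set.Ioi t) f) : lowPass t f = 0 := by
  ext n
  by_cases h : f.coeff n = 0
  · simp [h]
  · simp [show t < n from hf n h]

end Multipliers

section VectorRiesz

/-- Conjugation about the frequency `0` exchanges the two halves of the Hermitian polynomial
`g * adj g`, so its analytic part carries half of `|g|²` together with half of the mean. -/
lemma norm_ev_sq_le_two_re_ev_lowPass_mul_adj (u : ℝ) (g : 𝓛) :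
    ‖ev u g‖ ^ 2 ≤ 2 * (ev u (lowPass 0 (g * adj g))).re := by
  set p := g * adj g
  have hermitian (n : ℤ) : starRingEnd ℂ (p.coeff (-n)) = p.coeff n := by
    rw [← coeff_adj]
    simp only [p, map_mul, adj_adj, mul_comm]
  have symmetrize : p + AddMonoidAlgebra.single 0 (p.coeff 0) =
      lowPass 0 p + adj (lowPass 0 p) := by
    ext n
    rcases lt_trichotomy n 0 with h | rfl | h
    · simp [h.ne, h.le, h.not_ge]
    · simpa using (hermitian 0).symm
    · simp [h.ne', h.le, h.not_ge, hermitian n]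
  have := congrArg (fun q => (ev u q).re) symmetrize
  simp only [map_add, ev_single, ev_adj, Complex.add_re, Complex.conj_re, p, ev_mul_adj,
    coeff_mul_adj_zero] at this
  rw [Int.cast_zero, zero_mul, Circle.exp_zero, Circle.coe_one, mul_one, Complex.ofReal_re,
    Complex.ofReal_re, ← two_mul] at this
  rw [← this]
  exact le_add_of_nonneg_right (sum_nonneg fun _ _ => by positivity)

/-- Cotlar's inequality. -/
lemma norm_ev_lowPass_sq_le (u : ℝ) (t : ℤ) (f : 𝓛) :
    ‖ev u (lowPass t f)‖ ^ 2 ≤ 2 * (ev u (lowPass 0 (f * adj (lowPass t f)))).re := by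
  have high : lowPass 0 ((f - lowPass t f) * adj (lowPass t f)) = 0 :=
    lowPass_eq_zero ((specIn_sub_lowPass t f).mul (specIn_lowPass t f).adj fun a ha b hb => by
      simp only [Set.mem_Ioi, Set.mem_neg, Set.mem_Iic] at *; omega)
  rw [sub_mul, map_sub, sub_eq_zero] at high
  rw [high]
  exact norm_ev_sq_le_two_re_ev_lowPass_mul_adj u _

/-- The weighted vector-valued Riesz inequality with constant `C` in `L^{2m}`: the projections
`S_{t_i}` may depend on the component. -/
def VectorRiesz (m : ℕ) (C : ℝ) : Prop :=
  ∀ {ι : Type} (s : Finset ι) (w : ι → ℝ) (t : ι → ℤ) (f : ι → 𝓛), (∀ i ∈ s, 0 ≤ w i) →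
    mean (fun u => (∑ i ∈ s, w i * ‖ev u (lowPass (t i) (f i))‖ ^ 2) ^ m) ≤
      C * mean (fun u => (∑ i ∈ s, w i * ‖ev u (f i)‖ ^ 2) ^ m)

lemma mean_norm_ev_mult_sq (φ : ℤ → ℂ) (f : 𝓛) : mean (fun u => ‖ev u (mult φ f)‖ ^ 2) =
    ∑ n ∈ f.coeff.support, ‖φ n‖ ^ 2 * ‖f.coeff n‖ ^ 2 := by
  rw [mean_norm_ev_sq]
  simp only [coeff_mult, norm_mul, mul_pow]
  refine sum_subset (fun n hn => ?_) fun n _ hn => ?_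
  · exact Finsupp.mem_support_iff.2 (right_ne_zero_of_mul (Finsupp.mem_support_iff.1 hn))
  · rw [← mul_pow, ← norm_mul, ← coeff_mult, Finsupp.notMem_support_iff.1 hn, norm_zero, sq,
      zero_mul]

lemma sum_mean_norm_ev_mult_sq_le {ι : Type*} {s : Finset ι} {φ : ι → ℤ → ℂ} {f : 𝓛} {K : ℝ}
    (hφ : ∀ n ∈ f.coeff.support, ∑ j ∈ s, ‖φ j n‖ ^ 2 ≤ K) :
    ∑ j ∈ s, mean (fun u => ‖ev u (mult (φ j) f)‖ ^ 2) ≤ K * mean (fun u => ‖ev u f‖ ^ 2) := by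
  simp only [mean_norm_ev_mult_sq]
  rw [mean_norm_ev_sq, sum_comm, mul_sum]
  refine sum_le_sum fun n hn => ?_
  rw [← sum_mul]
  exact mul_le_mul_of_nonneg_right (hφ n hn) (sq_nonneg _)

lemma mean_norm_ev_mult_sq_le {φ : ℤ → ℂ} (f : 𝓛) (hφ : ∀ n, ‖φ n‖ ≤ 1) :
    mean (fun u => ‖ev u (mult φ f)‖ ^ 2) ≤ mean (fun u => ‖ev u f‖ ^ 2) := by
  have := sum_mean_norm_ev_mult_sq_le (s := {()}) (φ := fun _ => φ) (f := f) (K := 1)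
    fun n _ => by simpa using hφ n
  rwa [sum_singleton, one_mul] at this

lemma vectorRiesz_one : VectorRiesz 1 1 := by
  intro ι s w t f hw
  simp only [pow_one, one_mul]
  rw [mean_sum fun i _ => by fun_prop, mean_sum fun i _ => by fun_prop]
  simp only [mean_const_mul]
  refine sum_le_sum fun i hi => mul_le_mul_of_nonneg_left ?_ (hw i hi)
  exact mean_norm_ev_mult_sq_le _ fun n => by split_ifs <;> simp

lemma norm_sum_smul_mul_sq_le {ι : Type*} (s : Finset ι) {w : ι → ℝ} (hw : ∀ i ∈ s, 0 ≤ w i)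
    (a b : ι → ℂ) : ‖∑ i ∈ s, w i * (a i * b i)‖ ^ 2 ≤
      (∑ i ∈ s, w i * ‖a i‖ ^ 2) * ∑ i ∈ s, w i * ‖b i‖ ^ 2 := by
  refine (pow_le_pow_left₀ (norm_nonneg _) (norm_sum_le _ _) 2).trans ?_
  refine sum_sq_le_sum_mul_sum_of_sq_le_mul s (fun i hi => ?_) (fun i hi => ?_) fun i hi => ?_
  · have := hw i hi; positivity
  · have := hw i hi; positivity
  · rw [norm_mul, norm_mul, Complex.norm_of_nonneg (hw i hi)]; apply le_of_eq; ring

lemma VectorRiesz.two_mul {m : ℕ} {C : ℝ} (hC : 0 ≤ C) (h : VectorRiesz m C) :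
    VectorRiesz (2 * m) ((4 ^ m * C) ^ 2) := by
  intro ι s w t f hw
  set A : ℝ → ℝ := fun u => ∑ i ∈ s, w i * ‖ev u (f i)‖ ^ 2
  set B : ℝ → ℝ := fun u => ∑ i ∈ s, w i * ‖ev u (lowPass (t i) (f i))‖ ^ 2
  have hA : Continuous A := by fun_prop
  have hB : Continuous B := by fun_prop
  have : ∀ u, 0 ≤ A u := fun u => sum_nonneg fun i hi => mul_nonneg (hw i hi) (by positivity)
  have B0 (u) : 0 ≤ B u := sum_nonneg fun i hi => mul_nonneg (hw i hi) (by positivity)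
  set F : 𝓛 := ∑ i ∈ s, (w i : ℂ) • (f i * adj (lowPass (t i) (f i)))
  have cotlar (u) : B u ≤ 2 * ‖ev u (lowPass 0 F)‖ := by
    refine le_trans ?_ (mul_le_mul_of_nonneg_left (Complex.re_le_norm _) two_pos.le)
    simp only [B, F, map_sum, map_smul, Complex.re_sum, smul_eq_mul, Complex.re_ofReal_mul, mul_sum]
    refine sum_le_sum fun i hi => ?_
    rw [mul_left_comm]
    exact mul_le_mul_of_nonneg_left (norm_ev_lowPass_sq_le u _ _) (hw i hi)
  have cauchy (u) : ‖ev u F‖ ^ 2 ≤ B u * A u := by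
    simp only [F, map_sum, map_smul, map_mul, smul_eq_mul, ev_adj]
    refine (norm_sum_smul_mul_sq_le s hw _ _).trans_eq ?_
    simp only [RCLike.norm_conj, A, B, mul_comm]
  have single := h {()} (fun _ => 1) (fun _ => 0) (fun _ => F) (by simp)
  simp only [sum_singleton, one_mul] at single
  have key := mean_sq_le_of_mean_sq_le_add (X := fun u => B u ^ m) (Y := fun u => A u ^ m)
    (c := 0) (K := 4 ^ m * C) (by fun_prop) (by fun_prop)
  simp only [zero_mul, zero_add, mul_zero, ← pow_mul, mul_comm m 2, ← mul_pow] at key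
  refine key ?_
  calc mean (fun u => B u ^ (2 * m))
      ≤ mean (fun u => 4 ^ m * (‖ev u (lowPass 0 F)‖ ^ 2) ^ m) := mean_mono fun u => by
        rw [pow_mul, ← mul_pow]
        exact pow_le_pow_left₀ (sq_nonneg _) (by nlinarith [cotlar u, B0 u]) m
    _ ≤ 4 ^ m * (C * mean (fun u => (‖ev u F‖ ^ 2) ^ m)) := by
        rw [mean_const_mul]; gcongr
    _ ≤ 4 ^ m * C * mean (fun u => (B u * A u) ^ m) := by
        rw [mul_assoc]
        gcongr
        exact mean_mono fun u => pow_le_pow_left₀ (sq_nonneg _) (cauchy u) m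

lemma exists_vectorRiesz (k : ℕ) : ∃ C, 0 ≤ C ∧ VectorRiesz (2 ^ k) C := by
  induction k with
  | zero => exact ⟨1, zero_le_one, by rw [pow_zero]; exact vectorRiesz_one⟩
  | succ k ih =>
    obtain ⟨C, hC, h⟩ := ih
    exact ⟨_, sq_nonneg _, by rw [pow_succ']; exact h.two_mul hC⟩

end VectorRiesz

section BoundedVariation

lemma sum_Icc_int_sub_succ {M : Type*} [AddCommGroup M] (c : ℤ → M) {a b : ℤ} (h : a ≤ b + 1) :
    ∑ n ∈ Icc a b, (c n - c (n + 1)) = c a - c (b + 1) := by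
  obtain ⟨b, rfl⟩ : ∃ b', b = b' - 1 := ⟨b + 1, by ring⟩
  rw [sub_add_cancel] at h
  induction b, h using Int.leInduction with
  | base => simp
  | succ b hb ih =>
    rw [sub_add_cancel] at ih ⊢
    rw [add_sub_cancel_right, ← insert_Icc_sub_one_right_eq_Icc hb, sum_insert (by simp), ih]
    abel

lemma mult_eq_sum_smul_lowPass {a b : ℤ} {f : 𝓛} (hf : SpecIn (Set.Icc a b) f) {c : ℤ → ℂ}
    (hc : c (b + 1) = 0) :
    mult c f = ∑ n ∈ Icc a b, (c n - c (n + 1)) • lowPass n f := by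
  ext k
  simp only [coeff_mult, AddMonoidAlgebra.coeff_sum, AddMonoidAlgebra.coeff_smul,
    Finsupp.finsetSum_apply, Finsupp.smul_apply, coeff_lowPass, smul_eq_mul]
  by_cases hk : f.coeff k = 0
  · simp [hk]
  obtain ⟨hak, hkb⟩ := hf k hk
  have : {n ∈ Icc a b | k ≤ n} = Icc k b := by ext n; simp; omega
  simp only [mul_ite, mul_zero, ← sum_filter, this, ← sum_mul]
  rw [sum_Icc_int_sub_succ c (by omega), hc, sub_zero]

lemma norm_sum_mul_sq_le {ι : Type*} (s : Finset ι) (d a : ι → ℂ) :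
    ‖∑ i ∈ s, d i * a i‖ ^ 2 ≤ (∑ i ∈ s, ‖d i‖) * ∑ i ∈ s, ‖d i‖ * ‖a i‖ ^ 2 := by
  refine (pow_le_pow_left₀ (norm_nonneg _) (norm_sum_le _ _) 2).trans ?_
  refine sum_sq_le_sum_mul_sum_of_sq_le_mul s (fun i _ => by positivity)
    (fun i _ => by positivity) fun i _ => ?_
  rw [norm_mul]
  exact le_of_eq (by ring)

/-- Abel summation writes a multiplier of bounded variation as a superposition of the projections
`S_n`, so the vector-valued Riesz inequality controls it. -/
lemma VectorRiesz.mean_mult_le {m : ℕ} {C : ℝ} (hC : 0 ≤ C) (h : VectorRiesz m C) {ι : Type}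
    (s : Finset ι) {w V : ι → ℝ} {f : ι → 𝓛} {c : ι → ℤ → ℂ} {a b : ℤ} (hw : ∀ i ∈ s, 0 ≤ w i)
    (hf : ∀ i ∈ s, SpecIn (Set.Icc a b) (f i)) (hc : ∀ i ∈ s, c i (b + 1) = 0)
    (hV : ∀ i ∈ s, ∑ n ∈ Icc a b, ‖c i n - c i (n + 1)‖ ≤ V i) :
    mean (fun u => (∑ i ∈ s, w i * ‖ev u (mult (c i) (f i))‖ ^ 2) ^ m) ≤
      C * mean (fun u => (∑ i ∈ s, w i * V i ^ 2 * ‖ev u (f i)‖ ^ 2) ^ m) := by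
  set d : ι × ℤ → ℝ := fun p => ‖c p.1 p.2 - c p.1 (p.2 + 1)‖
  have V0 : ∀ i ∈ s, 0 ≤ V i := fun i hi => (sum_nonneg fun _ _ => norm_nonneg _).trans (hV i hi)
  have weight_nonneg : ∀ p ∈ s ×ˢ Icc a b, 0 ≤ w p.1 * V p.1 * d p := fun p hp => by
    have := hw _ (mem_product.1 hp).1; have := V0 _ (mem_product.1 hp).1; positivity
  have abel (u) : ∑ i ∈ s, w i * ‖ev u (mult (c i) (f i))‖ ^ 2 ≤
      ∑ p ∈ s ×ˢ Icc a b, w p.1 * V p.1 * d p * ‖ev u (lowPass p.2 (f p.1))‖ ^ 2 := by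
    rw [sum_product]
    refine sum_le_sum fun i hi => ?_
    simp only [mult_eq_sum_smul_lowPass (hf i hi) (hc i hi), map_sum, map_smul, smul_eq_mul,
      mul_assoc (w i), ← mul_sum]
    refine mul_le_mul_of_nonneg_left ((norm_sum_mul_sq_le _ _ _).trans ?_) (hw i hi)
    simp only [mul_assoc, ← mul_sum]
    exact mul_le_mul_of_nonneg_right (hV i hi) (sum_nonneg fun _ _ => by positivity)
  refine (mean_pow_mono (fun u => sum_nonneg fun i hi => ?_) abel m).trans
    ((h (s ×ˢ Icc a b) _ (fun p => p.2) (fun p => f p.1) weight_nonneg).trans ?_)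
  · have := hw i hi; positivity
  refine mul_le_mul_of_nonneg_left (mean_pow_mono (fun u => sum_nonneg fun p hp =>
    mul_nonneg (weight_nonneg p hp) (by positivity)) (fun u => ?_) m) hC
  rw [sum_product]
  refine sum_le_sum fun i hi => ?_
  simp only [← sum_mul, ← mul_sum, sq (V i), ← mul_assoc]
  have := hw i hi; have := V0 i hi
  gcongr
  exact hV i hi

end BoundedVariation

section Weights

/-- The sequence `t ↦ t⁻²` cut off after `T`. -/
noncomputable def cutInvSq (T t : ℤ) : ℝ := if t ≤ T then 1 / (t : ℝ) ^ 2 else 0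

/-- The weights of the square function, of size `t⁻³`: the last one, at `t = T`, collects the tail
of the series `∑ (t⁻² - (t + 1)⁻²)`. -/
noncomputable def wt (T t : ℤ) : ℝ := cutInvSq T t - cutInvSq T (t + 1)

variable {T t s n m : ℤ}

lemma sum_wt (hn : n ≤ T) : ∑ t ∈ Icc n T, wt T t = 1 / (n : ℝ) ^ 2 := by
  unfold wt
  rw [sum_Icc_int_sub_succ _ (by omega)]
  simp [cutInvSq, hn]

lemma wt_self : wt T T = 1 / (T : ℝ) ^ 2 := by simpa using sum_wt (le_refl T)

lemma wt_of_lt (ht : t < T) : wt T t = 1 / (t : ℝ) ^ 2 - 1 / (t + 1 : ℝ) ^ 2 := by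
  simp [wt, cutInvSq, ht.le, Int.add_one_le_iff.2 ht]

lemma wt_nonneg (ht : 1 ≤ t) (htT : t ≤ T) : 0 ≤ wt T t := by
  have : (1 : ℝ) ≤ t := mod_cast ht
  rcases htT.lt_or_eq with h | rfl
  · rw [wt_of_lt h, sub_nonneg]
    gcongr
    linarith
  · rw [wt_self]; positivity

lemma wt_mul_self_le (ht : 1 ≤ t) (htT : t < T) : wt T t * t ≤ 2 / (t : ℝ) ^ 2 := by
  have : (1 : ℝ) ≤ t := mod_cast ht
  rw [wt_of_lt htT]
  field_simp
  nlinarith [mul_nonneg (sub_nonneg.2 this) (sub_nonneg.2 this)]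

lemma inv_cube_le_two_mul_wt (ht : 1 ≤ t) (htT : t < T) : 1 / (t : ℝ) ^ 3 ≤ 2 * wt T t := by
  have : (1 : ℝ) ≤ t := mod_cast ht
  rw [wt_of_lt htT]
  field_simp
  nlinarith [mul_nonneg (sub_nonneg.2 this) (sub_nonneg.2 this)]

/-- A discrete primitive of a majorant of `t ↦ 2 t⁻² min(s, t)²`. -/
noncomputable def minSqPrimitive (s t : ℤ) : ℝ :=
  if t ≤ s then 2 * t else 4 * s - 2 * (s : ℝ) ^ 2 / t

lemma minSqPrimitive_sub_one_of_lt (hs : 1 ≤ s) (hst : s < t) :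
    minSqPrimitive s (t - 1) = 4 * s - 2 * (s : ℝ) ^ 2 / (t - 1) := by
  have : (1 : ℝ) ≤ s := mod_cast hs
  rcases eq_or_lt_of_le (Int.le_sub_one_of_lt hst) with rfl | h
  · rw [minSqPrimitive, if_pos le_rfl]
    push_cast at this ⊢
    have : (t : ℝ) - 1 ≠ 0 := by linarith
    field_simp
    ring
  · rw [minSqPrimitive, if_neg h.not_ge]
    push_cast
    rfl

lemma two_div_sq_mul_min_sq_le (hs : 1 ≤ s) (ht : 1 ≤ t) :
    2 / (t : ℝ) ^ 2 * (min s t : ℝ) ^ 2 ≤ minSqPrimitive s t - minSqPrimitive s (t - 1) := by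
  have : (1 : ℝ) ≤ t := mod_cast ht
  rcases lt_or_ge s t with hst | hst
  · have : (1 : ℝ) ≤ s := mod_cast hs
    have : (s : ℝ) + 1 ≤ t := mod_cast hst
    rw [minSqPrimitive_sub_one_of_lt hs hst, minSqPrimitive, if_neg hst.not_ge,
      min_eq_left (by linarith), sub_sub_sub_cancel_left, div_mul_eq_mul_div,
      div_sub_div _ _ (by linarith) (by linarith), div_le_div_iff₀ (by positivity) (by nlinarith)]
    nlinarith [mul_nonneg (sq_nonneg (s : ℝ)) (show (0 : ℝ) ≤ t by linarith)]
  · rw [min_eq_right (mod_cast hst), minSqPrimitive, minSqPrimitive, if_pos hst, if_pos (by omega)]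
    push_cast
    field_simp
    linarith

lemma sum_minSqPrimitive_sub_le (hs : 1 ≤ s) (hsT : s ≤ T) :
    ∑ t ∈ Icc 1 (T - 1), (minSqPrimitive s t - minSqPrimitive s (t - 1)) ≤ 4 * s := by
  have hs' : (1 : ℝ) ≤ s := mod_cast hs
  have zero : minSqPrimitive s 0 = 0 := by
    rw [minSqPrimitive, if_pos (by omega), Int.cast_zero, mul_zero]
  have telescope := sum_Icc_int_sub_succ (fun t => -minSqPrimitive s (t - 1)) (a := 1) (b := T - 1)
    (by omega)
  simp only [add_sub_cancel_right, sub_add_cancel, neg_sub_neg, sub_self, zero, sub_zero]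
    at telescope
  rw [telescope, minSqPrimitive]
  push_cast
  split_ifs with h
  · have : (T : ℝ) - 1 ≤ s := mod_cast h
    linarith
  · have : (s : ℝ) < T - 1 := mod_cast not_le.1 h
    have : 0 ≤ 2 * (s : ℝ) ^ 2 / (T - 1) := div_nonneg (by positivity) (by linarith)
    linarith

/-- The Schur test for the kernel `min(s, t)²` against the weights `wt`. -/
lemma sum_wt_mul_min_sq_le (hs : 1 ≤ s) (hsT : s ≤ T) :
    ∑ t ∈ Icc 1 T, wt T t * t * (min s t : ℝ) ^ 2 ≤ 5 * s := by
  have hs' : (1 : ℝ) ≤ s := mod_cast hs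
  have hsT' : (s : ℝ) ≤ T := mod_cast hsT
  have bulk : ∀ t ∈ Icc 1 (T - 1), wt T t * t * (min s t : ℝ) ^ 2 ≤
      minSqPrimitive s t - minSqPrimitive s (t - 1) := by
    intro t ht
    obtain ⟨h1, h2⟩ := mem_Icc.1 ht
    exact (mul_le_mul_of_nonneg_right (wt_mul_self_le h1 (by omega)) (sq_nonneg _)).trans
      (two_div_sq_mul_min_sq_le hs h1)
  have last : wt T T * T * (min s T : ℝ) ^ 2 ≤ s := by
    have : (0 : ℝ) < T := by linarith
    rw [wt_self, min_eq_left hsT']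
    field_simp
    exact hsT'
  rw [← insert_Icc_sub_one_right_eq_Icc (by omega), sum_insert (by simp)]
  linarith [sum_le_sum bulk, sum_minSqPrimitive_sub_le hs hsT]

lemma sum_wt_kernel (hn : 1 ≤ n) (hnT : n ≤ T) (hm : 1 ≤ m) (hmT : m ≤ T) :
    ∑ t ∈ Icc 1 T, wt T t * ((if n ≤ t then (n : ℝ) else 0) * (if m ≤ t then (m : ℝ) else 0)) +
      ((if m < n then (n - m : ℝ) / n else 0) + if n < m then (m - n : ℝ) / m else 0) = 1 := by
  have : (1 : ℝ) ≤ n := mod_cast hn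
  have : (1 : ℝ) ≤ m := mod_cast hm
  have tail : ∑ t ∈ Icc 1 T, wt T t * ((if n ≤ t then (n : ℝ) else 0) *
      (if m ≤ t then (m : ℝ) else 0)) = 1 / (max n m : ℝ) ^ 2 * (n * m) := by
    have : {t ∈ Icc 1 T | n ≤ t ∧ m ≤ t} = Icc (max n m) T := by ext; simp; omega
    simp only [ite_zero_mul_ite_zero]
    simp only [mul_ite_zero, ← sum_filter, this, ← sum_mul]
    rw [sum_wt (max_le hnT hmT), Int.cast_max]
  rw [tail]
  rcases lt_trichotomy n m with h | rfl | h
  · have : (n : ℝ) ≤ m := mod_cast h.le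
    simp only [h, h.not_gt, if_true, if_false, max_eq_right this]
    field_simp; ring
  · simp; field_simp
  · have : (m : ℝ) ≤ n := mod_cast h.le
    simp only [h, h.not_gt, if_true, if_false, max_eq_left this]
    field_simp; ring

end Weights

section SquareFunction

/-- The derivative `-i d/du`. -/
noncomputable def diffOp : 𝓛 →ₗ[ℂ] 𝓛 := mult fun n => n

/-- The square function `∑ t⁻³ |S_t D f|²`, with the weights `wt` in place of `t⁻³`. -/
noncomputable def squareFn (T : ℤ) (f : 𝓛) (u : ℝ) : ℝ :=
  ∑ t ∈ Icc 1 T, wt T t * ‖ev u (lowPass t (diffOp f))‖ ^ 2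

/-- The positive-frequency part of `S_t D f · conj f`. -/
noncomputable def posProd (t : ℤ) (f : 𝓛) : 𝓛 :=
  lowPass t (diffOp f) * adj f - lowPass 0 (lowPass t (diffOp f) * adj f)

/-- The superposition `D ∑ t⁻³ R_t`, adjoint to `f ↦ (S_t D f)_t`. -/
noncomputable def synth (T : ℤ) (R : ℤ → 𝓛) : 𝓛 := diffOp (∑ t ∈ Icc 1 T, (wt T t : ℂ) • R t)

/-- The analytic half of the difference between `|f|²` and the square function of `f`. -/
noncomputable def paraproduct (T : ℤ) (f : 𝓛) : 𝓛 :=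
  synth T fun t => posProd t f

variable {T t : ℤ} {f : 𝓛}

@[fun_prop]
lemma continuous_squareFn (T : ℤ) (f : 𝓛) : Continuous (squareFn T f) := by
  unfold squareFn; fun_prop

lemma squareFn_nonneg (T : ℤ) (f : 𝓛) (u : ℝ) : 0 ≤ squareFn T f u :=
  sum_nonneg fun t ht => mul_nonneg (wt_nonneg (mem_Icc.1 ht).1 (mem_Icc.1 ht).2) (by positivity)

lemma lowPass_diffOp (t : ℤ) (f : 𝓛) :
    lowPass t (diffOp f) = mult (fun n => if n ≤ t then n else 0) f := by
  simp only [lowPass, diffOp, mult_mult, ite_mul, one_mul, zero_mul]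

lemma diffOp_posProd (t : ℤ) (f : 𝓛) : diffOp (posProd t f) =
    mult (fun n => if 0 < n then n else 0) (lowPass t (diffOp f) * adj f) := by
  ext n
  by_cases h : n ≤ 0
  · simp [diffOp, posProd, h, h.not_gt]
  · simp [diffOp, posProd, h, not_le.1 h]

lemma specIn_posProd (hf : SpecIn (Set.Icc 1 T) f) : SpecIn (Set.Icc 1 t) (posProd t f) := by
  intro n hn
  have low : SpecIn (Set.Iic t) (lowPass t (diffOp f) * adj f) :=
    (specIn_lowPass t _).mul hf.adj fun a ha b hb => by
      simp only [Set.mem_Iic, Set.mem_neg, Set.mem_Icc] at *; omega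
  have pos := specIn_sub_lowPass 0 _ n hn
  refine ⟨pos, low n fun h => hn ?_⟩
  simp [posProd, h]

lemma eq_sum_single {A : Finset ℤ} (hf : SpecIn A f) :
    f = ∑ n ∈ A, AddMonoidAlgebra.single n (f.coeff n) := by
  conv_lhs => rw [← AddMonoidAlgebra.sum_coeff_single f]
  exact Finsupp.sum_of_support_subset _ (fun n hn => hf n (Finsupp.mem_support_iff.1 hn)) _
    (by simp)

lemma mult_single (φ : ℤ → ℂ) (n : ℤ) (c : ℂ) :
    mult φ (AddMonoidAlgebra.single n c) = AddMonoidAlgebra.single n (φ n * c) := by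
  ext k
  simp only [coeff_mult, AddMonoidAlgebra.coeff_single, Finsupp.single_apply, mul_ite_zero]
  split_ifs with h
  · rw [h]
  · rfl

lemma adj_single (n : ℤ) (c : ℂ) :
    adj (AddMonoidAlgebra.single n c) = AddMonoidAlgebra.single (-n) (starRingEnd ℂ c) := by
  ext k
  simp only [coeff_adj, AddMonoidAlgebra.coeff_single, Finsupp.single_apply, eq_neg_iff_add_eq_zero,
    neg_eq_iff_add_eq_zero, apply_ite (starRingEnd ℂ), map_zero]

/-- The `n`-th term of the Fourier expansion of `f` at `e^{iu}`. -/
noncomputable def fourierTerm (f : 𝓛) (u : ℝ) (n : ℤ) : ℂ := f.coeff n * Circle.exp (n * u)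

lemma ev_mult_eq_sum {A : Finset ℤ} (hf : SpecIn A f) (φ : ℤ → ℂ) (u : ℝ) :
    ev u (mult φ f) = ∑ n ∈ A, φ n * fourierTerm f u n := by
  conv_lhs => rw [eq_sum_single hf]
  simp only [map_sum, mult_single, ev_single, fourierTerm, mul_assoc]

lemma ev_eq_sum_fourierTerm {A : Finset ℤ} (hf : SpecIn A f) (u : ℝ) :
    ev u f = ∑ n ∈ A, fourierTerm f u n := by
  conv_lhs => rw [eq_sum_single hf]
  simp only [map_sum, ev_single, fourierTerm]

lemma ev_mult_mul_adj {A : Finset ℤ} (hf : SpecIn A f) (χ φ : ℤ → ℂ) (u : ℝ) :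
    ev u (mult χ (mult φ f * adj f)) = ∑ n ∈ A, ∑ m ∈ A, χ (n - m) * φ n *
      (fourierTerm f u n * starRingEnd ℂ (fourierTerm f u m)) := by
  conv_lhs => rw [eq_sum_single hf]
  simp only [map_sum, sum_mul_sum, mult_single, adj_single, AddMonoidAlgebra.single_mul_single,
    ev_single]
  refine sum_congr rfl fun n _ => sum_congr rfl fun m _ => ?_
  rw [fourierTerm, fourierTerm, map_mul (starRingEnd ℂ), ← Circle.coe_inv_eq_conj,
    ← Circle.exp_neg, Int.cast_add, add_mul, Circle.exp_add, Circle.coe_mul, Int.cast_neg, neg_mul,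
    sub_eq_add_neg]
  ring

lemma ev_paraproduct (hf : SpecIn (Set.Icc 1 T) f) (u : ℝ) :
    ev u (paraproduct T f) = ∑ n ∈ Icc 1 T, ∑ m ∈ Icc 1 T,
      ((if m < n then (n - m : ℝ) / n else 0 : ℝ) : ℂ) *
      (fourierTerm f u n * starRingEnd ℂ (fourierTerm f u m)) := by
  have hf' : SpecIn (Icc 1 T : Finset ℤ) f := by rwa [coe_Icc]
  simp only [paraproduct, synth, map_sum, map_smul, diffOp_posProd, lowPass_diffOp, smul_eq_mul,
    ev_mult_mul_adj hf', mul_sum]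
  rw [sum_comm]
  refine sum_congr rfl fun n hn => ?_
  rw [sum_comm]
  refine sum_congr rfl fun m _ => ?_
  obtain ⟨h1, hT⟩ := mem_Icc.1 hn
  have h0 : (n : ℂ) ≠ 0 := mod_cast (show n ≠ 0 by omega)
  have tail : ∑ t ∈ Icc 1 T, (wt T t : ℂ) * (if n ≤ t then n else 0 : ℂ) = 1 / n := by
    have : {t ∈ Icc 1 T | n ≤ t} = Icc n T := by ext; simp only [mem_filter, mem_Icc]; omega
    simp only [mul_ite_zero, ← sum_filter, this, ← sum_mul, ← Complex.ofReal_sum, sum_wt hT]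
    push_cast
    field_simp
  generalize fourierTerm f u n * starRingEnd ℂ (fourierTerm f u m) = z
  calc _ = ∑ t ∈ Icc 1 T, (wt T t * (if n ≤ t then n else 0 : ℂ)) *
        ((if 0 < n - m then ((n - m : ℤ) : ℂ) else 0) * z) := sum_congr rfl fun t _ => by ring
    _ = _ := by
      rw [← sum_mul, tail]
      simp only [sub_pos]
      split_ifs
      · push_cast; ring
      · simp

lemma ofReal_squareFn (hf : SpecIn (Set.Icc 1 T) f) (u : ℝ) :
    (squareFn T f u : ℂ) = ∑ n ∈ Icc 1 T, ∑ m ∈ Icc 1 T,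
      ((∑ t ∈ Icc 1 T, wt T t * ((if n ≤ t then (n : ℝ) else 0) *
        (if m ≤ t then (m : ℝ) else 0)) : ℝ) : ℂ) *
      (fourierTerm f u n * starRingEnd ℂ (fourierTerm f u m)) := by
  have hf' : SpecIn (Icc 1 T : Finset ℤ) f := by rwa [coe_Icc]
  simp only [squareFn, lowPass_diffOp]
  push_cast
  simp only [← Complex.mul_conj', ev_mult_eq_sum hf', map_sum, sum_mul]
  simp only [mul_sum]
  rw [sum_comm]
  refine sum_congr rfl fun n _ => ?_
  rw [sum_comm]
  refine sum_congr rfl fun m _ => sum_congr rfl fun t _ => ?_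
  rw [map_mul (starRingEnd ℂ), apply_ite (starRingEnd ℂ), map_intCast, map_zero]
  split_ifs <;> push_cast <;> ring

/-- Expanded as a Hermitian form in the coefficients, the square function has the kernel
`min(n, m) / max(n, m)`, and the paraproduct supplies the rest. -/
lemma norm_ev_sq_eq_squareFn_add (hf : SpecIn (Set.Icc 1 T) f) (u : ℝ) :
    ‖ev u f‖ ^ 2 = squareFn T f u + 2 * (ev u (paraproduct T f)).re := by
  have hf' : SpecIn (Icc 1 T : Finset ℤ) f := by rwa [coe_Icc]
  have conj_paraproduct : starRingEnd ℂ (ev u (paraproduct T f)) =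
      ∑ n ∈ Icc 1 T, ∑ m ∈ Icc 1 T, ((if n < m then (m - n : ℝ) / m else 0 : ℝ) : ℂ) *
        (fourierTerm f u n * starRingEnd ℂ (fourierTerm f u m)) := by
    rw [ev_paraproduct hf, sum_comm]
    simp only [map_sum, map_mul (starRingEnd ℂ), Complex.conj_ofReal, Complex.conj_conj]
    exact sum_congr rfl fun n _ => sum_congr rfl fun m _ => by ring
  rw [← Complex.ofReal_inj, Complex.ofReal_add, ← Complex.add_conj, conj_paraproduct,
    ev_paraproduct hf, ofReal_squareFn hf, ← sum_add_distrib, ← sum_add_distrib,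
    Complex.ofReal_pow, ← Complex.mul_conj', ev_eq_sum_fourierTerm hf', map_sum, sum_mul_sum]
  refine sum_congr rfl fun n hn => ?_
  rw [← sum_add_distrib, ← sum_add_distrib]
  refine sum_congr rfl fun m hm => ?_
  rw [mem_Icc] at hn hm
  rw [← add_mul, ← add_mul, ← Complex.ofReal_add, ← Complex.ofReal_add]
  rw [sum_wt_kernel hn.1 hn.2 hm.1 hm.2, Complex.ofReal_one, one_mul]

end SquareFunction

section LittlewoodPaley

/-- The upper square function inequality in `L^{2m}`, with constant `C`. -/
def SquareUpper (m : ℕ) (C : ℝ) : Prop :=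
  ∀ ⦃T : ℤ⦄ ⦃f : 𝓛⦄, SpecIn (Set.Icc 1 T) f →
    mean (fun u => squareFn T f u ^ m) ≤ C * mean (fun u => ‖ev u f‖ ^ (2 * m))

/-- The lower square function inequality in `L^{2m}`, with constant `C`. -/
def SquareLower (m : ℕ) (C : ℝ) : Prop :=
  ∀ ⦃T : ℤ⦄ ⦃f : 𝓛⦄, SpecIn (Set.Icc 1 T) f →
    mean (fun u => ‖ev u f‖ ^ (2 * m)) ≤ C * mean (fun u => squareFn T f u ^ m)

/-- The dual form of the square function inequality in `L^{2m}`, with constant `C`. -/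
def SynthesisBound (m : ℕ) (C : ℝ) : Prop :=
  ∀ ⦃T : ℤ⦄ ⦃R : ℤ → 𝓛⦄, (∀ t ∈ Icc 1 T, SpecIn (Set.Icc 1 t) (R t)) →
    mean (fun u => ‖ev u (synth T R)‖ ^ (2 * m)) ≤
      C * mean (fun u => (∑ t ∈ Icc 1 T, wt T t * ‖ev u (R t)‖ ^ 2) ^ m)

/-- The multiplier of `S_k D²`. -/
noncomputable def truncSq (k n : ℤ) : ℂ := if n ≤ k then (n : ℂ) ^ 2 else 0

variable {T s t k b : ℤ} {m : ℕ} {f : 𝓛} {R : ℤ → 𝓛}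

lemma sum_norm_truncSq_sub_le (hk : 1 ≤ k) :
    ∑ n ∈ Icc 1 b, ‖truncSq k n - truncSq k (n + 1)‖ ≤ 2 * (k : ℝ) ^ 2 := by
  rcases le_or_gt b 0 with hb | hb
  · rw [Icc_eq_empty (by omega), sum_empty]; positivity
  have term : ∀ n ∈ Icc 1 b, ‖truncSq k n - truncSq k (n + 1)‖ ≤
      -((min n k : ℤ) ^ 2 - (min (n + 1) k : ℤ) ^ 2 : ℝ) + if n = k then (k : ℝ) ^ 2 else 0 := by
    intro n hn
    have h1 : (1 : ℝ) ≤ n := mod_cast (mem_Icc.1 hn).1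
    unfold truncSq
    rcases lt_trichotomy n k with h | rfl | h
    · rw [if_pos h.le, if_pos (Int.add_one_le_iff.2 h), if_neg h.ne, min_eq_left h.le,
        min_eq_left (Int.add_one_le_iff.2 h), norm_sub_rev]
      norm_cast
      norm_cast at h1 ⊢
      rw [abs_of_nonneg] <;> nlinarith
    · simp
    · simp [h.not_ge, h.ne', min_eq_right h.le, (h.trans (lt_add_one n)).not_ge,
        (h.trans (lt_add_one n)).le]
  refine (sum_le_sum term).trans ?_
  rw [sum_add_distrib, sum_neg_distrib,
    sum_Icc_int_sub_succ (fun n => ((min n k : ℤ) : ℝ) ^ 2) (by omega), sum_ite_eq']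
  have top : ((min (b + 1) k : ℤ) : ℝ) ^ 2 ≤ (k : ℝ) ^ 2 := by
    have := min_le_right (b + 1) k
    have : 0 ≤ min (b + 1) k := le_min (by omega) (by omega)
    gcongr
  split_ifs <;> nlinarith [sq_nonneg ((min 1 k : ℤ) : ℝ), sq_nonneg (k : ℝ)]

lemma lowPass_diffOp_diffOp (hf : SpecIn (Set.Icc 1 t) f) :
    lowPass s (diffOp (diffOp f)) = mult (truncSq (min s t)) f := by
  ext n
  by_cases hn : f.coeff n = 0
  · simp [diffOp, hn]
  · have : n ≤ min s t ↔ n ≤ s := by have := (hf n hn).2; simp only [le_min_iff]; omega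
    simp only [diffOp, coeff_lowPass, coeff_mult, truncSq, this]
    split_ifs <;> ring

lemma lowPass_diffOp_synth (hR : ∀ t ∈ Icc 1 T, SpecIn (Set.Icc 1 t) (R t)) :
    lowPass s (diffOp (synth T R)) =
      ∑ t ∈ Icc 1 T, (wt T t : ℂ) • mult (truncSq (min s t)) (R t) := by
  simp only [synth, map_sum, map_smul]
  exact sum_congr rfl fun t ht => by rw [lowPass_diffOp_diffOp (hR t ht)]

/-- The weights of the double sum that dominates the square function of `synth T R`. -/
noncomputable def synthWt (T s t : ℤ) : ℝ := 5 * s * wt T s * wt T t / (t * (min s t : ℝ) ^ 2)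

lemma synthWt_nonneg (hs : s ∈ Icc 1 T) (ht : t ∈ Icc 1 T) : 0 ≤ synthWt T s t := by
  rw [mem_Icc] at hs ht
  have := wt_nonneg hs.1 hs.2
  have := wt_nonneg ht.1 ht.2
  have : (1 : ℝ) ≤ s := mod_cast hs.1
  have : (1 : ℝ) ≤ t := mod_cast ht.1
  unfold synthWt
  positivity

lemma norm_sum_mul_sq_le_of_pos {ι : Type*} {s : Finset ι} {w ρ : ι → ℝ} (a : ι → ℂ)
    (hw : ∀ i ∈ s, 0 ≤ w i) (hρ : ∀ i ∈ s, 0 < ρ i) :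
    ‖∑ i ∈ s, w i * a i‖ ^ 2 ≤ (∑ i ∈ s, w i * ρ i) * ∑ i ∈ s, w i / ρ i * ‖a i‖ ^ 2 := by
  have norm_wt : ∀ i ∈ s, ‖((w i * ρ i : ℝ) : ℂ)‖ = w i * ρ i := fun i hi =>
    Complex.norm_of_nonneg (mul_nonneg (hw i hi) (hρ i hi).le)
  convert norm_sum_mul_sq_le s (fun i => ((w i * ρ i : ℝ) : ℂ)) (fun i => a i / ρ i) using 2
  · refine congrArg norm (sum_congr rfl fun i hi => ?_)
    have := Complex.ofReal_ne_zero.2 (hρ i hi).ne'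
    push_cast; field_simp
  · exact sum_congr rfl fun i hi => (norm_wt i hi).symm
  · refine sum_congr rfl fun i hi => ?_
    have := hρ i hi
    rw [norm_wt i hi, norm_div, Complex.norm_of_nonneg this.le]; field_simp

lemma squareFn_synth_le (hR : ∀ t ∈ Icc 1 T, SpecIn (Set.Icc 1 t) (R t)) (u : ℝ) :
    squareFn T (synth T R) u ≤ ∑ s ∈ Icc 1 T, ∑ t ∈ Icc 1 T,
      synthWt T s t * ‖ev u (mult (truncSq (min s t)) (R t))‖ ^ 2 := by
  refine sum_le_sum fun s hs => ?_
  obtain ⟨h1, hsT⟩ := mem_Icc.1 hs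
  have : (1 : ℝ) ≤ s := mod_cast h1
  have wt0 : ∀ t ∈ Icc 1 T, 0 ≤ wt T t := fun t ht => wt_nonneg (mem_Icc.1 ht).1 (mem_Icc.1 ht).2
  have ρ_pos : ∀ t ∈ Icc 1 T, 0 < (t : ℝ) * (min s t : ℝ) ^ 2 := fun t ht => by
    have : (1 : ℝ) ≤ t := mod_cast (mem_Icc.1 ht).1
    positivity
  rw [lowPass_diffOp_synth hR]
  simp only [map_sum, map_smul, smul_eq_mul]
  calc _ ≤ wt T s * (5 * s * ∑ t ∈ Icc 1 T, wt T t / (t * (min s t : ℝ) ^ 2) *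
          ‖ev u (mult (truncSq (min s t)) (R t))‖ ^ 2) := by
        refine mul_le_mul_of_nonneg_left ((norm_sum_mul_sq_le_of_pos _ wt0 ρ_pos).trans ?_)
          (wt0 s hs)
        simp only [← mul_assoc (wt T _)]
        exact mul_le_mul_of_nonneg_right (sum_wt_mul_min_sq_le h1 hsT) (sum_nonneg fun t ht =>
          mul_nonneg (div_nonneg (wt0 t ht) (ρ_pos t ht).le) (sq_nonneg _))
    _ = _ := by
        rw [← mul_assoc, mul_sum]
        refine sum_congr rfl fun t _ => ?_
        rw [synthWt]
        ring

lemma sum_synthWt_mul_le (ht : t ∈ Icc 1 T) :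
    ∑ s ∈ Icc 1 T, synthWt T s t * (2 * (min s t : ℤ) ^ 2) ^ 2 ≤ 100 * wt T t := by
  obtain ⟨h1, htT⟩ := mem_Icc.1 ht
  have : (1 : ℝ) ≤ t := mod_cast h1
  calc ∑ s ∈ Icc 1 T, synthWt T s t * (2 * (min s t : ℤ) ^ 2) ^ 2
      = 20 * wt T t / t * ∑ s ∈ Icc 1 T, wt T s * s * (min t s : ℝ) ^ 2 := by
        rw [mul_sum]
        refine sum_congr rfl fun s hs => ?_
        have : (1 : ℝ) ≤ s := mod_cast (mem_Icc.1 hs).1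
        have : 0 < (min s t : ℝ) := by positivity
        rw [synthWt, Int.cast_min, min_comm (t : ℝ) s]
        field_simp
        ring
    _ ≤ 20 * wt T t / t * (5 * t) := by
        have := wt_nonneg h1 htT
        gcongr
        exact sum_wt_mul_min_sq_le h1 htT
    _ = 100 * wt T t := by field_simp; ring

lemma SquareLower.synthesisBound {C K : ℝ} (hC : 0 ≤ C) (hK : 0 ≤ K) (h : SquareLower m C)
    (riesz : VectorRiesz m K) : SynthesisBound m (C * (K * 100 ^ m)) := by
  intro T R hR
  have R_spec : ∀ t ∈ Icc 1 T, SpecIn (Set.Icc 1 T) (R t) := fun t ht =>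
    (hR t ht).mono (Set.Icc_subset_Icc_right (mem_Icc.1 ht).2)
  have synth_spec : SpecIn (Set.Icc 1 T) (synth T R) :=
    (SpecIn.sum fun t ht => (R_spec t ht).smul _).mult _
  have schur := riesz.mean_mult_le hK (Icc 1 T ×ˢ Icc 1 T)
    (w := fun p => synthWt T p.1 p.2) (V := fun p => 2 * (min p.1 p.2 : ℤ) ^ 2)
    (f := fun p => R p.2) (c := fun p => truncSq (min p.1 p.2)) (a := 1) (b := T)
    (fun p hp => synthWt_nonneg (mem_product.1 hp).1 (mem_product.1 hp).2)
    (fun p hp => R_spec _ (mem_product.1 hp).2)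
    (fun p hp => if_neg (by simp only [mem_product, mem_Icc] at hp; omega))
    (fun p hp => sum_norm_truncSq_sub_le (by simp only [mem_product, mem_Icc] at hp; omega))
  simp only [sum_product] at schur
  rw [mul_assoc, mul_assoc, ← mean_const_mul (100 ^ m)]
  refine (h synth_spec).trans (mul_le_mul_of_nonneg_left ?_ hC)
  refine (mean_pow_mono (fun u => squareFn_nonneg _ _ _) (squareFn_synth_le hR) m).trans
    (schur.trans (mul_le_mul_of_nonneg_left ?_ hK))
  simp only [← mul_pow]
  refine mean_pow_mono (fun u => sum_nonneg fun s hs => sum_nonneg fun t ht => ?_) (fun u => ?_) m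
  · have := synthWt_nonneg hs ht; positivity
  rw [sum_comm, mul_sum]
  refine sum_le_sum fun t ht => ?_
  rw [← sum_mul, ← mul_assoc]
  exact mul_le_mul_of_nonneg_right (sum_synthWt_mul_le ht) (by positivity)

/-- The paraproduct is the synthesis of `V_t - S_0 V_t`, where `V_t = S_t D f · conj f` satisfies
`∑ t⁻³ |V_t|² = squareFn · |f|²`. -/
lemma SynthesisBound.mean_paraproduct_le {C K : ℝ} (hC : 0 ≤ C) (h : SynthesisBound m C)
    (riesz : VectorRiesz m K) (hf : SpecIn (Set.Icc 1 T) f) :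
    mean (fun u => ‖ev u (paraproduct T f)‖ ^ (2 * m)) ≤
      C * (4 ^ m * (1 + K)) * mean (fun u => (squareFn T f u * ‖ev u f‖ ^ 2) ^ m) := by
  set V : ℤ → 𝓛 := fun t => lowPass t (diffOp f) * adj f
  have wt0 : ∀ t ∈ Icc 1 T, 0 ≤ wt T t := fun t ht => wt_nonneg (mem_Icc.1 ht).1 (mem_Icc.1 ht).2
  have sum_V (u : ℝ) :
      ∑ t ∈ Icc 1 T, wt T t * ‖ev u (V t)‖ ^ 2 = squareFn T f u * ‖ev u f‖ ^ 2 := by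
    simp only [V, squareFn, sum_mul, map_mul, ev_adj, norm_mul, RCLike.norm_conj, mul_pow,
      mul_assoc]
  have split (u : ℝ) : ∑ t ∈ Icc 1 T, wt T t * ‖ev u (posProd t f)‖ ^ 2 ≤
      2 * (squareFn T f u * ‖ev u f‖ ^ 2) +
        2 * ∑ t ∈ Icc 1 T, wt T t * ‖ev u (lowPass 0 (V t))‖ ^ 2 := by
    rw [← sum_V, mul_sum, mul_sum, ← sum_add_distrib]
    refine sum_le_sum fun t ht => ?_
    have := norm_sub_le (ev u (V t)) (ev u (lowPass 0 (V t)))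
    rw [posProd, map_sub]
    nlinarith [wt0 t ht, mul_le_mul_of_nonneg_left (add_sq_le (a := ‖ev u (V t)‖)
      (b := ‖ev u (lowPass 0 (V t))‖)) (wt0 t ht),
      mul_le_mul_of_nonneg_left (pow_le_pow_left₀ (norm_nonneg _) this 2) (wt0 t ht)]
  have low := riesz (Icc 1 T) (wt T) (fun _ => 0) V wt0
  simp only [sum_V] at low
  rw [mul_assoc]
  refine (h fun t _ => specIn_posProd hf).trans (mul_le_mul_of_nonneg_left ?_ hC)
  refine (mean_pow_mono (fun u => sum_nonneg fun t ht => mul_nonneg (wt0 t ht) (by positivity))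
    split m).trans ?_
  have four : (4 : ℝ) ^ m = 2 ^ m * 2 ^ m := by rw [← mul_pow]; norm_num
  calc _ ≤ mean (fun u => 4 ^ m * ((squareFn T f u * ‖ev u f‖ ^ 2) ^ m +
        (∑ t ∈ Icc 1 T, wt T t * ‖ev u (lowPass 0 (V t))‖ ^ 2) ^ m)) := by
        refine mean_mono fun u => ?_
        have := squareFn_nonneg T f u
        refine (add_pow_le_two_pow_mul (by positivity) (mul_nonneg zero_le_two (sum_nonneg
          fun t ht => mul_nonneg (wt0 t ht) (by positivity))) m).trans_eq ?_
        rw [mul_pow, mul_pow 2, four]; ring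
    _ ≤ _ := by
        rw [mean_const_mul, mean_add, mul_assoc, one_add_mul]
        gcongr

lemma SynthesisBound.squareUpper {C K : ℝ} (hC : 0 ≤ C) (h : SynthesisBound m C)
    (riesz : VectorRiesz m K) :
    SquareUpper (2 * m) (2 * 4 ^ m + (16 ^ m * (C * (4 ^ m * (1 + K)))) ^ 2) := by
  intro T f hf
  simp only [pow_mul _ 2 (2 * m)]
  refine mean_pow_le_of_le_add_of_mean_pow_le (w := fun u => ‖ev u (paraproduct T f)‖)
    (by fun_prop) (by fun_prop) (by fun_prop) (squareFn_nonneg T f) (fun u => by positivity)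
    (fun u => by positivity) (fun u => ?_) (h.mean_paraproduct_le hC riesz hf)
  have := Complex.re_le_norm (-ev u (paraproduct T f))
  rw [norm_neg, Complex.neg_re] at this
  linarith [norm_ev_sq_eq_squareFn_add hf u]

lemma SynthesisBound.squareLower {C K : ℝ} (hC : 0 ≤ C) (h : SynthesisBound m C)
    (riesz : VectorRiesz m K) :
    SquareLower (2 * m) (2 * 4 ^ m + (16 ^ m * (C * (4 ^ m * (1 + K)))) ^ 2) := by
  intro T f hf
  simp only [pow_mul _ 2 (2 * m)]
  refine mean_pow_le_of_le_add_of_mean_pow_le (w := fun u => ‖ev u (paraproduct T f)‖)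
    (by fun_prop) (by fun_prop) (by fun_prop) (fun u => by positivity) (squareFn_nonneg T f)
    (fun u => by positivity) (fun u => ?_) ?_
  · have := Complex.re_le_norm (ev u (paraproduct T f))
    linarith [norm_ev_sq_eq_squareFn_add hf u]
  · simpa only [mul_comm (‖ev _ f‖ ^ 2)] using h.mean_paraproduct_le hC riesz hf

/-- The paraproduct has no constant term. -/
lemma mean_norm_ev_sq_eq_mean_squareFn (hf : SpecIn (Set.Icc 1 T) f) :
    mean (fun u => ‖ev u f‖ ^ 2) = mean (squareFn T f) := by
  simp only [norm_ev_sq_eq_squareFn_add hf]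
  rw [mean_add, mean_const_mul, mean_re_ev, paraproduct, synth, diffOp, coeff_mult]
  simp

lemma exists_squareUpper_squareLower (k : ℕ) :
    (∃ C, 0 ≤ C ∧ SquareUpper (2 ^ k) C) ∧ ∃ C, 0 ≤ C ∧ SquareLower (2 ^ k) C := by
  induction k with
  | zero =>
    refine ⟨⟨1, zero_le_one, fun T f hf => ?_⟩, 1, zero_le_one, fun T f hf => ?_⟩ <;>
      simp only [pow_zero, pow_one, mul_one, one_mul, mean_norm_ev_sq_eq_mean_squareFn hf, le_refl]
  | succ k ih =>
    obtain ⟨-, C, hC, lower⟩ := ih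
    obtain ⟨K, hK, riesz⟩ := exists_vectorRiesz k
    have synthesis := lower.synthesisBound hC hK riesz
    have hC' : 0 ≤ C * (K * 100 ^ 2 ^ k) := by positivity
    rw [pow_succ']
    exact ⟨⟨_, by positivity, synthesis.squareUpper hC' riesz⟩,
      _, by positivity, synthesis.squareLower hC' riesz⟩

end LittlewoodPaley

section DyadicBlocks

/-- The cutoffs `b j`, for `j ∈ J`, are positive and comparable to `θ 2^j`. -/
structure IsDyadic (J : Finset ℕ) (b : ℕ → ℤ) (θ : ℝ) : Prop where
  pos : 0 < θ
  one_le : ∀ j ∈ J, 1 ≤ b j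
  lower : ∀ j ∈ J, θ * 2 ^ j ≤ b j
  upper : ∀ j ∈ J, (b j : ℝ) ≤ 4 * (θ * 2 ^ j)

/-- The dyadic block inequality in `L^{2m}`, with constant `C`. -/
def BlockBound (m : ℕ) (C : ℝ) : Prop :=
  ∀ ⦃J : Finset ℕ⦄ ⦃b : ℕ → ℤ⦄ ⦃θ : ℝ⦄ ⦃f : 𝓛⦄, IsDyadic J b θ → SpecIn (Set.Ici 1) f →
    mean (fun u => (∑ j ∈ J, ‖ev u (lowPass (2 * b j) f - lowPass (b j) f)‖ ^ 2) ^ m) ≤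
      C * mean (fun u => ‖ev u f‖ ^ (2 * m))

/-- The multiplier that recovers the frequency block `(b, 2b]` of `f` from `D f`. -/
noncomputable def blockInv (b n : ℤ) : ℂ := if b < n ∧ n ≤ 2 * b then (n : ℂ)⁻¹ else 0

/-- A majorant of the total variation of `blockInv b` on `(-∞, n]`. -/
noncomputable def blockVar (b n : ℤ) : ℝ :=
  if n ≤ b then 0 else if n ≤ 2 * b then 2 / b - (n : ℝ)⁻¹ else 2 / b

/-- The weights of the average over `t ∈ [2b, 4b)`. -/
noncomputable def avgWt (b t : ℤ) : ℝ := if t ∈ Ico (2 * b) (4 * b) then 1 / (2 * b : ℝ) else 0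

variable {J : Finset ℕ} {b : ℕ → ℤ} {θ : ℝ} {T t c : ℤ} {f : 𝓛} {m : ℕ}

lemma IsDyadic.two_mul (h : IsDyadic J b θ) : IsDyadic J (fun j => 2 * b j) (2 * θ) where
  pos := by linarith [h.pos]
  one_le j hj := by linarith [h.one_le j hj]
  lower j hj := by push_cast; linarith [h.lower j hj]
  upper j hj := by push_cast; linarith [h.upper j hj]

lemma IsDyadic.card_filter_le (h : IsDyadic J b θ) (t : ℤ) :
    #{j ∈ J | t ∈ Ico (2 * b j) (4 * b j)} ≤ 3 := by
  set s := {j ∈ J | t ∈ Ico (2 * b j) (4 * b j)}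
  rcases s.eq_empty_or_nonempty with hs | hs
  · simp [hs]
  have close {i j} (hi : i ∈ s) (hj : j ∈ s) : j < i + 3 := by
    simp only [s, mem_filter, mem_Ico] at hi hj
    have hi' : (t : ℝ) < 4 * b i := mod_cast hi.2.2
    have hj' : 2 * (b j : ℝ) ≤ t := mod_cast hj.2.1
    have : θ * 2 ^ j < θ * 2 ^ (i + 3) := by
      rw [pow_add]; linarith [h.upper i hi.1, h.lower j hj.1]
    exact (pow_lt_pow_iff_right₀ one_lt_two).1 (lt_of_mul_lt_mul_left this h.pos.le)
  calc #s ≤ #(Ico (s.min' hs) (s.min' hs + 3)) := card_le_card fun j hj =>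
        mem_Ico.2 ⟨min'_le s j hj, close (min'_mem s hs) hj⟩
    _ = 3 := by simp

lemma norm_blockInv_sub_le (hc : 1 ≤ c) {n : ℤ} (hn : 1 ≤ n) :
    ‖blockInv c n - blockInv c (n + 1)‖ ≤ blockVar c (n + 1) - blockVar c n := by
  have c1 : (1 : ℝ) ≤ c := mod_cast hc
  have : (1 : ℝ) ≤ n := mod_cast hn
  have anti : ((n + 1 : ℤ) : ℝ)⁻¹ ≤ (n : ℝ)⁻¹ := by push_cast; gcongr; linarith
  have norm_inv_int {k : ℤ} (hk : 1 ≤ k) : ‖(k : ℂ)⁻¹‖ = (k : ℝ)⁻¹ := by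
    rw [norm_inv, Complex.norm_intCast, abs_of_pos (by exact_mod_cast hk)]
  unfold blockInv blockVar
  rcases lt_trichotomy n c with h | rfl | h
  · rw [if_neg (by omega), if_neg (by omega), if_pos (by omega), if_pos (by omega)]
    simp
  · rw [if_neg (by omega), if_pos (by omega), if_neg (by omega), if_pos (by omega),
      if_pos le_rfl, zero_sub, norm_neg, norm_inv_int (by omega), div_eq_mul_inv]
    linarith
  rcases lt_trichotomy n (2 * c) with h' | h' | h'
  · rw [if_pos (by omega), if_pos (by omega), if_neg (by omega), if_pos (by omega),
      if_neg (by omega), if_pos (by omega)]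
    have : (n : ℂ)⁻¹ - ((n + 1 : ℤ) : ℂ)⁻¹ = ((n : ℝ)⁻¹ - ((n + 1 : ℤ) : ℝ)⁻¹ : ℝ) := by
      push_cast; rfl
    rw [this, Complex.norm_of_nonneg (sub_nonneg.2 anti)]
    linarith
  · rw [if_pos (by omega), if_neg (by omega), if_neg (by omega), if_neg (by omega),
      if_neg (by omega), if_pos (by omega), sub_zero, norm_inv_int hn]
    linarith
  · rw [if_neg (by omega), if_neg (by omega), if_neg (by omega), if_neg (by omega),
      if_neg (by omega), if_neg (by omega)]
    simp

lemma sum_norm_blockInv_sub_le (hc : 1 ≤ c) :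
    ∑ n ∈ Icc 1 T, ‖blockInv c n - blockInv c (n + 1)‖ ≤ 2 / c := by
  have : (1 : ℝ) ≤ c := mod_cast hc
  rcases lt_or_ge T 0 with hT | hT
  · rw [Icc_eq_empty (by omega), sum_empty]; positivity
  have bound : blockVar c (T + 1) ≤ 2 / c := by
    have : 0 ≤ ((T + 1 : ℤ) : ℝ)⁻¹ := by rw [inv_nonneg]; exact_mod_cast (by omega : 0 ≤ T + 1)
    unfold blockVar
    split_ifs <;> [positivity; linarith; exact le_rfl]
  calc ∑ n ∈ Icc 1 T, ‖blockInv c n - blockInv c (n + 1)‖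
      ≤ ∑ n ∈ Icc 1 T, -(blockVar c n - blockVar c (n + 1)) := sum_le_sum fun n hn =>
        (norm_blockInv_sub_le hc (mem_Icc.1 hn).1).trans_eq (neg_sub _ _).symm
    _ = blockVar c (T + 1) - blockVar c 1 := by
        rw [sum_neg_distrib, sum_Icc_int_sub_succ _ (by omega), neg_sub]
    _ ≤ 2 / c := by rwa [show blockVar c 1 = 0 from if_pos hc, sub_zero]

lemma avgWt_nonneg (hc : 1 ≤ c) : 0 ≤ avgWt c t := by
  have : (1 : ℝ) ≤ c := mod_cast hc
  unfold avgWt; split_ifs <;> positivity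

lemma sum_avgWt (hc : 1 ≤ c) (hT : 4 * c ≤ T) : ∑ t ∈ Icc 1 T, avgWt c t = 1 := by
  have : {t ∈ Icc 1 T | t ∈ Ico (2 * c) (4 * c)} = Ico (2 * c) (4 * c) := by
    ext; simp only [mem_filter, mem_Icc, mem_Ico]; omega
  have c0 : (c : ℝ) ≠ 0 := mod_cast (by omega : c ≠ 0)
  simp only [avgWt]
  rw [← sum_filter, this, sum_const, Int.card_Ico, nsmul_eq_mul,
    show (4 * c - 2 * c).toNat = ((2 * c : ℤ) : ℝ) by norm_cast; omega]
  push_cast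
  field_simp

lemma avgWt_mul_le (hc : 1 ≤ c) (hT : 4 * c ≤ T) :
    avgWt c t * (2 / c) ^ 2 ≤ if t ∈ Ico (2 * c) (4 * c) then 256 * wt T t else 0 := by
  have : (1 : ℝ) ≤ c := mod_cast hc
  unfold avgWt
  split_ifs with h
  · rw [mem_Ico] at h
    have ht : (t : ℝ) ≤ 4 * c := mod_cast h.2.le
    have t1 : (1 : ℝ) ≤ t := mod_cast (by omega : 1 ≤ t)
    calc 1 / (2 * c : ℝ) * (2 / c) ^ 2 = 128 * (1 / (4 * c) ^ 3) := by field_simp; norm_num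
      _ ≤ 128 * (1 / (t : ℝ) ^ 3) := by gcongr
      _ ≤ 128 * (2 * wt T t) := by gcongr; exact inv_cube_le_two_mul_wt (by omega) (by omega)
      _ = 256 * wt T t := by ring
  · simp

lemma IsDyadic.sum_avgWt_mul_le (h : IsDyadic J b θ) (hT : ∀ j ∈ J, 4 * b j ≤ T)
    (ht : t ∈ Icc 1 T) : ∑ j ∈ J, avgWt (b j) t * (2 / b j) ^ 2 ≤ 768 * wt T t := by
  refine (sum_le_sum fun j hj => avgWt_mul_le (h.one_le j hj) (hT j hj)).trans ?_
  rw [← sum_filter, sum_const, nsmul_eq_mul]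
  have := wt_nonneg (mem_Icc.1 ht).1 (mem_Icc.1 ht).2
  calc _ ≤ 3 * (256 * wt T t) := by gcongr; exact_mod_cast h.card_filter_le t
    _ = 768 * wt T t := by ring

lemma lowPass_sub_lowPass (hc : 1 ≤ c) (ht : 2 * c ≤ t) :
    lowPass (2 * c) f - lowPass c f = mult (blockInv c) (lowPass t (diffOp f)) := by
  ext n
  simp only [AddMonoidAlgebra.coeff_sub, Finsupp.sub_apply, coeff_lowPass, diffOp, coeff_mult,
    blockInv]
  by_cases h1 : n ≤ c
  · simp [h1, h1.not_gt, h1.trans (by omega : c ≤ 2 * c)]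
  by_cases h2 : n ≤ 2 * c
  · have : (n : ℂ) ≠ 0 := mod_cast (by omega : n ≠ 0)
    simp [h1, h2, not_le.1 h1, h2.trans ht, this]
  · simp [h1, h2]

lemma norm_ev_block_sq_eq (hc : 1 ≤ c) (hT : 4 * c ≤ T) (u : ℝ) :
    ‖ev u (lowPass (2 * c) f - lowPass c f)‖ ^ 2 =
      ∑ t ∈ Icc 1 T, avgWt c t * ‖ev u (mult (blockInv c) (lowPass t (diffOp f)))‖ ^ 2 := by
  rw [← one_mul (‖_‖ ^ 2), ← sum_avgWt hc hT, sum_mul]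
  refine sum_congr rfl fun t _ => ?_
  unfold avgWt
  split_ifs with h
  · rw [lowPass_sub_lowPass hc (mem_Ico.1 h).1]
  · simp

/-- A block of `f` is a multiplier of variation `≲ 1 / b` applied to any `S_t D f` with `t ≥ 2b`;
averaging over `t ∈ [2b, 4b)` brings in the square function. -/
lemma VectorRiesz.mean_sum_block_le {K : ℝ} (hK : 0 ≤ K) (riesz : VectorRiesz m K)
    (hb : IsDyadic J b θ) (hT : ∀ j ∈ J, 4 * b j ≤ T) (hf : SpecIn (Set.Icc 1 T) f) :
    mean (fun u => (∑ j ∈ J, ‖ev u (lowPass (2 * b j) f - lowPass (b j) f)‖ ^ 2) ^ m) ≤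
      K * (768 ^ m * mean (fun u => squareFn T f u ^ m)) := by
  have avg0 : ∀ p ∈ J ×ˢ Icc 1 T, 0 ≤ avgWt (b p.1) p.2 := fun p hp =>
    avgWt_nonneg (hb.one_le _ (mem_product.1 hp).1)
  have blocks (u : ℝ) : ∑ j ∈ J, ‖ev u (lowPass (2 * b j) f - lowPass (b j) f)‖ ^ 2 =
      ∑ p ∈ J ×ˢ Icc 1 T, avgWt (b p.1) p.2 *
        ‖ev u (mult (blockInv (b p.1)) (lowPass p.2 (diffOp f)))‖ ^ 2 := by
    rw [sum_product]
    exact sum_congr rfl fun j hj => norm_ev_block_sq_eq (hb.one_le j hj) (hT j hj) u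
  simp only [blocks]
  refine (riesz.mean_mult_le hK (J ×ˢ Icc 1 T) (V := fun p => 2 / b p.1) (a := 1) (b := T) avg0
    (fun p _ => (hf.mult _).mult _) (fun p hp => if_neg ?_)
    (fun p hp => sum_norm_blockInv_sub_le (hb.one_le _ (mem_product.1 hp).1))).trans ?_
  · have := hT _ (mem_product.1 hp).1
    have := hb.one_le _ (mem_product.1 hp).1
    omega
  rw [← mean_const_mul (768 ^ m)]
  simp only [← mul_pow]
  refine mul_le_mul_of_nonneg_left (mean_pow_mono (fun u => sum_nonneg fun p hp => ?_)
    (fun u => ?_) m) hK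
  · have := avg0 p hp; positivity
  rw [sum_product, sum_comm, squareFn, mul_sum]
  refine sum_le_sum fun t ht => ?_
  calc ∑ j ∈ J, avgWt (b j) t * (2 / b j) ^ 2 * ‖ev u (lowPass t (diffOp f))‖ ^ 2
      = (∑ j ∈ J, avgWt (b j) t * (2 / b j) ^ 2) * ‖ev u (lowPass t (diffOp f))‖ ^ 2 :=
        (sum_mul ..).symm
    _ ≤ 768 * wt T t * ‖ev u (lowPass t (diffOp f))‖ ^ 2 :=
        mul_le_mul_of_nonneg_right (hb.sum_avgWt_mul_le hT ht) (sq_nonneg _)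
    _ = _ := mul_assoc ..

lemma exists_blockBound (k : ℕ) : ∃ C, 0 ≤ C ∧ BlockBound (2 ^ k) C := by
  obtain ⟨C, hC, upper⟩ := (exists_squareUpper_squareLower k).1
  obtain ⟨K, hK, riesz⟩ := exists_vectorRiesz k
  refine ⟨K * (768 ^ 2 ^ k * C), by positivity, fun J b θ f hb hf => ?_⟩
  obtain ⟨T, hT⟩ := (J.image (fun j => 4 * b j) ∪ f.coeff.support).exists_le
  have spec : SpecIn (Set.Icc 1 T) f := fun n hn =>
    ⟨hf n hn, hT n (mem_union_right _ (Finsupp.mem_support_iff.2 hn))⟩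
  refine (riesz.mean_sum_block_le hK hb (fun j hj => hT _ (mem_union_left _
    (mem_image_of_mem _ hj))) spec).trans ?_
  rw [mul_assoc, mul_assoc]
  gcongr
  exact upper spec

end DyadicBlocks

section AbelMeans

variable {X E ι : Type*} [NormedAddCommGroup E] [NormedSpace ℝ E] {τ : Equiv.Perm X}
  {r s : ℝ}

/-- `u` is the Abel mean `(1 - r) ∑ r^a F ∘ τ^a` of `F`, characterized by its resolvent equation. -/
def IsAbelMean (τ : Equiv.Perm X) (r : ℝ) (F u : X → E) : Prop :=
  ∀ x, u x = (1 - r) • F x + r • u (τ x)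

lemma IsAbelMean.norm_le [Finite X] (h0 : 0 ≤ r) (h1 : r < 1) {f h : X → E} {F u : X → ℝ}
    (hh : IsAbelMean τ r f h) (hu : IsAbelMean τ r F u) (hf : ∀ x, ‖f x‖ ≤ F x) (x : X) :
    ‖h x‖ ≤ u x := by
  have : Nonempty X := ⟨x⟩
  obtain ⟨y, hy⟩ := Finite.exists_max fun x => ‖h x‖ - u x
  have step : ‖h y‖ ≤ (1 - r) * F y + r * ‖h (τ y)‖ := by
    calc ‖h y‖ ≤ ‖(1 - r) • f y‖ + ‖r • h (τ y)‖ := (congrArg _ (hh y)).trans_le (norm_add_le _ _)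
      _ = (1 - r) * ‖f y‖ + r * ‖h (τ y)‖ := by
        rw [norm_smul_of_nonneg (by linarith), norm_smul_of_nonneg h0]
      _ ≤ (1 - r) * F y + r * ‖h (τ y)‖ := by gcongr; exact hf y
  have max_le : ‖h y‖ - u y ≤ r * (‖h y‖ - u y) := by
    have uy := hu y
    simp only [smul_eq_mul] at uy
    linarith [mul_le_mul_of_nonneg_left (hy (τ y)) h0]
  nlinarith [hy x]

lemma IsAbelMean.nonneg [Finite X] (h0 : 0 ≤ r) (h1 : r < 1) {F u : X → ℝ} (hu : IsAbelMean τ r F u)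
    (hF : ∀ x, 0 ≤ F x) (x : X) : 0 ≤ u x := by
  have zero : IsAbelMean τ r (0 : X → ℝ) 0 := fun x => by simp
  simpa using zero.norm_le h0 h1 hu (fun x => by simpa using hF x) x

lemma exists_isAbelMean [Finite X] (τ : Equiv.Perm X) (h0 : 0 ≤ r) (h1 : r < 1) (F : X → ℝ) :
    ∃ u, IsAbelMean τ r F u := by
  let L : (X → ℝ) →ₗ[ℝ] (X → ℝ) := LinearMap.id - r • LinearMap.funLeft ℝ ℝ τ
  have injective : Function.Injective L := by
    rw [← LinearMap.ker_eq_bot, LinearMap.ker_eq_bot']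
    intro u hu
    have mean_zero : IsAbelMean τ r 0 u := fun x => by
      simpa [L, sub_eq_zero, LinearMap.funLeft_apply] using congrFun hu x
    have zero : IsAbelMean τ r (0 : X → ℝ) 0 := fun x => by simp
    exact funext fun x => by simpa using mean_zero.norm_le h0 h1 zero (by simp) x
  obtain ⟨u, hu⟩ := LinearMap.injective_iff_surjective.1 injective ((1 - r) • F)
  refine ⟨u, fun x => ?_⟩
  have := congrFun hu x
  simp only [L, LinearMap.sub_apply, LinearMap.id_apply, LinearMap.smul_apply, Pi.sub_apply,
    Pi.smul_apply, LinearMap.funLeft_apply] at this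
  rw [← this, sub_add_cancel]

variable [Fintype X]

/-- The identity behind this is
`(1 - rs) ∑ v w = (1 - r) ∑ g w + (1 - s) ∑ v h - (1 - r) (1 - s) ∑ g h`. -/
lemma IsAbelMean.sum_mul_le (r0 : 0 ≤ r) (r1 : r < 1) (s0 : 0 ≤ s) (s1 : s < 1)
    {g h v w : X → ℝ} (hg : ∀ x, 0 ≤ g x) (hh : ∀ x, 0 ≤ h x) (hv : IsAbelMean τ r g v)
    (hw : IsAbelMean τ s h w) :
    ∑ x, v x * w x ≤ ∑ x, g x * w x + ∑ x, v x * h x := by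
  have v0 := hv.nonneg r0 r1 hg
  have w0 := hw.nonneg s0 s1 hh
  have gw : 0 ≤ ∑ x, g x * w x := sum_nonneg fun x _ => mul_nonneg (hg x) (w0 x)
  have vh : 0 ≤ ∑ x, v x * h x := sum_nonneg fun x _ => mul_nonneg (v0 x) (hh x)
  have gh : 0 ≤ ∑ x, g x * h x := sum_nonneg fun x _ => mul_nonneg (hg x) (hh x)
  have product : ∑ x, (v x - (1 - r) * g x) * (w x - (1 - s) * h x) =
      r * s * ∑ x, v x * w x := by
    rw [← Equiv.sum_comp τ fun x => v x * w x, mul_sum]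
    refine sum_congr rfl fun x _ => ?_
    have hvx := hv x
    have hwx := hw x
    simp only [smul_eq_mul] at hvx hwx
    rw [hvx, hwx]; ring
  have expand : ∑ x, (v x - (1 - r) * g x) * (w x - (1 - s) * h x) = ∑ x, v x * w x -
      (1 - s) * ∑ x, v x * h x - (1 - r) * ∑ x, g x * w x +
      (1 - r) * (1 - s) * ∑ x, g x * h x := by
    simp only [mul_sum, ← sum_sub_distrib, ← sum_add_distrib]
    exact sum_congr rfl fun x _ => by ring
  have : 0 ≤ (1 - r) * (1 - s) * ∑ x, g x * h x :=
    mul_nonneg (mul_nonneg (by linarith) (by linarith)) gh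
  have : (1 - r) * ∑ x, g x * w x ≤ (1 - r * s) * ∑ x, g x * w x :=
    mul_le_mul_of_nonneg_right (by nlinarith) gw
  have : (1 - s) * ∑ x, v x * h x ≤ (1 - r * s) * ∑ x, v x * h x :=
    mul_le_mul_of_nonneg_right (by nlinarith) vh
  exact le_of_mul_le_mul_left (a := 1 - r * s) (by linarith) (by nlinarith)

lemma IsAbelMean.sum_mul_eq (h1 : r < 1) {F u g v : X → ℝ} (hu : IsAbelMean τ r F u)
    (hv : IsAbelMean τ⁻¹ r g v) : ∑ x, u x * g x = ∑ x, F x * v x := by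
  refine mul_left_cancel₀ (sub_ne_zero.2 h1.ne') ?_
  calc (1 - r) * ∑ x, u x * g x = ∑ x, u x * v x - r * ∑ x, u x * v (τ⁻¹ x) := by
        simp only [mul_sum, ← sum_sub_distrib]
        refine sum_congr rfl fun x _ => ?_
        linear_combination (-u x) * hv x
    _ = ∑ x, u x * v x - r * ∑ x, u (τ x) * v x := by
        rw [← Equiv.sum_comp τ fun x => u x * v (τ⁻¹ x)]; simp
    _ = (1 - r) * ∑ x, F x * v x := by
        simp only [mul_sum, ← sum_sub_distrib]
        refine sum_congr rfl fun x _ => ?_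
        linear_combination v x * hu x

variable {ρ : ι → ℝ}

lemma sum_sq_sum_abelMean_le [Fintype ι] (h0 : ∀ j, 0 ≤ ρ j) (h1 : ∀ j, ρ j < 1) {g v : ι → X → ℝ}
    (hg : ∀ j x, 0 ≤ g j x) (hv : ∀ j, IsAbelMean τ (ρ j) (g j) (v j)) :
    ∑ x, (∑ j, v j x) ^ 2 ≤ 2 * ∑ x, (∑ j, g j x) * ∑ j, v j x := by
  have sum_mul_eq (p q : ι → X → ℝ) :
      ∑ x, (∑ j, p j x) * ∑ j, q j x = ∑ j, ∑ k, ∑ x, p j x * q k x := by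
    simp only [sum_mul_sum]
    rw [sum_comm]
    exact sum_congr rfl fun j _ => sum_comm
  calc ∑ x, (∑ j, v j x) ^ 2 = ∑ j, ∑ k, ∑ x, v j x * v k x := by simp only [sq, sum_mul_eq]
    _ ≤ ∑ j, ∑ k, (∑ x, g j x * v k x + ∑ x, v j x * g k x) := by
        refine sum_le_sum fun j _ => sum_le_sum fun k _ => ?_
        exact (hv j).sum_mul_le (h0 j) (h1 j) (h0 k) (h1 k) (hg j) (hg k) (hv k)
    _ = ∑ x, (∑ j, g j x) * ∑ j, v j x + ∑ x, (∑ j, v j x) * ∑ j, g j x := by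
        simp only [sum_add_distrib, sum_mul_eq]
    _ = 2 * ∑ x, (∑ j, g j x) * ∑ j, v j x := by
        simp only [mul_comm (∑ j, v j _), two_mul]

/-- A maximal inequality by the `TT*` method: the adjoint of the linearized maximal operator
sends `φ` to the sum of the Abel means, along `τ⁻¹`, of the pieces `1_{σ = j} φ`. -/
lemma sum_abelMean_sq_le [Finite ι] (h0 : ∀ j, 0 ≤ ρ j) (h1 : ∀ j, ρ j < 1) {F : X → ℝ}
    {u : ι → X → ℝ} (hF : ∀ x, 0 ≤ F x) (hu : ∀ j, IsAbelMean τ (ρ j) F (u j)) (σ : X → ι) :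
    ∑ x, u (σ x) x ^ 2 ≤ 4 * ∑ x, F x ^ 2 := by
  classical
  cases nonempty_fintype ι
  set φ : X → ℝ := fun x => u (σ x) x
  set g : ι → X → ℝ := fun j x => if σ x = j then φ x else 0
  have g0 (j x) : 0 ≤ g j x := by
    simp only [g]; split_ifs; exacts [(hu _).nonneg (h0 _) (h1 _) hF x, le_rfl]
  have sum_g (x) : ∑ j, g j x = φ x := by simp [g]
  choose v hv using fun j => exists_isAbelMean τ⁻¹ (h0 j) (h1 j) (g j)
  set V : X → ℝ := fun x => ∑ j, v j x with V_def
  have adjoint_sq : ∑ x, V x ^ 2 ≤ 2 * ∑ x, φ x * V x := by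
    simpa only [sum_g] using sum_sq_sum_abelMean_le h0 h1 g0 hv
  have duality : ∑ x, φ x ^ 2 = ∑ x, F x * V x := by
    calc ∑ x, φ x ^ 2 = ∑ j, ∑ x, u j x * g j x := by
          rw [sum_comm]; simp [g, φ, sq]
      _ = ∑ j, ∑ x, F x * v j x := sum_congr rfl fun j _ => (hu j).sum_mul_eq (h1 j) (hv j)
      _ = ∑ x, F x * V x := by rw [sum_comm]; simp only [V_def, mul_sum]
  have young_φ : 2 * ∑ x, φ x * V x ≤ 1 / 2 * ∑ x, V x ^ 2 + 2 * ∑ x, φ x ^ 2 := by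
    simp only [mul_sum, ← sum_add_distrib]
    exact sum_le_sum fun x _ => by nlinarith [sq_nonneg (V x - 2 * φ x)]
  have young_F : ∑ x, F x * V x ≤ 1 / 8 * ∑ x, V x ^ 2 + 2 * ∑ x, F x ^ 2 := by
    simp only [mul_sum, ← sum_add_distrib]
    exact sum_le_sum fun x _ => by nlinarith [sq_nonneg (V x - 4 * F x)]
  change ∑ x, φ x ^ 2 ≤ _
  linarith

end AbelMeans

section LacunarySums

variable {J F : Finset ℕ} {b : ℕ → ℤ} {θ w : ℝ}

lemma sum_pow_le_of_lt_one {q : ℝ} (q0 : 0 ≤ q) (q1 : q < 1) (w0 : 0 ≤ w)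
    (h : ∀ j ∈ F, q ^ j ≤ w) : ∑ j ∈ F, q ^ j ≤ w / (1 - q) := by
  have := sub_nonneg.2 q1.le
  rcases F.eq_empty_or_nonempty with rfl | hF
  · rw [sum_empty]; positivity
  calc ∑ j ∈ F, q ^ j ≤ ∑ j ∈ Ico (F.min' hF) (F.max' hF + 1), q ^ j :=
        sum_le_sum_of_subset_of_nonneg (fun j hj => mem_Ico.2
          ⟨F.min'_le j hj, Nat.lt_succ_of_le (F.le_max' j hj)⟩) fun _ _ _ => by positivity
    _ ≤ q ^ F.min' hF / (1 - q) := geom_sum_Ico_le_of_lt_one q0 q1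
    _ ≤ w / (1 - q) := by gcongr; exact h _ (F.min'_mem hF)

lemma sum_four_pow_le (w0 : 0 ≤ w) (h : ∀ j ∈ F, (4 : ℝ) ^ j ≤ w) :
    ∑ j ∈ F, (4 : ℝ) ^ j ≤ 4 * w := by
  rcases F.eq_empty_or_nonempty with rfl | hF
  · rw [sum_empty]; positivity
  have : ∑ j ∈ F, 4 ^ j < 4 ^ (F.max' hF + 1) :=
    Nat.geomSum_lt (by norm_num) fun j hj => Nat.lt_succ_of_le (F.le_max' j hj)
  calc ∑ j ∈ F, (4 : ℝ) ^ j ≤ 4 ^ (F.max' hF + 1) := mod_cast this.le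
    _ = 4 * 4 ^ F.max' hF := pow_succ' ..
    _ ≤ 4 * w := by gcongr; exact h _ (F.max'_mem hF)

lemma two_pow_sq (j : ℕ) : ((2 : ℝ) ^ j) ^ 2 = 4 ^ j := by
  rw [← pow_mul, mul_comm, pow_mul]; norm_num

lemma IsDyadic.cast_nonneg (h : IsDyadic J b θ) {j : ℕ} (hj : j ∈ J) : (0 : ℝ) ≤ b j :=
  mod_cast zero_le_one.trans (h.one_le j hj)

lemma IsDyadic.sum_div_sq_le (h : IsDyadic J b θ) {x : ℝ} (hx : 0 < x) :
    ∑ j ∈ J with x ≤ b j, (x / b j) ^ 2 ≤ 22 := by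
  have θ0 := h.pos
  have le : ∀ j ∈ J, x ≤ b j → ((1 : ℝ) / 4) ^ j ≤ (4 * θ / x) ^ 2 := fun j hj hxj => by
    rw [one_div, inv_pow, ← two_pow_sq, ← inv_pow]
    gcongr
    rw [inv_le_comm₀ (by positivity) (by positivity), inv_div, div_le_iff₀ (by positivity)]
    linarith [h.upper j hj]
  calc ∑ j ∈ J with x ≤ b j, (x / b j) ^ 2
      ≤ ∑ j ∈ J with x ≤ b j, (x / θ) ^ 2 * (1 / 4) ^ j := sum_le_sum fun j hj => by
        have := h.cast_nonneg (mem_filter.1 hj).1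
        rw [one_div, inv_pow, ← two_pow_sq, ← inv_pow, ← mul_pow, ← div_eq_mul_inv, div_div]
        gcongr
        exact h.lower j (mem_filter.1 hj).1
    _ ≤ (x / θ) ^ 2 * ((4 * θ / x) ^ 2 / (1 - 1 / 4)) := by
        rw [← mul_sum]
        gcongr
        refine sum_pow_le_of_lt_one (by norm_num) (by norm_num) (by positivity) fun j hj => ?_
        exact le j (mem_filter.1 hj).1 (mem_filter.1 hj).2
    _ ≤ 22 := by field_simp; norm_num

lemma IsDyadic.sum_four_mul_div_sq_le (h : IsDyadic J b θ) {x : ℝ} (hx : 0 < x) :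
    ∑ j ∈ J with ¬x ≤ b j, (4 * b j / x) ^ 2 ≤ 1024 := by
  have θ0 := h.pos
  calc ∑ j ∈ J with ¬x ≤ b j, (4 * b j / x) ^ 2
      ≤ ∑ j ∈ J with ¬x ≤ b j, (16 * θ / x) ^ 2 * 4 ^ j := sum_le_sum fun j hj => by
        have := h.cast_nonneg (mem_filter.1 hj).1
        rw [← two_pow_sq, ← mul_pow, div_mul_eq_mul_div]
        refine pow_le_pow_left₀ (by positivity) (div_le_div_of_nonneg_right ?_ hx.le) 2
        linarith [h.upper j (mem_filter.1 hj).1]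
    _ ≤ (16 * θ / x) ^ 2 * (4 * (x / θ) ^ 2) := by
        rw [← mul_sum]
        gcongr
        refine sum_four_pow_le (by positivity) fun j hj => ?_
        rw [← two_pow_sq]
        gcongr
        rw [le_div_iff₀ θ0]
        linarith [h.lower j (mem_filter.1 hj).1, not_le.1 (mem_filter.1 hj).2]
    _ = 1024 := by field_simp; norm_num

lemma IsDyadic.sum_min_ratio_le (h : IsDyadic J b θ) {x : ℝ} (hx : 0 < x) :
    ∑ j ∈ J, (if x ≤ b j then x / b j else 4 * b j / x) ^ 2 ≤ 1100 := by
  simp only [ite_pow, sum_ite]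
  linarith [h.sum_div_sq_le hx, h.sum_four_mul_div_sq_le hx]

end LacunarySums

section AbelSymbol

variable {a r : ℝ} {n b : ℤ}

/-- The Fourier symbol of the Abel mean of parameter `r` along the rotation by the angle `a`. -/
noncomputable def abelSymbol (a r : ℝ) (n : ℤ) : ℂ := (1 - r) / (1 - r * Circle.exp (n * a))

lemma one_sub_le_norm_one_sub_mul (h0 : 0 ≤ r) (z : Circle) : 1 - r ≤ ‖1 - (r : ℂ) * z‖ := by
  have := norm_sub_norm_le (1 : ℂ) (r * z)
  rwa [norm_mul, Circle.norm_coe, Complex.norm_of_nonneg h0, norm_one, mul_one] at this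

lemma norm_one_sub_le_two_mul (h0 : 0 ≤ r) (h1 : r ≤ 1) (z : Circle) :
    ‖1 - (z : ℂ)‖ ≤ 2 * ‖1 - (r : ℂ) * z‖ := by
  calc ‖1 - (z : ℂ)‖ = ‖1 - (r : ℂ) * z - ((1 - r : ℝ) : ℂ) * z‖ := by push_cast; ring_nf
    _ ≤ ‖1 - (r : ℂ) * z‖ + (1 - r) := by
      refine (norm_sub_le _ _).trans_eq ?_
      rw [norm_mul, Circle.norm_coe, Complex.norm_of_nonneg (sub_nonneg.2 h1), mul_one]
    _ ≤ 2 * ‖1 - (r : ℂ) * z‖ := by linarith [one_sub_le_norm_one_sub_mul h0 z]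

lemma norm_one_sub_circleExp (t : ℝ) : ‖1 - (Circle.exp t : ℂ)‖ = 2 * |Real.sin (t / 2)| := by
  rw [norm_sub_rev, Circle.coe_exp, mul_comm, Complex.norm_exp_I_mul_ofReal_sub_one, norm_mul,
    Real.norm_two, Real.norm_eq_abs]

lemma norm_one_sub_abelSymbol_le (h0 : 0 ≤ r) (h1 : r < 1) :
    ‖1 - abelSymbol a r n‖ ≤ |n * a| / (1 - r) := by
  unfold abelSymbol
  set z := Circle.exp (n * a)
  have lower := one_sub_le_norm_one_sub_mul h0 z
  have d0 : 0 < ‖1 - (r : ℂ) * z‖ := (sub_pos.2 h1).trans_le lower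
  have factor : 1 - (1 - (r : ℂ)) / (1 - r * z) = r * (1 - z) / (1 - r * z) := by
    rw [eq_div_iff (norm_pos_iff.1 d0), sub_mul, div_mul_cancel₀ _ (norm_pos_iff.1 d0)]
    ring
  have upper : ‖1 - (z : ℂ)‖ ≤ |n * a| := by
    rw [norm_one_sub_circleExp]
    have := Real.abs_sin_le_abs (x := n * a / 2)
    rw [abs_div, abs_two] at this
    linarith
  rw [factor, norm_div, norm_mul, Complex.norm_of_nonneg h0]
  calc r * ‖1 - (z : ℂ)‖ / ‖1 - (r : ℂ) * z‖ ≤ 1 * |n * a| / (1 - r) := by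
        have := sub_pos.2 h1
        gcongr
    _ = |n * a| / (1 - r) := by rw [one_mul]

lemma norm_abelSymbol_le (h0 : 0 ≤ r) (h1 : r < 1) (hna : 0 < n * a) (hna' : n * a ≤ Real.pi) :
    ‖abelSymbol a r n‖ ≤ 4 * (1 - r) / (n * a) := by
  unfold abelSymbol
  set z := Circle.exp (n * a)
  have r1 := sub_pos.2 h1
  have d0 : 0 < ‖1 - (r : ℂ) * z‖ := r1.trans_le (one_sub_le_norm_one_sub_mul h0 z)
  have sin_half : ‖1 - (z : ℂ)‖ = 2 * Real.sin (n * a / 2) := by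
    rw [norm_one_sub_circleExp, abs_of_nonneg]
    exact Real.sin_nonneg_of_nonneg_of_le_pi (by positivity) (by linarith [Real.pi_pos])
  have jordan := Real.mul_le_sin (x := n * a / 2) (by positivity) (by linarith)
  have two_div_pi : (1 : ℝ) / 2 ≤ 2 / Real.pi := by
    rw [div_le_div_iff₀ two_pos Real.pi_pos]; linarith [Real.pi_lt_d2]
  have lower : n * a ≤ 4 * ‖1 - (r : ℂ) * z‖ := by
    have : 1 / 2 * (n * a / 2) ≤ 2 / Real.pi * (n * a / 2) := by gcongr
    linarith [norm_one_sub_le_two_mul h0 h1.le z]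
  rw [norm_div, ← Complex.ofReal_one, ← Complex.ofReal_sub, Complex.norm_of_nonneg r1.le,
    Complex.ofReal_one, div_le_div_iff₀ d0 hna]
  nlinarith

lemma norm_ite_sub_abelSymbol_le (ha : 0 < a) (hb : 1 ≤ b) (hba : b * a ≤ 1) (hn : 1 ≤ n)
    (hna : n * a ≤ Real.pi) : ‖(if n ≤ b then 1 else 0) - abelSymbol a (1 - b * a) n‖ ≤
      if (n : ℝ) ≤ b then (n : ℝ) / b else 4 * b / n := by
  have : (0 : ℝ) < b := mod_cast hb
  have : (0 : ℝ) < n := mod_cast hn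
  have r0 : 0 ≤ 1 - b * a := sub_nonneg.2 hba
  have r1 : 1 - b * a < 1 := sub_lt_self 1 (by positivity)
  by_cases c : n ≤ b
  · rw [if_pos c, if_pos (mod_cast c)]
    refine (norm_one_sub_abelSymbol_le r0 r1).trans_eq ?_
    rw [sub_sub_cancel, abs_of_pos (by positivity), mul_div_mul_right _ _ ha.ne']
  · rw [if_neg c, if_neg (mod_cast c), zero_sub, norm_neg]
    refine (norm_abelSymbol_le r0 r1 (by positivity) hna).trans_eq ?_
    rw [sub_sub_cancel, ← mul_assoc, mul_div_mul_right _ _ ha.ne']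

end AbelSymbol

section MaximalBound

variable {J : Finset ℕ} {b : ℕ → ℤ} {r u : ℝ} {f : 𝓛} {N : ℕ}

/-- The maximal partial sum `max_{j ∈ J} |S_{b j} f|` over a nonempty set of cutoffs. -/
noncomputable def maxLowPass (hJ : J.Nonempty) (b : ℕ → ℤ) (f : 𝓛) (u : ℝ) : ℝ :=
  J.sup' hJ fun j => ‖ev u (lowPass (b j) f)‖

/-- The dyadic maximal inequality in `L^{2m}`, with constant `C`, for analytic polynomials. -/
def MaximalBound (m : ℕ) (C : ℝ) : Prop :=
  ∀ ⦃J : Finset ℕ⦄ (hJ : J.Nonempty) ⦃b : ℕ → ℤ⦄ ⦃θ : ℝ⦄ ⦃f : 𝓛⦄, IsDyadic J b θ →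
    SpecIn (Set.Ici 1) f →
      mean (fun u => maxLowPass hJ b f u ^ (2 * m)) ≤ C * mean (fun u => ‖ev u f‖ ^ (2 * m))

@[fun_prop]
lemma continuous_maxLowPass (hJ : J.Nonempty) : Continuous (maxLowPass hJ b f) :=
  Continuous.finset_sup'_apply hJ fun _ _ => by fun_prop

lemma periodic_maxLowPass (hJ : J.Nonempty) :
    Function.Periodic (maxLowPass hJ b f) (2 * Real.pi) := fun u => by
  simp only [maxLowPass, periodic_ev _ u]

lemma norm_ev_lowPass_le_maxLowPass (hJ : J.Nonempty) {j : ℕ} (hj : j ∈ J) :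
    ‖ev u (lowPass (b j) f)‖ ≤ maxLowPass hJ b f u :=
  le_sup' (fun j => ‖ev u (lowPass (b j) f)‖) hj

lemma maxLowPass_nonneg (hJ : J.Nonempty) : 0 ≤ maxLowPass hJ b f u :=
  (norm_nonneg _).trans (norm_ev_lowPass_le_maxLowPass hJ hJ.choose_spec)

lemma exists_maxLowPass_eq (hJ : J.Nonempty) (b : ℕ → ℤ) (f : 𝓛) (u : ℝ) :
    ∃ j ∈ J, maxLowPass hJ b f u = ‖ev u (lowPass (b j) f)‖ :=
  exists_mem_eq_sup' hJ _

/-- The angle of the point `x` of the regular `N`-gon. -/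
noncomputable def gridAngle (x : ZMod N) : ℝ := 2 * Real.pi * (x.val / N)

lemma sum_mean_comp_gridAngle [NeZero N] {G : ℝ → ℝ} (hG : Continuous G)
    (per : Function.Periodic G (2 * Real.pi)) :
    mean (fun u => ∑ x : ZMod N, G (u + gridAngle x)) = N * mean G := by
  rw [mean_sum fun x _ => by fun_prop]
  simp only [mean_comp_add_right per, sum_const, card_univ, ZMod.card, nsmul_eq_mul]

lemma circleExp_gridAngle_add_one [NeZero N] (x : ZMod N) :
    Circle.exp (gridAngle (x + 1)) = Circle.exp (gridAngle x) * Circle.exp (2 * Real.pi / N) := by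
  have one : ZMod.toCircle (1 : ZMod N) = Circle.exp (2 * Real.pi / N) := by
    ext
    have := ZMod.toCircle_intCast (N := N) 1
    rw [Int.cast_one, Int.cast_one, mul_one] at this
    rw [this, Circle.coe_exp]
    congr 1; push_cast; ring
  simp only [gridAngle, ← ZMod.toCircle_eq_circleExp]
  rw [AddChar.map_add_eq_mul, one]

lemma isAbelMean_ev [NeZero N] (h0 : 0 ≤ r) (h1 : r < 1) (f : 𝓛) (u : ℝ) :
    IsAbelMean (Equiv.addRight (1 : ZMod N)) r (fun x => ev (u + gridAngle x) f)
      (fun x => ev (u + gridAngle x) (mult (abelSymbol (2 * Real.pi / N) r) f)) := by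
  intro x
  have spec : SpecIn (f.coeff.support : Set ℤ) f := fun n hn => Finsupp.mem_support_iff.2 hn
  have rotate (n : ℤ) : fourierTerm f (u + gridAngle (x + 1)) n =
      Circle.exp (n * (2 * Real.pi / N)) * fourierTerm f (u + gridAngle x) n := by
    simp only [fourierTerm, ← zsmul_eq_mul, Circle.exp_zsmul, Circle.exp_add,
      circleExp_gridAngle_add_one, mul_zpow, Circle.coe_mul]
    ring
  simp only [Equiv.coe_addRight, ev_mult_eq_sum spec, ev_eq_sum_fourierTerm spec, rotate, smul_sum,
    ← sum_add_distrib]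
  refine sum_congr rfl fun n _ => ?_
  set z := Circle.exp (n * (2 * Real.pi / N))
  have : abelSymbol (2 * Real.pi / N) r n * (1 - r * z) = 1 - r :=
    div_mul_cancel₀ _ (norm_pos_iff.1 ((sub_pos.2 h1).trans_le (one_sub_le_norm_one_sub_mul h0 z)))
  simp only [Complex.real_smul]
  push_cast
  linear_combination fourierTerm f (u + gridAngle x) n * this

/-- The error of approximating the cutoff at `b` by the Abel symbol of parameter `1 - ba`. -/
noncomputable def abelError (a : ℝ) (b n : ℤ) : ℂ :=
  (if n ≤ b then 1 else 0) - abelSymbol a (1 - b * a) n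

lemma lowPass_eq_add_abelError (a : ℝ) (c : ℤ) (f : 𝓛) :
    lowPass c f = mult (abelSymbol a (1 - c * a)) f + mult (abelError a c) f := by
  ext n
  simp only [AddMonoidAlgebra.coeff_add, Finsupp.add_apply, coeff_lowPass, coeff_mult, abelError]
  split_ifs <;> ring

lemma sum_maxLowPass_sq_le [NeZero N] (hJ : J.Nonempty) (hb : ∀ j ∈ J, 1 ≤ b j)
    (hbN : ∀ j ∈ J, b j * (2 * Real.pi / N) ≤ 1) (u : ℝ) :
    ∑ x : ZMod N, maxLowPass hJ b f (u + gridAngle x) ^ 2 ≤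
      8 * ∑ x : ZMod N, ‖ev (u + gridAngle x) f‖ ^ 2 + 2 * ∑ j ∈ J, ∑ x : ZMod N,
        ‖ev (u + gridAngle x) (mult (abelError (2 * Real.pi / N) (b j)) f)‖ ^ 2 := by
  set a := 2 * Real.pi / N
  have a0 : 0 < a := div_pos Real.two_pi_pos (mod_cast NeZero.pos N)
  have r0 (j : J) : 0 ≤ 1 - b j * a := sub_nonneg.2 (hbN j j.2)
  have r1 (j : J) : 1 - b j * a < 1 := by
    have : (0 : ℝ) < b j := mod_cast (hb j j.2)
    linarith [mul_pos this a0]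
  choose w hw using fun j : J =>
    exists_isAbelMean (Equiv.addRight (1 : ZMod N)) (r0 j) (r1 j) fun x => ‖ev (u + gridAngle x) f‖
  choose σ hσ max_eq using fun x : ZMod N => exists_maxLowPass_eq hJ b f (u + gridAngle x)
  have pointwise (x : ZMod N) : maxLowPass hJ b f (u + gridAngle x) ^ 2 ≤
      2 * w ⟨σ x, hσ x⟩ x ^ 2 +
        2 * ∑ j ∈ J, ‖ev (u + gridAngle x) (mult (abelError a (b j)) f)‖ ^ 2 := by
    set e := ‖ev (u + gridAngle x) (mult (abelError a (b (σ x))) f)‖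
    have dominated := (isAbelMean_ev (r0 ⟨σ x, hσ x⟩) (r1 _) f u).norm_le (r0 _) (r1 _)
      (hw ⟨σ x, hσ x⟩) (fun _ => le_rfl) x
    have error_le : e ^ 2 ≤ ∑ j ∈ J, ‖ev (u + gridAngle x) (mult (abelError a (b j)) f)‖ ^ 2 :=
      single_le_sum (f := fun j => ‖ev (u + gridAngle x) (mult (abelError a (b j)) f)‖ ^ 2)
        (fun _ _ => sq_nonneg _) (hσ x)
    calc maxLowPass hJ b f (u + gridAngle x) ^ 2 ≤ (w ⟨σ x, hσ x⟩ x + e) ^ 2 := by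
          refine pow_le_pow_left₀ (maxLowPass_nonneg hJ) ?_ 2
          rw [max_eq, lowPass_eq_add_abelError a, map_add]
          exact (norm_add_le _ _).trans (add_le_add_left dominated _)
      _ ≤ 2 * w ⟨σ x, hσ x⟩ x ^ 2 + 2 * e ^ 2 := by
          linarith [add_sq_le (a := w ⟨σ x, hσ x⟩ x) (b := e)]
      _ ≤ _ := by gcongr
  have maximal := sum_abelMean_sq_le r0 r1 (fun x => norm_nonneg _) hw fun x => ⟨σ x, hσ x⟩
  refine (sum_le_sum fun x _ => pointwise x).trans ?_
  rw [sum_add_distrib, ← mul_sum, ← mul_sum, sum_comm (s := J)]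
  linarith

lemma exists_nat_two_pi_div_le (s : Finset ℤ) :
    ∃ N : ℕ, N ≠ 0 ∧ ∀ n ∈ s, n * (2 * Real.pi / N) ≤ 1 := by
  obtain ⟨T, hT⟩ := s.exists_le
  refine ⟨7 * (T.toNat + 1), by omega, fun n hn => ?_⟩
  have hn' : (n : ℝ) ≤ T.toNat := mod_cast (hT n hn).trans (Int.self_le_toNat T)
  rw [mul_div_assoc', div_le_one (by positivity)]
  push_cast
  nlinarith [Real.pi_lt_d2, Real.pi_pos, Nat.cast_nonneg (α := ℝ) T.toNat]

lemma maximalBound_one : MaximalBound 1 2208 := by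
  intro J hJ b θ f hb hf
  obtain ⟨N, hN, small⟩ := exists_nat_two_pi_div_le (J.image b ∪ f.coeff.support)
  have : NeZero N := ⟨hN⟩
  set a := 2 * Real.pi / N
  have a0 : 0 < a := div_pos Real.two_pi_pos (mod_cast NeZero.pos N)
  have hbN : ∀ j ∈ J, b j * a ≤ 1 := fun j hj =>
    small _ (mem_union_left _ (mem_image_of_mem _ hj))
  have error : ∑ j ∈ J, mean (fun u => ‖ev u (mult (abelError a (b j)) f)‖ ^ 2) ≤
      1100 * mean (fun u => ‖ev u f‖ ^ 2) := by
    refine sum_mean_norm_ev_mult_sq_le fun n hn => ?_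
    have n1 : 1 ≤ n := hf n (Finsupp.mem_support_iff.1 hn)
    refine (sum_le_sum fun j hj => pow_le_pow_left₀ (norm_nonneg _) ?_ 2).trans
      (hb.sum_min_ratio_le (x := n) (mod_cast n1))
    exact norm_ite_sub_abelSymbol_le a0 (hb.one_le j hj) (hbN j hj) n1
      ((small n (mem_union_right _ hn)).trans (by linarith [Real.pi_gt_three]))
  have grid := mean_mono (sum_maxLowPass_sq_le (f := f) hJ hb.one_le hbN)
  have N0 : (0 : ℝ) < N := mod_cast NeZero.pos N
  have per (g : 𝓛) : Function.Periodic (fun u => ‖ev u g‖ ^ 2) (2 * Real.pi) := fun u => by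
    simp only [periodic_ev g u]
  rw [mean_add, mean_const_mul, mean_const_mul,
    sum_mean_comp_gridAngle (G := fun u => maxLowPass hJ b f u ^ 2) (by fun_prop)
      fun u => by simp only [periodic_maxLowPass hJ u],
    sum_mean_comp_gridAngle (G := fun u => ‖ev u f‖ ^ 2) (by fun_prop) (per f),
    mean_sum fun j _ => by fun_prop,
    sum_congr rfl fun j _ => sum_mean_comp_gridAngle
      (G := fun u => ‖ev u (mult (abelError a (b j)) f)‖ ^ 2) (by fun_prop) (per _),
    ← mul_sum] at grid
  refine le_of_mul_le_mul_left ?_ N0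
  rw [mul_one]
  linarith [mul_le_mul_of_nonneg_left error N0.le]

end MaximalBound

section MaximalDoubling

variable {J : Finset ℕ} {b : ℕ → ℤ} {θ : ℝ} {f : 𝓛} {m : ℕ} {c : ℤ}

lemma lowPass_two_mul_mul_self (hc : 0 ≤ c) (hf : SpecIn (Set.Ici 1) f) :
    lowPass (2 * c) (f * f) = lowPass c f * lowPass c f +
      2 * lowPass (2 * c) (lowPass c f * (lowPass (2 * c) f - lowPass c f)) := by
  set g := lowPass c f
  set h := lowPass (2 * c) f
  have spec_block : SpecIn (Set.Ioi c) (h - g) := fun n hn => by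
    by_contra hle
    have : n ≤ c := not_lt.1 hle
    exact hn (by simp [g, h, this, this.trans (by omega : c ≤ 2 * c)])
  have low : lowPass (2 * c) (g * g) = g * g :=
    lowPass_eq_self ((specIn_lowPass c f).mul (specIn_lowPass c f) fun a ha b hb => by
      simp only [Set.mem_Iic] at *; omega)
  have high : lowPass (2 * c) ((h - g) * (h - g) + (f - h) * (f + h)) = 0 := by
    refine lowPass_eq_zero (.add (spec_block.mul spec_block ?_)
      ((specIn_sub_lowPass (2 * c) f).mul (hf.add (hf.mult _)) ?_)) <;>
    · intro a ha b hb
      simp only [Set.mem_Ioi, Set.mem_Ici] at *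
      omega
  calc lowPass (2 * c) (f * f)
      = lowPass (2 * c) (g * g + ((g * (h - g) + g * (h - g)) +
          ((h - g) * (h - g) + (f - h) * (f + h)))) := by congr 1; ring
    _ = _ := by simp only [map_add, low, high]; ring

lemma norm_ev_lowPass_sq_le_add (hc : 0 ≤ c) (hf : SpecIn (Set.Ici 1) f) (u : ℝ) :
    ‖ev u (lowPass c f)‖ ^ 2 ≤ ‖ev u (lowPass (2 * c) (f * f))‖ +
      2 * ‖ev u (lowPass (2 * c) (lowPass c f * (lowPass (2 * c) f - lowPass c f)))‖ := by
  have square := congrArg (ev u) (lowPass_two_mul_mul_self hc hf)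
  rw [map_add, map_mul (ev u), map_mul (ev u) 2, map_ofNat, ← sub_eq_iff_eq_add] at square
  rw [pow_two, ← norm_mul, ← square]
  exact (norm_sub_le _ _).trans_eq (by rw [norm_mul, Complex.norm_ofNat])

/-- The square function of the blocks `(b j, 2 b j]`, `j ∈ J`, of `f`, squared. -/
noncomputable def blockSq (J : Finset ℕ) (b : ℕ → ℤ) (f : 𝓛) (u : ℝ) : ℝ :=
  ∑ j ∈ J, ‖ev u (lowPass (2 * b j) f - lowPass (b j) f)‖ ^ 2

/-- The majorant `max_j |S_{2 b j} (f²)| + blockSq` of the diagonal part of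
`(max_j |S_{b j} f|)²`. -/
noncomputable def diagSq (hJ : J.Nonempty) (b : ℕ → ℤ) (f : 𝓛) (u : ℝ) : ℝ :=
  maxLowPass hJ (fun j => 2 * b j) (f * f) u + blockSq J b f u

/-- The `ℓ²(J)` norm of the cross terms `S_{2 b j} (S_{b j} f · (S_{2 b j} f - S_{b j} f))`. -/
noncomputable def crossNorm (J : Finset ℕ) (b : ℕ → ℤ) (f : 𝓛) (u : ℝ) : ℝ :=
  √(∑ j ∈ J, ‖ev u (lowPass (2 * b j) (lowPass (b j) f *
    (lowPass (2 * b j) f - lowPass (b j) f)))‖ ^ 2)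

lemma blockSq_nonneg (u : ℝ) : 0 ≤ blockSq J b f u := sum_nonneg fun _ _ => sq_nonneg _

@[fun_prop]
lemma continuous_blockSq : Continuous (blockSq J b f) := by unfold blockSq; fun_prop

@[fun_prop]
lemma continuous_diagSq (hJ : J.Nonempty) : Continuous (diagSq hJ b f) := by
  unfold diagSq; fun_prop

lemma continuous_crossNorm : Continuous (crossNorm J b f) := by unfold crossNorm; fun_prop

lemma maxLowPass_sq_le (hJ : J.Nonempty) (hb : IsDyadic J b θ) (hf : SpecIn (Set.Ici 1) f)
    (u : ℝ) : maxLowPass hJ b f u ^ 2 ≤ diagSq hJ b f u + 2 * crossNorm J b f u := by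
  obtain ⟨j, hj, max_eq⟩ := exists_maxLowPass_eq hJ b f u
  rw [max_eq]
  refine (norm_ev_lowPass_sq_le_add (by linarith [hb.one_le j hj]) hf u).trans ?_
  have cross : ‖ev u (lowPass (2 * b j) (lowPass (b j) f *
      (lowPass (2 * b j) f - lowPass (b j) f)))‖ ≤ crossNorm J b f u :=
    Real.le_sqrt_of_sq_le (single_le_sum (f := fun j => ‖ev u (lowPass (2 * b j) (lowPass (b j) f *
      (lowPass (2 * b j) f - lowPass (b j) f)))‖ ^ 2) (fun _ _ => sq_nonneg _) hj)
  have diag := norm_ev_lowPass_le_maxLowPass (b := fun j => 2 * b j) (f := f * f) (u := u) hJ hj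
  have := blockSq_nonneg (J := J) (b := b) (f := f) u
  rw [diagSq]
  linarith

lemma VectorRiesz.mean_crossNorm_pow_le {K : ℝ} (hK : 0 ≤ K) (riesz : VectorRiesz m K)
    (hJ : J.Nonempty) : mean (fun u => crossNorm J b f u ^ (2 * m)) ≤
      K * mean (fun u => (maxLowPass hJ b f u ^ 2 * diagSq hJ b f u) ^ m) := by
  have vector := riesz J (fun _ => 1) (fun j => 2 * b j)
    (fun j => lowPass (b j) f * (lowPass (2 * b j) f - lowPass (b j) f)) fun _ _ => zero_le_one
  simp only [one_mul] at vector
  simp only [crossNorm, pow_mul, Real.sq_sqrt (sum_nonneg fun _ _ => sq_nonneg (‖_‖ : ℝ))]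
  refine vector.trans (mul_le_mul_of_nonneg_left (mean_pow_mono
    (fun u => sum_nonneg fun _ _ => sq_nonneg _) (fun u => ?_) m) hK)
  have max0 := maxLowPass_nonneg (b := fun j => 2 * b j) (f := f * f) (u := u) hJ
  calc ∑ j ∈ J, ‖ev u (lowPass (b j) f * (lowPass (2 * b j) f - lowPass (b j) f))‖ ^ 2
      ≤ ∑ j ∈ J, maxLowPass hJ b f u ^ 2 * ‖ev u (lowPass (2 * b j) f - lowPass (b j) f)‖ ^ 2 := by
        refine sum_le_sum fun j hj => ?_
        rw [map_mul, norm_mul, mul_pow]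
        gcongr
        exact norm_ev_lowPass_le_maxLowPass hJ hj
    _ = maxLowPass hJ b f u ^ 2 * blockSq J b f u := (mul_sum ..).symm
    _ ≤ maxLowPass hJ b f u ^ 2 * diagSq hJ b f u := by
        rw [diagSq]; gcongr; linarith

lemma mean_diagSq_pow_le {C₁ C₂ : ℝ} (hJ : J.Nonempty) (hb : IsDyadic J b θ)
    (hf : SpecIn (Set.Ici 1) f) (max : MaximalBound m C₁) (block : BlockBound (2 * m) C₂) :
    mean (fun u => diagSq hJ b f u ^ (2 * m)) ≤
      2 ^ (2 * m) * (C₁ + C₂) * mean (fun u => ‖ev u f‖ ^ (2 * (2 * m))) := by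
  have square : SpecIn (Set.Ici 1) (f * f) := hf.mul hf fun a ha b hb => by
    simp only [Set.mem_Ici] at *; omega
  have norm_square (u : ℝ) : ‖ev u (f * f)‖ ^ (2 * m) = ‖ev u f‖ ^ (2 * (2 * m)) := by
    rw [map_mul, norm_mul, ← pow_two, ← pow_mul]
  calc mean (fun u => diagSq hJ b f u ^ (2 * m))
      ≤ mean (fun u => 2 ^ (2 * m) * (maxLowPass hJ (fun j => 2 * b j) (f * f) u ^ (2 * m) +
          blockSq J b f u ^ (2 * m))) :=
        mean_mono fun u => add_pow_le_two_pow_mul (maxLowPass_nonneg hJ) (blockSq_nonneg u) _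
    _ ≤ 2 ^ (2 * m) * (C₁ * mean (fun u => ‖ev u f‖ ^ (2 * (2 * m))) +
          C₂ * mean (fun u => ‖ev u f‖ ^ (2 * (2 * m)))) := by
        rw [mean_const_mul, mean_add]
        gcongr
        · simpa only [norm_square] using max hJ hb.two_mul square
        · exact block hb hf
    _ = _ := by ring

lemma MaximalBound.two_mul {C₁ C₂ K : ℝ} (max : MaximalBound m C₁) (hK : 0 ≤ K)
    (riesz : VectorRiesz m K) (block : BlockBound (2 * m) C₂) :
    MaximalBound (2 * m)
      ((2 * 4 ^ m + (16 ^ m * K) ^ 2) * (2 ^ (2 * m) * (C₁ + C₂))) := by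
  intro J hJ b θ f hb hf
  have good := mean_pow_le_of_le_add_of_mean_pow_le (A := fun u => maxLowPass hJ b f u ^ 2)
    (by fun_prop) (continuous_diagSq hJ) continuous_crossNorm (fun u => sq_nonneg _)
    (fun u => add_nonneg (maxLowPass_nonneg hJ) (blockSq_nonneg u)) (fun u => Real.sqrt_nonneg _)
    (maxLowPass_sq_le hJ hb hf) (riesz.mean_crossNorm_pow_le hK hJ)
  simp only [← pow_mul] at good
  refine good.trans ?_
  rw [mul_assoc]
  exact mul_le_mul_of_nonneg_left (mean_diagSq_pow_le hJ hb hf max block) (by positivity)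

lemma exists_maximalBound (k : ℕ) : ∃ C, 0 ≤ C ∧ MaximalBound (2 ^ k) C := by
  induction k with
  | zero => exact ⟨2208, by norm_num, maximalBound_one⟩
  | succ k ih =>
    obtain ⟨C₁, hC₁, max⟩ := ih
    obtain ⟨K, hK, riesz⟩ := exists_vectorRiesz k
    obtain ⟨C₂, hC₂, block⟩ := exists_blockBound (k + 1)
    rw [pow_succ'] at block ⊢
    exact ⟨_, by positivity, max.two_mul hK riesz block⟩

end MaximalDoubling

section Bands

variable {J : Finset ℕ} {a b : ℕ → ℤ} {θ η : ℝ} {f : 𝓛} {m : ℕ} {s t : ℤ}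

/-- The projection onto the frequency band `[-s, t]`. -/
noncomputable def band (s t : ℤ) : 𝓛 →ₗ[ℂ] 𝓛 := mult fun n => if -s ≤ n ∧ n ≤ t then 1 else 0

/-- The maximal band projection `max_{j ∈ J} |band (a j) (b j) f|`. -/
noncomputable def maxBand (hJ : J.Nonempty) (a b : ℕ → ℤ) (f : 𝓛) (u : ℝ) : ℝ :=
  J.sup' hJ fun j => ‖ev u (band (a j) (b j) f)‖

/-- The two-sided dyadic maximal inequality in `L^{2m}`, with constant `C`. -/
def BandBound (m : ℕ) (C : ℝ) : Prop :=
  ∀ ⦃J : Finset ℕ⦄ (hJ : J.Nonempty) ⦃a b : ℕ → ℤ⦄ ⦃θ η : ℝ⦄ (f : 𝓛),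
    IsDyadic J a θ → IsDyadic J b η →
      mean (fun u => maxBand hJ a b f u ^ (2 * m)) ≤ C * mean (fun u => ‖ev u f‖ ^ (2 * m))

@[fun_prop]
lemma continuous_maxBand (hJ : J.Nonempty) : Continuous (maxBand hJ a b f) :=
  Continuous.finset_sup'_apply hJ fun _ _ => by fun_prop

lemma maxBand_nonneg (hJ : J.Nonempty) (u : ℝ) : 0 ≤ maxBand hJ a b f u :=
  (norm_nonneg _).trans (le_sup' (fun j => ‖ev u (band (a j) (b j) f)‖) hJ.choose_spec)

lemma band_eq (hs : 0 ≤ s) (ht : 0 ≤ t) (f : 𝓛) :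
    band s t f = lowPass t (f - lowPass 0 f) +
      ((lowPass 0 f - lowPass (-1) f) + adj (lowPass s (adj (lowPass (-1) f)))) := by
  ext n
  simp only [band, AddMonoidAlgebra.coeff_add, AddMonoidAlgebra.coeff_sub, Finsupp.add_apply,
    Finsupp.sub_apply, coeff_mult, coeff_lowPass, coeff_adj, neg_neg]
  rcases lt_trichotomy n 0 with hn | rfl | hn
  · have h0 : n ≤ 0 := hn.le
    have h1 : n ≤ -1 := by omega
    have ht : n ≤ t := by omega
    by_cases h : -s ≤ n
    · simp [h, h0, h1, ht, neg_le.1 h]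
    · simp [h, h0, h1, show ¬ -n ≤ s by omega]
  · simp [hs, ht]
  · have h0 : ¬ n ≤ 0 := by omega
    have h1 : ¬ n ≤ -1 := by omega
    have hs : -s ≤ n := by omega
    simp [h0, h1, hs]

lemma maxBand_le (hJ : J.Nonempty) (ha : IsDyadic J a θ) (hb : IsDyadic J b η) (u : ℝ) :
    maxBand hJ a b f u ≤ maxLowPass hJ b (f - lowPass 0 f) u +
      (‖ev u (lowPass 0 f - lowPass (-1) f)‖ + maxLowPass hJ a (adj (lowPass (-1) f)) u) := by
  refine sup'_le hJ _ fun j hj => ?_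
  rw [band_eq (by linarith [ha.one_le j hj]) (by linarith [hb.one_le j hj]), map_add, map_add,
    ev_adj]
  refine (norm_add_le _ _).trans (add_le_add (norm_ev_lowPass_le_maxLowPass hJ hj)
    ((norm_add_le _ _).trans (add_le_add_right ?_ _)))
  rw [RCLike.norm_conj]
  exact norm_ev_lowPass_le_maxLowPass hJ hj

lemma VectorRiesz.mean_lowPass_le {K : ℝ} (riesz : VectorRiesz m K) (t : ℤ) (f : 𝓛) :
    mean (fun u => ‖ev u (lowPass t f)‖ ^ (2 * m)) ≤ K * mean (fun u => ‖ev u f‖ ^ (2 * m)) := by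
  simpa only [univ_unique, sum_singleton, one_mul, ← pow_mul] using
    riesz (univ : Finset Unit) (fun _ => 1) (fun _ => t) (fun _ => f) fun _ _ => zero_le_one

lemma mean_norm_ev_sub_pow_le (n : ℕ) (f g : 𝓛) :
    mean (fun u => ‖ev u (f - g)‖ ^ n) ≤
      2 ^ n * (mean (fun u => ‖ev u f‖ ^ n) + mean (fun u => ‖ev u g‖ ^ n)) := by
  rw [← mean_add, ← mean_const_mul]
  refine mean_mono fun u => ?_
  rw [map_sub]
  exact (pow_le_pow_left₀ (norm_nonneg _) (norm_sub_le _ _) n).trans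
    (add_pow_le_two_pow_mul (norm_nonneg _) (norm_nonneg _) n)

lemma mean_pow_le_of_le_add_add {A X Y Z : ℝ → ℝ} (n : ℕ) (hA : Continuous A) (hX : Continuous X)
    (hY : Continuous Y) (hZ : Continuous Z) (A0 : ∀ u, 0 ≤ A u) (X0 : ∀ u, 0 ≤ X u)
    (Y0 : ∀ u, 0 ≤ Y u) (Z0 : ∀ u, 0 ≤ Z u) (h : ∀ u, A u ≤ X u + (Y u + Z u)) :
    mean (fun u => A u ^ n) ≤ 2 ^ n * (mean (fun u => X u ^ n) +
      2 ^ n * (mean (fun u => Y u ^ n) + mean (fun u => Z u ^ n))) := by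
  rw [← mean_add, ← mean_const_mul, ← mean_add, ← mean_const_mul]
  refine mean_mono fun u => (pow_le_pow_left₀ (A0 u) (h u) n).trans
    ((add_pow_le_two_pow_mul (X0 u) (add_nonneg (Y0 u) (Z0 u)) n).trans ?_)
  gcongr
  exact add_pow_le_two_pow_mul (Y0 u) (Z0 u) n

lemma MaximalBound.bandBound {C K : ℝ} (hC : 0 ≤ C) (max : MaximalBound m C)
    (riesz : VectorRiesz m K) :
    BandBound m (4 ^ m * (C * (4 ^ m * (1 + K)) + 4 ^ m * (4 ^ m * (K + K) + C * K))) := by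
  intro J hJ a b θ η f ha hb
  set T := mean fun u => ‖ev u f‖ ^ (2 * m)
  have two_pow : (2 : ℝ) ^ (2 * m) = 4 ^ m := by rw [pow_mul]; norm_num
  have low (t : ℤ) : mean (fun u => ‖ev u (lowPass t f)‖ ^ (2 * m)) ≤ K * T :=
    riesz.mean_lowPass_le t f
  have pos : mean (fun u => maxLowPass hJ b (f - lowPass 0 f) u ^ (2 * m)) ≤
      C * (4 ^ m * (T + K * T)) := by
    refine (max hJ hb fun n hn => specIn_sub_lowPass 0 f n hn).trans ?_
    gcongr
    refine (mean_norm_ev_sub_pow_le _ _ _).trans ?_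
    rw [two_pow]
    gcongr
    exact low 0
  have zero : mean (fun u => ‖ev u (lowPass 0 f - lowPass (-1) f)‖ ^ (2 * m)) ≤
      4 ^ m * (K * T + K * T) := by
    refine (mean_norm_ev_sub_pow_le _ _ _).trans ?_
    rw [two_pow]
    gcongr
    exacts [low 0, low (-1)]
  have neg : mean (fun u => maxLowPass hJ a (adj (lowPass (-1) f)) u ^ (2 * m)) ≤ C * (K * T) := by
    refine (max hJ ha fun n hn => ?_).trans ?_
    · have : -n ≤ -1 := (specIn_lowPass (-1) f).adj n hn
      simp only [Set.mem_Ici]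
      omega
    · simp only [ev_adj, RCLike.norm_conj]
      exact mul_le_mul_of_nonneg_left (low (-1)) hC
  calc mean (fun u => maxBand hJ a b f u ^ (2 * m))
      ≤ 2 ^ (2 * m) * (mean (fun u => maxLowPass hJ b (f - lowPass 0 f) u ^ (2 * m)) +
          2 ^ (2 * m) * (mean (fun u => ‖ev u (lowPass 0 f - lowPass (-1) f)‖ ^ (2 * m)) +
            mean (fun u => maxLowPass hJ a (adj (lowPass (-1) f)) u ^ (2 * m)))) :=
        mean_pow_le_of_le_add_add _ (by fun_prop) (by fun_prop) (by fun_prop) (by fun_prop)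
          (maxBand_nonneg hJ) (fun _ => maxLowPass_nonneg hJ) (fun _ => norm_nonneg _)
          (fun _ => maxLowPass_nonneg hJ) (maxBand_le hJ ha hb)
    _ ≤ 4 ^ m * (C * (4 ^ m * (T + K * T)) + 4 ^ m * (4 ^ m * (K * T + K * T) + C * (K * T))) := by
        rw [two_pow]; gcongr
    _ = _ := by ring

lemma exists_bandBound (k : ℕ) : ∃ C, 0 ≤ C ∧ BandBound (2 ^ k) C := by
  obtain ⟨C, hC, max⟩ := exists_maximalBound k
  obtain ⟨K, hK, riesz⟩ := exists_vectorRiesz k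
  exact ⟨_, by positivity, max.bandBound hC riesz⟩

end Bands

section AveragingKernel

variable {K : ℕ} {u : ℝ}

/-- The average of the first `K` exponentials `exp (i l u)`. It localizes a lattice sum of
mesh `δ / K` to a window of length about `1 / δ`. -/
noncomputable def avgKernel (K : ℕ) (u : ℝ) : ℂ :=
  (K : ℂ)⁻¹ * ∑ l ∈ range K, (Circle.exp (l * u) : ℂ)

lemma norm_avgKernel_le_one (K : ℕ) (u : ℝ) : ‖avgKernel K u‖ ≤ 1 := by
  rw [avgKernel, norm_mul, norm_inv, Complex.norm_natCast]
  refine inv_mul_le_one_of_le₀ ((norm_sum_le _ _).trans_eq ?_) K.cast_nonneg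
  simp only [Circle.norm_coe, sum_const, card_range, nsmul_eq_mul, mul_one]

lemma half_le_norm_avgKernel (hK : 0 < K) (hu : K * |u| ≤ 1 / 2) : 1 / 2 ≤ ‖avgKernel K u‖ := by
  have K0 : (K : ℂ) ≠ 0 := mod_cast hK.ne'
  have near : ‖avgKernel K u - 1‖ ≤ 1 / 2 := by
    have : avgKernel K u - 1 = (K : ℂ)⁻¹ * ∑ l ∈ range K, ((Circle.exp (l * u) : ℂ) - 1) := by
      rw [sum_sub_distrib, sum_const, card_range, nsmul_one, mul_sub, inv_mul_cancel₀ K0, avgKernel]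
    rw [this, norm_mul, norm_inv, Complex.norm_natCast,
      inv_mul_le_iff₀ (mod_cast hK : (0 : ℝ) < K)]
    refine (norm_sum_le_of_le _ fun l hl => ?_).trans_eq
      (by rw [sum_const, card_range, nsmul_eq_mul])
    rw [Circle.coe_exp, mul_comm _ Complex.I]
    refine Real.norm_exp_I_mul_ofReal_sub_one_le.trans (le_trans ?_ hu)
    rw [Real.norm_eq_abs, abs_mul, Nat.abs_cast]
    gcongr
    exact (mem_range.1 hl).le
  have := norm_sub_norm_le 1 (avgKernel K u)
  rw [norm_sub_rev, norm_one] at this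
  linarith

lemma norm_avgKernel_mul_le (K : ℕ) (hu : |u| ≤ Real.pi) :
    ‖avgKernel K u‖ * (K * |u|) ≤ Real.pi := by
  rcases K.eq_zero_or_pos with rfl | hK
  · simp [Real.pi_pos.le]
  have K0 : (K : ℂ) ≠ 0 := mod_cast hK.ne'
  have geometric : (Circle.exp u - 1 : ℂ) * (avgKernel K u * K) = Circle.exp u ^ K - 1 := by
    rw [← mul_geom_sum, avgKernel, mul_right_comm _ _ (K : ℂ), inv_mul_cancel₀ K0, one_mul]
    simp only [← nsmul_eq_mul, Circle.exp_nsmul, Circle.coe_pow]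
  have upper : ‖(Circle.exp u - 1 : ℂ)‖ * (‖avgKernel K u‖ * K) ≤ 2 := by
    rw [← Complex.norm_natCast, ← norm_mul, ← norm_mul, geometric]
    refine (norm_sub_le _ _).trans_eq ?_
    rw [norm_pow, Circle.norm_coe, one_pow, norm_one]
    norm_num
  have lower : 2 / Real.pi * |u| ≤ ‖(Circle.exp u - 1 : ℂ)‖ := by
    have jordan := Real.mul_abs_le_abs_sin (x := u / 2) (by rw [abs_div, abs_two]; linarith)
    rw [Circle.coe_exp, mul_comm _ Complex.I, Complex.norm_exp_I_mul_ofReal_sub_one,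
      Real.norm_eq_abs, abs_mul, abs_two]
    rw [abs_div, abs_two] at jordan
    linarith
  have := (mul_le_mul_of_nonneg_right lower (by positivity)).trans upper
  rw [mul_assoc, div_mul_eq_mul_div, div_le_iff₀ Real.pi_pos] at this
  linarith

end AveragingKernel

section ExponentialSums

variable {ι : Type*} {s : Finset ι} {c : ι → ℂ} {Λ ν : ι → ℝ} {J : Finset ℕ} {x : ℝ}

/-- The exponential sum with coefficients `c n` and frequencies `ν n`, `n ∈ s`. -/
noncomputable def expSum (s : Finset ι) (c : ι → ℂ) (ν : ι → ℝ) (x : ℝ) : ℂ :=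
  ∑ n ∈ s, c n * Circle.exp (ν n * x)

/-- The maximal dyadic partial sum over the cutoffs `|Λ n| ≤ 2^j`, `j ∈ J`. The frequencies `ν`
of the exponentials are kept apart from `Λ` so that they can be perturbed. -/
noncomputable def maxDyadicSum (hJ : J.Nonempty) (s : Finset ι) (c : ι → ℂ) (Λ ν : ι → ℝ)
    (x : ℝ) : ℝ :=
  J.sup' hJ fun j => ‖expSum {n ∈ s | |Λ n| ≤ 2 ^ j} c ν x‖

@[fun_prop]
lemma continuous_expSum {X : Type*} [TopologicalSpace X] {φ : X → ι → ℝ} {ψ : X → ℝ}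
    (hφ : Continuous φ) (hψ : Continuous ψ) : Continuous fun t => expSum s c (φ t) (ψ t) := by
  unfold expSum; fun_prop

@[fun_prop]
lemma continuous_maxDyadicSum {X : Type*} [TopologicalSpace X] {φ : X → ι → ℝ} {ψ : X → ℝ}
    (hJ : J.Nonempty) (hφ : Continuous φ) (hψ : Continuous ψ) :
    Continuous fun t => maxDyadicSum hJ s c Λ (φ t) (ψ t) :=
  Continuous.finset_sup'_apply hJ fun _ _ => by fun_prop

lemma norm_expSum_le : ‖expSum s c ν x‖ ≤ ∑ n ∈ s, ‖c n‖ :=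
  norm_sum_le_of_le _ fun n _ => by rw [norm_mul, Circle.norm_coe, mul_one]

lemma maxDyadicSum_nonneg (hJ : J.Nonempty) : 0 ≤ maxDyadicSum hJ s c Λ ν x :=
  (norm_nonneg _).trans
    (le_sup' (fun j => ‖expSum {n ∈ s | |Λ n| ≤ 2 ^ j} c ν x‖) hJ.choose_spec)

lemma expSum_add (y : ℝ) :
    expSum s c ν (x + y) = expSum s (fun n => c n * Circle.exp (ν n * y)) ν x := by
  simp only [expSum, mul_add, Circle.exp_add, Circle.coe_mul]
  exact sum_congr rfl fun n _ => by ring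

lemma maxDyadicSum_add (hJ : J.Nonempty) (y : ℝ) : maxDyadicSum hJ s c Λ ν (x + y) =
    maxDyadicSum hJ s (fun n => c n * Circle.exp (ν n * y)) Λ ν x := by
  simp only [maxDyadicSum, expSum_add y]

/-- The Laurent polynomial that spreads each term of an exponential sum with frequencies
`β * v n` over `K` consecutive integer frequencies. -/
noncomputable def latticePoly (s : Finset ι) (c : ι → ℂ) (v : ι → ℤ) (K : ℕ) : 𝓛 :=
  ∑ n ∈ s, ∑ l ∈ range K, AddMonoidAlgebra.single (v n + l) (c n * (K : ℂ)⁻¹)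

lemma ev_mult_latticePoly {v : ι → ℤ} {K : ℕ} {φ : ℤ → ℂ} {p : ι → Prop} [DecidablePred p]
    (h : ∀ n ∈ s, ∀ l < K, φ (v n + l) = if p n then 1 else 0) (β : ℝ) :
    ev (β * x) (mult φ (latticePoly s c v K)) =
      expSum {n ∈ s | p n} c (fun n => β * v n) x * avgKernel K (β * x) := by
  rw [latticePoly, expSum, sum_filter, sum_mul, map_sum, map_sum]
  refine sum_congr rfl fun n hn => ?_
  simp only [map_sum, mult_single, ev_single]
  rw [avgKernel, mul_sum, mul_sum]
  refine sum_congr rfl fun l hl => ?_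
  rw [h n hn l (mem_range.1 hl)]
  split_ifs
  · rw [show ((v n + l : ℤ) : ℝ) * (β * x) = β * v n * x + l * (β * x) by push_cast; ring,
      Circle.exp_add, Circle.coe_mul]
    ring
  · simp only [zero_mul]

lemma ev_latticePoly {v : ι → ℤ} {K : ℕ} (β : ℝ) : ev (β * x) (latticePoly s c v K) =
    expSum s c (fun n => β * v n) x * avgKernel K (β * x) := by
  rw [latticePoly, expSum, sum_mul, map_sum]
  refine sum_congr rfl fun n _ => ?_
  rw [avgKernel, mul_sum, mul_sum, map_sum]
  refine sum_congr rfl fun l _ => ?_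
  rw [ev_single]
  rw [show ((v n + l : ℤ) : ℝ) * (β * x) = β * v n * x + l * (β * x) by push_cast; ring,
    Circle.exp_add, Circle.coe_mul]
  ring

end ExponentialSums

section Cutoffs

variable {ι : Type*} {s : Finset ι} {Λ : ι → ℝ} {δ β T : ℝ}

lemma exists_separating_level (T : ℝ)
    (hsep : ∀ n ∈ s, ∀ n' ∈ s, Λ n < Λ n' → 4 * δ ≤ Λ n' - Λ n) (hδ : 0 < δ) :
    ∃ r, |r - T| ≤ δ ∧ ∀ n ∈ s, (Λ n ≤ T → Λ n ≤ r - δ) ∧ (T < Λ n → r + δ ≤ Λ n) := by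
  by_cases crowded : ∃ n ∈ s, T < Λ n ∧ Λ n ≤ T + 2 * δ
  · obtain ⟨n₀, hn₀, above, near⟩ := crowded
    refine ⟨T - δ, by rw [sub_sub_cancel_left, abs_neg, abs_of_pos hδ], fun n hn =>
      ⟨fun h => ?_, fun h => by linarith⟩⟩
    linarith [hsep n hn n₀ hn₀ (h.trans_lt above)]
  · push Not at crowded
    refine ⟨T + δ, by rw [add_sub_cancel_left, abs_of_pos hδ], fun n hn =>
      ⟨fun h => by linarith, fun h => ?_⟩⟩
    linarith [crowded n hn h]

lemma exists_lattice_cutoff (hδ : 0 < δ) (hδ₁ : δ ≤ 1 / 8) (hβ : 0 < β) (hβδ : β ≤ δ) (hT : 1 ≤ T)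
    (hsep : ∀ n ∈ s, ∀ n' ∈ s, Λ n < Λ n' → 4 * δ ≤ Λ n' - Λ n) :
    ∃ b : ℤ, (1 ≤ b ∧ 1 / (2 * β) * T ≤ b ∧ b ≤ 4 * (1 / (2 * β) * T)) ∧
      ∀ n ∈ s, ∀ v : ℤ, |β * v - Λ n| < δ → (v ≤ b ↔ Λ n ≤ T) := by
  obtain ⟨r, near, separates⟩ := exists_separating_level T hsep hδ
  rw [abs_le] at near
  have lower : 1 / (2 * β) * T < ⌊r / β⌋ := by
    refine lt_of_le_of_lt ?_ (Int.sub_one_lt_floor _)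
    rw [div_sub_one hβ.ne', le_div_iff₀ hβ, show 1 / (2 * β) * T * β = T / 2 by field_simp]
    linarith
  have upper : (⌊r / β⌋ : ℝ) ≤ 4 * (1 / (2 * β) * T) := by
    refine (Int.floor_le _).trans ?_
    rw [div_le_iff₀ hβ, show 4 * (1 / (2 * β) * T) * β = 2 * T by field_simp; norm_num]
    linarith
  have pos : (0 : ℝ) < ⌊r / β⌋ := lt_trans (by positivity) lower
  refine ⟨⌊r / β⌋, ⟨Int.add_one_le_of_lt (mod_cast pos), lower.le, upper⟩, fun n hn v hv => ?_⟩
  rw [Int.le_floor, le_div_iff₀ hβ, mul_comm]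
  rw [abs_lt] at hv
  refine ⟨fun h => ?_, fun h => by linarith [(separates n hn).1 h]⟩
  by_contra! above
  linarith [(separates n hn).2 above]

lemma abs_lattice_sub_lt {K : ℕ} (hK : 0 < K) (hδ : 0 < δ) (x : ℝ) {l : ℕ} (hl : l < K) :
    |δ / K * ((⌊x / (δ / K)⌋ + l : ℤ) : ℝ) - x| < δ := by
  have K0 : (0 : ℝ) < K := mod_cast hK
  have β0 : 0 < δ / K := by positivity
  have above := Int.lt_floor_add_one (x / (δ / K))
  have below := Int.floor_le (x / (δ / K))
  rw [div_lt_iff₀ β0] at above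
  rw [le_div_iff₀ β0] at below
  have step : δ / K * (l + 1) ≤ δ := by
    rw [div_mul_eq_mul_div, div_le_iff₀ K0]
    gcongr
    exact_mod_cast hl
  have : 0 ≤ δ / K * l := by positivity
  push_cast
  rw [abs_lt]
  constructor <;> linarith

lemma exists_isDyadic_cutoff {K : ℕ} (hδ : 0 < δ) (hδ₁ : δ ≤ 1 / 8) (hK : 0 < K) (J : Finset ℕ)
    (hsep : ∀ n ∈ s, ∀ n' ∈ s, Λ n < Λ n' → 4 * δ ≤ Λ n' - Λ n) :
    ∃ b : ℕ → ℤ, IsDyadic J b (1 / (2 * (δ / K))) ∧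
      ∀ j, ∀ n ∈ s, ∀ v : ℤ, |δ / K * v - Λ n| < δ → (v ≤ b j ↔ Λ n ≤ 2 ^ j) := by
  have K1 : (1 : ℝ) ≤ K := mod_cast hK
  choose b hb cut using fun j : ℕ => exists_lattice_cutoff (β := δ / K) hδ hδ₁
    (by positivity) (div_le_self hδ.le K1) (one_le_pow₀ one_le_two : (1 : ℝ) ≤ 2 ^ j) hsep
  exact ⟨b, ⟨by positivity, fun j _ => (hb j).1, fun j _ => (hb j).2.1, fun j _ => (hb j).2.2⟩, cut⟩

lemma exists_isDyadic_band {K : ℕ} (hδ : 0 < δ) (hδ₁ : δ ≤ 1 / 8) (hK : 0 < K) (J : Finset ℕ)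
    (hsep : ∀ n ∈ s, ∀ n' ∈ s, Λ n < Λ n' → 4 * δ ≤ Λ n' - Λ n) :
    ∃ a b : ℕ → ℤ, IsDyadic J a (1 / (2 * (δ / K))) ∧ IsDyadic J b (1 / (2 * (δ / K))) ∧
      ∀ j, ∀ n ∈ s, ∀ l < K, (-a j ≤ ⌊Λ n / (δ / K)⌋ + l ∧ ⌊Λ n / (δ / K)⌋ + l ≤ b j) ↔
        |Λ n| ≤ 2 ^ j := by
  obtain ⟨b, hb, cutb⟩ := exists_isDyadic_cutoff hδ hδ₁ hK J hsep
  obtain ⟨a, ha, cuta⟩ := exists_isDyadic_cutoff (Λ := fun n => -Λ n) hδ hδ₁ hK J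
    fun n hn n' hn' h => by linarith [hsep n' hn' n hn (neg_lt_neg_iff.1 h)]
  refine ⟨a, b, ha, hb, fun j n hn l hl => ?_⟩
  have near := abs_lattice_sub_lt hK hδ (Λ n) hl
  rw [abs_le, ← cutb j n hn _ near, neg_le (a := a j), neg_le (b := Λ n),
    ← cuta j n hn (-(⌊Λ n / (δ / K)⌋ + l))]
  rw [← abs_neg] at near
  convert near using 2
  push_cast
  ring

end Cutoffs

section Transference

variable {G H : ℝ → ℝ} {β δ x : ℝ} {K m : ℕ}

lemma integral_comp_mul_le_mean (hG : Continuous G) (G0 : ∀ u, 0 ≤ G u) (hβ : 0 < β)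
    (hβπ : β ≤ Real.pi) : ∫ x in (0 : ℝ)..1, G (β * x) ≤ 2 * Real.pi / β * mean G := by
  have dilate := intervalIntegral.mul_integral_comp_mul_left (a := 0) (b := 1) (f := G) β
  rw [mul_zero, mul_one] at dilate
  rw [mean, div_mul_eq_mul_div, mul_inv_cancel_left₀ (by positivity), le_div_iff₀ hβ, mul_comm,
    dilate]
  exact intervalIntegral.integral_mono_interval (by linarith) hβ.le hβπ
    (Filter.Eventually.of_forall G0) (hG.intervalIntegrable _ _)

lemma mean_le_integral_of_comp_mul_le (hG : Continuous G) (hH : MeasureTheory.Integrable H)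
    (H0 : ∀ x, 0 ≤ H x) (hβ : 0 < β) (h : ∀ x, |β * x| ≤ Real.pi → G (β * x) ≤ H x) :
    2 * Real.pi / β * mean G ≤ ∫ x, H x := by
  have dilate := intervalIntegral.mul_integral_comp_mul_left (a := -(Real.pi / β))
    (b := Real.pi / β) (f := G) β
  have hπ : 0 < Real.pi / β := by positivity
  rw [mul_neg, mul_div_cancel₀ _ hβ.ne'] at dilate
  rw [mean, div_mul_eq_mul_div, mul_inv_cancel_left₀ (by positivity), ← dilate,
    mul_div_cancel_left₀ _ hβ.ne']
  calc ∫ x in -(Real.pi / β)..Real.pi / β, G (β * x)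
      ≤ ∫ x in -(Real.pi / β)..Real.pi / β, H x := by
        refine intervalIntegral.integral_mono_on (by linarith)
          (Continuous.intervalIntegrable (by fun_prop) _ _) hH.intervalIntegrable fun x hx => h x ?_
        rw [abs_mul, abs_of_pos hβ, mul_comm, ← le_div_iff₀ hβ]
        exact abs_le.2 hx
    _ ≤ ∫ x, H x := by
        rw [intervalIntegral.integral_of_le (by linarith)]
        exact MeasureTheory.setIntegral_le_integral hH (Filter.Eventually.of_forall H0)

lemma norm_avgKernel_pow_le (hm : 1 ≤ m) (hδ : 0 < δ) (hK : 0 < K) (hx : |δ / K * x| ≤ Real.pi) :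
    ‖avgKernel K (δ / K * x)‖ ^ (2 * m) ≤ (1 + Real.pi ^ 2 / δ ^ 2) * (1 + x ^ 2)⁻¹ := by
  set q := ‖avgKernel K (δ / K * x)‖
  have q0 : 0 ≤ q := norm_nonneg _
  have q1 : q ≤ 1 := norm_avgKernel_le_one _ _
  have K0 : (0 : ℝ) < K := mod_cast hK
  have decay : q * (δ * |x|) ≤ Real.pi := by
    have := norm_avgKernel_mul_le K hx
    rwa [abs_mul, abs_of_pos (by positivity : 0 < δ / K), ← mul_assoc (K : ℝ),
      mul_div_cancel₀ _ K0.ne'] at this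
  have decay_sq : q ^ 2 * x ^ 2 ≤ Real.pi ^ 2 / δ ^ 2 := by
    rw [le_div_iff₀ (by positivity)]
    calc q ^ 2 * x ^ 2 * δ ^ 2 = (q * (δ * |x|)) ^ 2 := by rw [mul_pow, mul_pow, sq_abs]; ring
      _ ≤ Real.pi ^ 2 := by gcongr
  rw [← div_eq_mul_inv, le_div_iff₀ (by positivity)]
  calc q ^ (2 * m) * (1 + x ^ 2) ≤ q ^ 2 * (1 + x ^ 2) :=
        mul_le_mul_of_nonneg_right (pow_le_pow_of_le_one q0 q1 (by omega)) (by positivity)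
    _ ≤ 1 + Real.pi ^ 2 / δ ^ 2 := by
        rw [mul_add, mul_one]
        exact add_le_add (pow_le_one₀ q0 q1) decay_sq

variable {ι : Type*} {s : Finset ι} {c : ι → ℂ} {Λ ν : ι → ℝ} {v : ι → ℤ} {J : Finset ℕ}
  {a b : ℕ → ℤ} {C : ℝ}

lemma maxDyadicSum_le_two_mul_maxBand (hJ : J.Nonempty) (hK : 0 < K)
    (hcut : ∀ j, ∀ n ∈ s, ∀ l < K, (-a j ≤ v n + l ∧ v n + l ≤ b j) ↔ |Λ n| ≤ 2 ^ j)
    (hx : K * |β * x| ≤ 1 / 2) : maxDyadicSum hJ s c Λ (fun n => β * v n) x ≤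
      2 * maxBand hJ a b (latticePoly s c v K) (β * x) := by
  refine sup'_le hJ _ fun j hj => ?_
  have factor := ev_mult_latticePoly (c := c) (x := x) (φ := fun n => if -a j ≤ n ∧ n ≤ b j then 1
    else 0) (p := fun n => |Λ n| ≤ 2 ^ j) (fun n hn l hl => if_congr (hcut j n hn l hl) rfl rfl) β
  have le_max := le_sup' (fun j => ‖ev (β * x) (band (a j) (b j) (latticePoly s c v K))‖) hj
  rw [band, factor, norm_mul] at le_max
  have := half_le_norm_avgKernel hK hx
  rw [maxBand]
  nlinarith [norm_nonneg (expSum {n ∈ s | |Λ n| ≤ 2 ^ j} c (fun n => β * v n) x)]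

lemma integrable_pow_mul_inv_one_add_sq (p : ℕ) : MeasureTheory.Integrable fun x : ℝ =>
    ‖expSum s c ν x‖ ^ p * (1 + x ^ 2)⁻¹ := by
  refine integrable_inv_one_add_sq.bdd_mul (c := (∑ n ∈ s, ‖c n‖) ^ p)
    (Continuous.aestronglyMeasurable (by fun_prop)) (Filter.Eventually.of_forall fun x => ?_)
  rw [norm_pow, norm_norm]
  exact pow_le_pow_left₀ (norm_nonneg _) norm_expSum_le p

lemma integral_maxDyadicSum_pow_le_mean_maxBand (hδ : 0 < δ) (hδ₁ : δ ≤ 1 / 8) (hK : 0 < K)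
    (hJ : J.Nonempty)
    (hcut : ∀ j, ∀ n ∈ s, ∀ l < K, (-a j ≤ v n + l ∧ v n + l ≤ b j) ↔ |Λ n| ≤ 2 ^ j) :
    ∫ x in (0 : ℝ)..1, maxDyadicSum hJ s c Λ (fun n => δ / K * v n) x ^ (2 * m) ≤
      4 ^ m * (2 * Real.pi / (δ / K) *
        mean fun u => maxBand hJ a b (latticePoly s c v K) u ^ (2 * m)) := by
  have K1 : (1 : ℝ) ≤ K := mod_cast hK
  have β0 : 0 < δ / K := by positivity
  have pointwise (x : ℝ) (hx : x ∈ Set.Icc (0 : ℝ) 1) :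
      maxDyadicSum hJ s c Λ (fun n => δ / K * v n) x ^ (2 * m) ≤
        4 ^ m * maxBand hJ a b (latticePoly s c v K) (δ / K * x) ^ (2 * m) := by
    refine (pow_le_pow_left₀ (maxDyadicSum_nonneg hJ)
      (maxDyadicSum_le_two_mul_maxBand hJ hK hcut ?_) _).trans_eq ?_
    · rw [abs_mul, abs_of_pos β0, abs_of_nonneg hx.1, ← mul_assoc,
        mul_div_cancel₀ _ (by positivity)]
      nlinarith [hx.1, hx.2]
    · rw [mul_pow, pow_mul 2, show (2 : ℝ) ^ 2 = 4 by norm_num]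
  refine (intervalIntegral.integral_mono_on zero_le_one
    (Continuous.intervalIntegrable (by fun_prop) _ _)
    (Continuous.intervalIntegrable (by fun_prop) _ _) pointwise).trans ?_
  rw [intervalIntegral.integral_const_mul]
  gcongr
  exact integral_comp_mul_le_mean (by fun_prop) (fun u => pow_nonneg (maxBand_nonneg hJ u) _)
    β0 (by linarith [Real.pi_gt_three, div_le_self hδ.le K1])

lemma mean_norm_ev_latticePoly_pow_le (hm : 1 ≤ m) (hδ : 0 < δ) (hK : 0 < K) :
    2 * Real.pi / (δ / K) * mean (fun u => ‖ev u (latticePoly s c v K)‖ ^ (2 * m)) ≤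
      (1 + Real.pi ^ 2 / δ ^ 2) *
        ∫ x, ‖expSum s c (fun n => δ / K * v n) x‖ ^ (2 * m) * (1 + x ^ 2)⁻¹ := by
  rw [← MeasureTheory.integral_const_mul]
  refine mean_le_integral_of_comp_mul_le (by fun_prop)
    ((integrable_pow_mul_inv_one_add_sq _).const_mul _) (fun x => by positivity) (by positivity)
    fun x hx => ?_
  rw [ev_latticePoly, norm_mul, mul_pow, mul_left_comm]
  gcongr
  exact norm_avgKernel_pow_le hm hδ hK hx

lemma BandBound.integral_maxDyadicSum_lattice_le (bound : BandBound m C) (hC : 0 ≤ C)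
    (hm : 1 ≤ m) (hδ : 0 < δ) (hδ₁ : δ ≤ 1 / 8) (hK : 0 < K) (hJ : J.Nonempty)
    (hsep : ∀ n ∈ s, ∀ n' ∈ s, Λ n < Λ n' → 4 * δ ≤ Λ n' - Λ n) :
    ∫ x in (0 : ℝ)..1,
        maxDyadicSum hJ s c Λ (fun n => δ / K * ⌊Λ n / (δ / K)⌋) x ^ (2 * m) ≤
      4 ^ m * C * (1 + Real.pi ^ 2 / δ ^ 2) *
        ∫ x, ‖expSum s c (fun n => δ / K * ⌊Λ n / (δ / K)⌋) x‖ ^ (2 * m) * (1 + x ^ 2)⁻¹ := by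
  obtain ⟨a, b, ha, hb, hcut⟩ := exists_isDyadic_band hδ hδ₁ hK J hsep
  set f := latticePoly s c (fun n => ⌊Λ n / (δ / K)⌋) K
  calc _ ≤ 4 ^ m * (2 * Real.pi / (δ / K) * mean fun u => maxBand hJ a b f u ^ (2 * m)) :=
        integral_maxDyadicSum_pow_le_mean_maxBand hδ hδ₁ hK hJ hcut
    _ ≤ 4 ^ m * (2 * Real.pi / (δ / K) * (C * mean fun u => ‖ev u f‖ ^ (2 * m))) := by
        gcongr
        exact bound hJ f ha hb
    _ = 4 ^ m * C * (2 * Real.pi / (δ / K) * mean fun u => ‖ev u f‖ ^ (2 * m)) := by ring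
    _ ≤ _ := by
        rw [mul_assoc _ (1 + _)]
        exact mul_le_mul_of_nonneg_left (mean_norm_ev_latticePoly_pow_le hm hδ hK) (by positivity)

end Transference

section Limit

open Filter Topology

lemma tendsto_mul_floor_div (x : ℝ) : Tendsto (fun β : ℝ => β * ⌊x / β⌋) (𝓝[>] 0) (𝓝 x) := by
  have lower : Tendsto (fun β : ℝ => x - β) (𝓝[>] 0) (𝓝 x) := by
    have : Continuous fun β : ℝ => x - β := by fun_prop
    simpa only [sub_zero] using (this.tendsto 0).mono_left nhdsWithin_le_nhds
  refine tendsto_of_tendsto_of_tendsto_of_le_of_le' lower tendsto_const_nhds ?_ ?_ <;>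
    filter_upwards [self_mem_nhdsWithin] with β hβ
  · have := Int.sub_one_lt_floor (x / β)
    rw [sub_lt_iff_lt_add, div_lt_iff₀ hβ] at this
    linarith
  · have := Int.floor_le (x / β)
    rw [le_div_iff₀ hβ] at this
    linarith

lemma tendsto_const_div_natCast_nhdsGT_zero {δ : ℝ} (hδ : 0 < δ) :
    Tendsto (fun K : ℕ => δ / K) atTop (𝓝[>] 0) :=
  tendsto_nhdsWithin_iff.2 ⟨tendsto_const_div_atTop_nhds_zero_nat δ,
    (eventually_gt_atTop 0).mono fun _ hK => div_pos hδ (mod_cast hK)⟩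

variable {ι : Type*} {s : Finset ι} {c : ι → ℂ} {Λ : ι → ℝ} {J : Finset ℕ} {C δ : ℝ} {m : ℕ}

lemma continuous_integral_norm_expSum_pow [Countable ι] (p : ℕ) :
    Continuous fun ν : ι → ℝ => ∫ x : ℝ, ‖expSum s c ν x‖ ^ p * (1 + x ^ 2)⁻¹ := by
  refine MeasureTheory.continuous_of_dominated
    (bound := fun x => (∑ n ∈ s, ‖c n‖) ^ p * (1 + x ^ 2)⁻¹)
    (fun ν => (integrable_pow_mul_inv_one_add_sq p).aestronglyMeasurable)
    (fun ν => .of_forall fun x => ?_) (integrable_inv_one_add_sq.const_mul _)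
    (.of_forall fun x => by fun_prop)
  rw [Real.norm_of_nonneg (by positivity)]
  gcongr
  exact norm_expSum_le

lemma BandBound.integral_maxDyadicSum_le [Countable ι] (bound : BandBound m C) (hC : 0 ≤ C)
    (hm : 1 ≤ m) (hδ : 0 < δ) (hδ₁ : δ ≤ 1 / 8) (hJ : J.Nonempty)
    (hsep : ∀ n ∈ s, ∀ n' ∈ s, Λ n < Λ n' → 4 * δ ≤ Λ n' - Λ n) :
    ∫ x in (0 : ℝ)..1, maxDyadicSum hJ s c Λ Λ x ^ (2 * m) ≤
      4 ^ m * C * (1 + Real.pi ^ 2 / δ ^ 2) *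
        ∫ x, ‖expSum s c Λ x‖ ^ (2 * m) * (1 + x ^ 2)⁻¹ := by
  have lattice : Tendsto (fun (K : ℕ) n => δ / K * ⌊Λ n / (δ / K)⌋) atTop (𝓝 Λ) :=
    tendsto_pi_nhds.2 fun n =>
      (tendsto_mul_floor_div (Λ n)).comp (tendsto_const_div_natCast_nhdsGT_zero hδ)
  have left := (intervalIntegral.continuous_parametric_intervalIntegral_of_continuous'
    (f := fun ν x => maxDyadicSum hJ s c Λ ν x ^ (2 * m)) (μ := MeasureTheory.volume)
    (by unfold Function.uncurry; fun_prop) 0 1).tendsto Λ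
  have right := (continuous_integral_norm_expSum_pow (s := s) (c := c) (2 * m)).tendsto Λ
  refine le_of_tendsto_of_tendsto (left.comp lattice) ((right.comp lattice).const_mul _) ?_
  filter_upwards [eventually_gt_atTop 0] with K hK
  exact bound.integral_maxDyadicSum_lattice_le hC hm hδ hδ₁ hK hJ hsep

end Limit

section Stepanov

variable {G : ℝ → ℝ} {A : ℝ}

lemma inv_one_add_sq_le_three_mul {x t : ℝ} (h : |t - x| ≤ 1) :
    (1 + x ^ 2)⁻¹ ≤ 3 * (1 + t ^ 2)⁻¹ := by
  rw [← div_eq_mul_inv, le_div_iff₀ (by positivity), inv_mul_le_iff₀ (by positivity)]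
  nlinarith [sq_nonneg (t - 2 * x), (sq_le_one_iff_abs_le_one _).2 h]

lemma integral_mul_inv_one_add_sq_le_integral (hG : Continuous G) (G0 : ∀ x, 0 ≤ G x) {y : ℝ}
    (hA : ∫ x in y..(y + 1), G x ≤ A) :
    ∫ x in y..(y + 1), G x * (1 + x ^ 2)⁻¹ ≤ ∫ x in y..(y + 1), 3 * A * (1 + x ^ 2)⁻¹ := by
  have weight : Continuous fun x : ℝ => (1 + x ^ 2)⁻¹ :=
    Continuous.inv₀ (by fun_prop) fun x => by positivity
  have le_add_one : y ≤ y + 1 := by linarith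
  have pointwise (t : ℝ) (ht : t ∈ Set.Icc y (y + 1)) :
      ∫ x in y..(y + 1), G x * (1 + x ^ 2)⁻¹ ≤ 3 * A * (1 + t ^ 2)⁻¹ :=
    calc ∫ x in y..(y + 1), G x * (1 + x ^ 2)⁻¹
        ≤ ∫ x in y..(y + 1), G x * (3 * (1 + t ^ 2)⁻¹) := by
          refine intervalIntegral.integral_mono_on le_add_one
            (Continuous.intervalIntegrable (by fun_prop) _ _)
            (Continuous.intervalIntegrable (by fun_prop) _ _) fun x hx => ?_
          refine mul_le_mul_of_nonneg_left (inv_one_add_sq_le_three_mul ?_) (G0 x)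
          rw [abs_le]
          constructor <;> linarith [hx.1, hx.2, ht.1, ht.2]
      _ = (∫ x in y..(y + 1), G x) * (3 * (1 + t ^ 2)⁻¹) :=
          intervalIntegral.integral_mul_const _ _
      _ ≤ A * (3 * (1 + t ^ 2)⁻¹) := by gcongr
      _ = 3 * A * (1 + t ^ 2)⁻¹ := by ring
  have := intervalIntegral.integral_mono_on (μ := MeasureTheory.volume) le_add_one
    intervalIntegrable_const (Continuous.intervalIntegrable (by fun_prop) _ _) pointwise
  rwa [intervalIntegral.integral_const, add_sub_cancel_left, one_smul] at this

lemma integral_mul_inv_one_add_sq_le (hG : Continuous G) (G0 : ∀ x, 0 ≤ G x)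
    (integrable : MeasureTheory.Integrable fun x => G x * (1 + x ^ 2)⁻¹)
    (hA : ∀ x, ∫ t in x..(x + 1), G t ≤ A) : ∫ x, G x * (1 + x ^ 2)⁻¹ ≤ 3 * Real.pi * A := by
  have total := (integrable_inv_one_add_sq.const_mul (3 * A)).hasSum_intervalIntegral 0
  rw [MeasureTheory.integral_const_mul, integral_univ_inv_one_add_sq, mul_right_comm] at total
  exact hasSum_le (fun n => integral_mul_inv_one_add_sq_le_integral hG G0 (hA _))
    (integrable.hasSum_intervalIntegral 0) total

variable {ι : Type*} {s : Finset ι} {c : ι → ℂ} {Λ : ι → ℝ} {J : Finset ℕ} {C δ : ℝ} {m : ℕ}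

lemma BandBound.integral_maxDyadicSum_le_of_integral_le [Countable ι] (bound : BandBound m C)
    (hC : 0 ≤ C) (hm : 1 ≤ m) (hδ : 0 < δ) (hδ₁ : δ ≤ 1 / 8) (hJ : J.Nonempty)
    (hsep : ∀ n ∈ s, ∀ n' ∈ s, Λ n < Λ n' → 4 * δ ≤ Λ n' - Λ n)
    (hA : ∀ x, ∫ t in x..(x + 1), ‖expSum s c Λ t‖ ^ (2 * m) ≤ A) (y : ℝ) :
    ∫ x in y..(y + 1), maxDyadicSum hJ s c Λ Λ x ^ (2 * m) ≤
      4 ^ m * C * (1 + Real.pi ^ 2 / δ ^ 2) * (3 * Real.pi * A) := by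
  have translate (F : ℝ → ℝ) (x : ℝ) : ∫ t in x..(x + 1), F (t + y) =
      ∫ t in (x + y)..(x + y + 1), F t := by
    rw [intervalIntegral.integral_comp_add_right, add_right_comm]
  have base := translate (fun x => maxDyadicSum hJ s c Λ Λ x ^ (2 * m)) 0
  rw [zero_add, zero_add] at base
  rw [← base]
  simp only [maxDyadicSum_add hJ y]
  refine (bound.integral_maxDyadicSum_le hC hm hδ hδ₁ hJ hsep).trans ?_
  gcongr
  refine integral_mul_inv_one_add_sq_le (by fun_prop) (fun x => by positivity)
    (integrable_pow_mul_inv_one_add_sq _) fun x => ?_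
  simp only [← expSum_add y]
  exact (translate (fun t => ‖expSum s c Λ t‖ ^ (2 * m)) x).trans_le (hA _)

lemma bddAbove_range_integral_norm_expSum_pow (p : ℕ) :
    BddAbove (Set.range fun x : ℝ => ∫ t in x..(x + 1), ‖expSum s c Λ t‖ ^ p) := by
  refine ⟨(∑ n ∈ s, ‖c n‖) ^ p, Set.forall_mem_range.2 fun x => ?_⟩
  have := intervalIntegral.integral_mono_on (μ := MeasureTheory.volume) (by linarith : x ≤ x + 1)
    (Continuous.intervalIntegrable (by fun_prop) _ _) intervalIntegrable_const
    fun t _ => pow_le_pow_left₀ (norm_nonneg (expSum s c Λ t)) norm_expSum_le p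
  rwa [intervalIntegral.integral_const, add_sub_cancel_left, one_smul] at this

end Stepanov

section TrigPoly

lemma iSup_integral_nonneg {F : ℝ → ℝ} (h : ∀ x, 0 ≤ F x) :
    0 ≤ ⨆ y : ℝ, ∫ x in y..(y + 1), F x :=
  Real.iSup_nonneg fun _ => intervalIntegral.integral_nonneg (by linarith) fun x _ => h x

lemma stepanovNorm_nonneg (p : ℝ) (F : ℝ → ℝ) : 0 ≤ stepanovNorm p F :=
  Real.rpow_nonneg (iSup_integral_nonneg fun _ => by positivity) _

lemma stepanovNorm_le_of_integral_le {p D : ℝ} {F G : ℝ → ℝ} (hp : 0 ≤ p) (hD : 0 ≤ D)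
    (h : ∀ y, ∫ x in y..(y + 1), |F x| ^ p ≤ D * ⨆ y, ∫ x in y..(y + 1), |G x| ^ p) :
    stepanovNorm p F ≤ D ^ (1 / p) * stepanovNorm p G := by
  rw [stepanovNorm, stepanovNorm,
    ← Real.mul_rpow hD (iSup_integral_nonneg fun _ => by positivity)]
  exact Real.rpow_le_rpow (iSup_integral_nonneg fun _ => by positivity) (ciSup_le h)
    (by positivity)

lemma eval_eq_expSum (P : TrigPoly) (x : ℝ) : P.eval x = expSum (range P.N) P.c P.Λ x := by
  refine sum_congr rfl fun n _ => ?_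
  rw [Circle.coe_exp, mul_comm _ Complex.I, Complex.ofReal_mul, mul_assoc]

lemma maxDyadic_eq_iSup (P : TrigPoly) (x : ℝ) : P.maxDyadic x =
    ⨆ j : ℕ, ‖expSum {n ∈ range P.N | |P.Λ n| ≤ 2 ^ j} P.c P.Λ x‖ := by
  simp only [TrigPoly.maxDyadic, expSum, sum_filter, Circle.coe_exp, mul_comm _ Complex.I,
    Complex.ofReal_mul, mul_assoc]

lemma exists_maxDyadic_eq (P : TrigPoly) : ∃ (J : Finset ℕ) (hJ : J.Nonempty),
    P.maxDyadic = maxDyadicSum hJ (range P.N) P.c P.Λ P.Λ := by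
  obtain ⟨j₀, hj₀⟩ := pow_unbounded_of_one_lt (∑ n ∈ range P.N, |P.Λ n|) (one_lt_two (α := ℝ))
  have small (n) (hn : n ∈ range P.N) : |P.Λ n| ≤ 2 ^ j₀ :=
    (single_le_sum (f := fun n => |P.Λ n|) (fun _ _ => abs_nonneg _) hn).trans hj₀.le
  refine ⟨range (j₀ + 1), nonempty_range_add_one, funext fun x => ?_⟩
  have stable (j) : ({n ∈ range P.N | |P.Λ n| ≤ 2 ^ j} : Finset ℕ) =
      {n ∈ range P.N | |P.Λ n| ≤ 2 ^ min j j₀} := by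
    rcases le_total j j₀ with h | h
    · rw [min_eq_left h]
    · rw [min_eq_right h, filter_true_of_mem small, filter_true_of_mem fun n hn =>
        (small n hn).trans (pow_le_pow_right₀ one_le_two h)]
  rw [maxDyadic_eq_iSup]
  refine le_antisymm (ciSup_le fun j => ?_) (sup'_le _ _ fun j _ => ?_)
  · rw [stable j]
    exact le_sup' (fun j => ‖expSum {n ∈ range P.N | |P.Λ n| ≤ 2 ^ j} P.c P.Λ x‖)
      (mem_range.2 (by omega))
  · refine le_ciSup (f := fun j : ℕ => ‖expSum {n ∈ range P.N | |P.Λ n| ≤ 2 ^ j} P.c P.Λ x‖)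
      ⟨∑ n ∈ range P.N, ‖P.c n‖, Set.forall_mem_range.2 fun j => norm_expSum_le.trans ?_⟩ j
    exact sum_le_sum_of_subset_of_nonneg (filter_subset _ _) fun _ _ _ => norm_nonneg _

lemma lt_sub_of_sep {P : TrigPoly} {α : ℝ} (hP : P.sep α) {n n' : ℕ} (hn : n < P.N)
    (hn' : n' < P.N) (h : P.Λ n < P.Λ n') : α < P.Λ n' - P.Λ n := by
  have strictMono : StrictMonoOn P.Λ (Set.Iio P.N) :=
    strictMonoOn_of_lt_add_one Set.ordConnected_Iio fun n _ _ hn => P.mono n hn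
  have succ_le : n + 1 ≤ n' := (strictMono.lt_iff_lt hn hn').1 h
  have succ_lt : n + 1 < P.N := succ_le.trans_lt hn'
  linarith [hP n succ_lt, strictMono.monotoneOn succ_lt hn' succ_le]

lemma BandBound.stepanovNorm_maxDyadic_le {m : ℕ} {C δ α : ℝ} (bound : BandBound m C)
    (hC : 0 ≤ C) (hm : 1 ≤ m) (hδ : 0 < δ) (hδ₁ : δ ≤ 1 / 8) (hδα : 4 * δ ≤ α) {P : TrigPoly}
    (hP : P.sep α) : stepanovNorm (2 * m : ℕ) P.maxDyadic ≤
      (4 ^ m * C * (1 + Real.pi ^ 2 / δ ^ 2) * (3 * Real.pi)) ^ (1 / (2 * m : ℕ) : ℝ) *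
        stepanovNorm (2 * m : ℕ) fun x => ‖P.eval x‖ := by
  obtain ⟨J, hJ, maxDyadic_eq⟩ := exists_maxDyadic_eq P
  refine stepanovNorm_le_of_integral_le (by positivity) (by positivity) fun y => ?_
  simp only [Real.rpow_natCast, maxDyadic_eq, abs_of_nonneg (maxDyadicSum_nonneg hJ), abs_norm,
    eval_eq_expSum]
  rw [mul_assoc]
  exact bound.integral_maxDyadicSum_le_of_integral_le hC hm hδ hδ₁ hJ
    (fun n hn n' hn' h => hδα.trans (lt_sub_of_sep hP (mem_range.1 hn) (mem_range.1 hn') h).le)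
    (le_ciSup (bddAbove_range_integral_norm_expSum_pow _)) y

end TrigPoly

end StepanovMaximal

open StepanovMaximal

/-- Main theorem: for every `k ≥ 1` and `α > 0` there is `C = C(k, α) > 0` such that
`‖S* f‖_{S^{2^k}} ≤ C ‖f‖_{S^{2^k}}` for every `α`-separated trigonometric polynomial `f`. -/
theorem stmt_15 (k : ℕ) (hk : 1 ≤ k) (α : ℝ) (hα : 0 < α) :
    ∃ C : ℝ, 0 < C ∧ ∀ P : TrigPoly, P.sep α →
      stepanovNorm ((2 : ℝ) ^ k) P.maxDyadic
        ≤ C * stepanovNorm ((2 : ℝ) ^ k) (fun s => ‖P.eval s‖) := by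
  obtain ⟨l, rfl⟩ := Nat.exists_eq_add_of_le' hk
  obtain ⟨C, hC, bound⟩ := exists_bandBound l
  obtain ⟨δ, hδ, hδ₁, hδα⟩ : ∃ δ : ℝ, 0 < δ ∧ δ ≤ 1 / 8 ∧ 4 * δ ≤ α :=
    ⟨min (α / 4) (1 / 8), by positivity, min_le_right _ _,
      by linarith [min_le_left (α / 4) (1 / 8)]⟩
  have exponent : (2 : ℝ) ^ (l + 1) = (2 * 2 ^ l : ℕ) := by push_cast; ring
  rw [exponent]
  refine ⟨(4 ^ 2 ^ l * C * (1 + Real.pi ^ 2 / δ ^ 2) * (3 * Real.pi)) ^ (1 / (2 * 2 ^ l : ℕ) : ℝ)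
    + 1, by positivity, fun P hP => ?_⟩
  refine (bound.stepanovNorm_maxDyadic_le hC Nat.one_le_two_pow hδ hδ₁ hδα hP).trans ?_
  gcongr
  exacts [stepanovNorm_nonneg _ _, le_add_of_nonneg_right zero_le_one]
end

section
/- Let k ∈ ℕ (k ≥ 1) and let (f_j)_{j ∈ ℕ} and (g_j)_{j ∈ ℕ} be sequences of measurable functions ℝ → ℂ. Then ‖(Σ_{j ∈ ℕ} |g_j|²)^{1/2} − (Σ_{j ∈ ℕ} |f_j|²)^{1/2}‖_{S^{2^k}} ≤ (Σ_{j ∈ ℕ} ‖g_j − f_j‖_{S^{2^k}}²)^{1/2}. -/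
open MeasureTheory

/-- The Stepanov `S^p` "norm" of `f : ℝ → ℂ`, valued in `ℝ≥0∞`:
`‖f‖_{S^p} = (sup_{x ∈ ℝ} ∫_x^{x+1} |f(s)|^p ds)^{1/p}`. -/
noncomputable def stepanov (p : ℝ) (f : ℝ → ℂ) : ENNReal :=
  (⨆ x : ℝ, ∫⁻ s in Set.Ioc x (x + 1), (‖f s‖₊ : ENNReal) ^ p) ^ (1 / p)

/-!
The statement combines two inequalities. Pointwise, the reverse triangle inequality in `ℓ^r` bounds
the difference of the square functions (`r = 2`) by the square function of the differences. Then,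
because `r ≤ p`, Minkowski's inequality exchanges the `L^p` norm on each unit interval with the
`ℓ^r` norm, and the supremum over the intervals can be taken inside the `ℓ^r` norm.
-/

section Minkowski

open scoped ENNReal

variable {α ι ε E : Type*} {mα : MeasurableSpace α} {μ : Measure α} {p q r : ℝ}

theorem iSup_rpow_of_pos {ι : Sort*} (hq : 0 < q) (a : ι → ℝ≥0∞) :
    (⨆ i, a i) ^ q = ⨆ i, a i ^ q :=
  (ENNReal.orderIsoRpow q hq).map_iSup a

theorem eLpNorm'_count [MeasurableSpace ι] [MeasurableSingletonClass ι] [ENorm ε] (a : ι → ε) :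
    eLpNorm' a r .count = (∑' i, ‖a i‖ₑ ^ r) ^ (1 / r) := by
  rw [eLpNorm'_eq_lintegral_enorm, lintegral_count]

theorem eLpNorm'_iSup_of_directed [Countable ι] (hq : 0 < q) {F : ι → α → ℝ≥0∞}
    (hF : ∀ i, AEMeasurable (F i) μ) (hdir : Directed (· ≤ ·) F) :
    eLpNorm' (fun s ↦ ⨆ i, F i s) q μ = ⨆ i, eLpNorm' (F i) q μ := by
  have hdir_rpow : Directed (· ≤ ·) fun i s ↦ F i s ^ q :=
    hdir.mono_comp (g := fun (G : α → ℝ≥0∞) s ↦ G s ^ q) _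
      fun _ _ h s ↦ ENNReal.rpow_le_rpow (h s) hq.le
  simp only [eLpNorm'_eq_lintegral_enorm, enorm_eq_self, iSup_rpow_of_pos hq]
  rw [lintegral_iSup_directed (fun i ↦ (hF i).pow_const q) hdir_rpow,
    iSup_rpow_of_pos (one_div_pos.2 hq)]

theorem eLpNorm'_tsum_le [Countable ι] (hq : 1 ≤ q) {F : ι → α → ℝ≥0∞}
    (hF : ∀ i, AEMeasurable (F i) μ) :
    eLpNorm' (fun s ↦ ∑' i, F i s) q μ ≤ ∑' i, eLpNorm' (F i) q μ := by
  have hdir : Directed (· ≤ ·) fun (t : Finset ι) s ↦ ∑ i ∈ t, F i s :=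
    Monotone.directed_le fun _ _ h _ ↦ Finset.sum_le_sum_of_subset h
  simp only [ENNReal.tsum_eq_iSup_sum]
  rw [eLpNorm'_iSup_of_directed (by positivity)
    (fun t ↦ Finset.aemeasurable_fun_sum t fun i _ ↦ hF i) hdir]
  refine iSup_mono fun t ↦ ?_
  simpa only [Finset.sum_fn] using
    eLpNorm'_sum_le (s := t) (fun i _ ↦ (hF i).aestronglyMeasurable) hq

theorem eLpNorm'_enorm_rpow_div [ENorm ε] (hr : 0 < r) (f : α → ε) :
    eLpNorm' (‖f ·‖ₑ ^ r) (p / r) μ = eLpNorm' f p μ ^ r := by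
  rw [eLpNorm'_enorm_rpow f _ r hr, div_mul_cancel₀ p hr.ne']

/-- This is the triangle inequality of `L^(p / r)` for the functions `‖F i‖ ^ r`. -/
theorem eLpNorm'_eLpNorm'_count_le [Countable ι] [MeasurableSpace ι] [MeasurableSingletonClass ι]
    [TopologicalSpace ε] [ContinuousENorm ε] (hr : 0 < r) (hrp : r ≤ p) {F : ι → α → ε}
    (hF : ∀ i, AEStronglyMeasurable (F i) μ) :
    eLpNorm' (fun s ↦ eLpNorm' (fun i ↦ F i s) r .count) p μ
      ≤ eLpNorm' (fun i ↦ eLpNorm' (F i) p μ) r .count := by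
  rw [eLpNorm'_count (fun i ↦ eLpNorm' (F i) p μ), one_div, ENNReal.le_rpow_inv_iff hr]
  calc eLpNorm' (fun s ↦ eLpNorm' (fun i ↦ F i s) r .count) p μ ^ r
      = eLpNorm' (fun s ↦ ∑' i, ‖F i s‖ₑ ^ r) (p / r) μ := by
        simp only [← eLpNorm'_enorm_rpow_div hr, eLpNorm'_count, enorm_eq_self, one_div,
          ENNReal.rpow_inv_rpow hr.ne']
    _ ≤ ∑' i, eLpNorm' (‖F i ·‖ₑ ^ r) (p / r) μ :=
        eLpNorm'_tsum_le ((one_le_div hr).2 hrp) fun i ↦ (hF i).enorm.pow_const r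
    _ = ∑' i, ‖eLpNorm' (F i) p μ‖ₑ ^ r := by simp only [eLpNorm'_enorm_rpow_div hr, enorm_eq_self]

variable [NormedAddCommGroup E]

theorem eLpNorm'_tsub_eLpNorm'_le (hr : 1 ≤ r) {u v : α → E} (hu : AEStronglyMeasurable u μ)
    (hv : AEStronglyMeasurable v μ) :
    eLpNorm' u r μ - eLpNorm' v r μ ≤ eLpNorm' (u - v) r μ := by
  rw [tsub_le_iff_right]
  simpa only [sub_add_cancel] using eLpNorm'_add_le (hu.sub hv) hv hr

theorem eLpNorm'_tsub_sup_tsub_le (hr : 1 ≤ r) {u v : α → E} (hu : AEStronglyMeasurable u μ)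
    (hv : AEStronglyMeasurable v μ) :
    (eLpNorm' u r μ - eLpNorm' v r μ) ⊔ (eLpNorm' v r μ - eLpNorm' u r μ)
      ≤ eLpNorm' (u - v) r μ := by
  refine sup_le (eLpNorm'_tsub_eLpNorm'_le hr hu hv) ?_
  rw [← neg_sub v u, eLpNorm'_neg]
  exact eLpNorm'_tsub_eLpNorm'_le hr hv hu

theorem eLpNorm'_eLpNorm'_count_tsub_sup_tsub_le [Countable ι] [MeasurableSpace ι]
    [MeasurableSingletonClass ι] (hr : 1 ≤ r) (hrp : r ≤ p) {f g : ι → α → E}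
    (hgf : ∀ i, AEStronglyMeasurable (g i - f i) μ) :
    eLpNorm' (fun s ↦
        (eLpNorm' (fun i ↦ g i s) r .count - eLpNorm' (fun i ↦ f i s) r .count)
          ⊔ (eLpNorm' (fun i ↦ f i s) r .count - eLpNorm' (fun i ↦ g i s) r .count)) p μ
      ≤ eLpNorm' (fun i ↦ eLpNorm' (g i - f i) p μ) r .count := by
  refine le_trans ?_ (eLpNorm'_eLpNorm'_count_le (by positivity) hrp hgf)
  refine eLpNorm'_mono_enorm_ae (by linarith) (.of_forall fun s ↦ ?_)
  exact eLpNorm'_tsub_sup_tsub_le hr .of_discrete .of_discrete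

end Minkowski

section Stepanov

open scoped ENNReal

variable {ι ε E : Type*} {p r : ℝ}

/-- The Stepanov `S^p` norm of a function `f : ℝ → ε`, valued in `ℝ≥0∞`. It agrees with `stepanov`
for `ε = ℂ`; allowing `ε = ℝ≥0∞` as well lets it measure differences of square functions, which
may be infinite. -/
noncomputable def stepanovENorm [ENorm ε] (p : ℝ) (f : ℝ → ε) : ℝ≥0∞ :=
  (⨆ x : ℝ, ∫⁻ s in Set.Ioc x (x + 1), ‖f s‖ₑ ^ p) ^ (1 / p)

theorem stepanovENorm_eq_iSup_eLpNorm' [ENorm ε] (hp : 0 < p) (f : ℝ → ε) :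
    stepanovENorm p f = ⨆ x : ℝ, eLpNorm' f p (volume.restrict (Set.Ioc x (x + 1))) :=
  iSup_rpow_of_pos (one_div_pos.2 hp) _

theorem stmt_16_general [Countable ι] [MeasurableSpace ι] [MeasurableSingletonClass ι]
    [NormedAddCommGroup E] (hr : 1 ≤ r) (hrp : r ≤ p) {f g : ι → ℝ → E}
    (hgf : ∀ i, AEStronglyMeasurable (g i - f i)) :
    stepanovENorm p (fun s ↦
        (eLpNorm' (fun i ↦ g i s) r .count - eLpNorm' (fun i ↦ f i s) r .count)
          ⊔ (eLpNorm' (fun i ↦ f i s) r .count - eLpNorm' (fun i ↦ g i s) r .count))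
      ≤ eLpNorm' (fun i ↦ stepanovENorm p (g i - f i)) r .count := by
  have hp : 0 < p := by linarith
  simp only [stepanovENorm_eq_iSup_eLpNorm' hp]
  refine iSup_le fun x ↦
    (eLpNorm'_eLpNorm'_count_tsub_sup_tsub_le hr hrp fun i ↦ (hgf i).restrict).trans ?_
  refine eLpNorm'_mono_enorm_ae (by linarith) (.of_forall fun i ↦ ?_)
  exact le_iSup (fun x : ℝ ↦ eLpNorm' (g i - f i) p (volume.restrict (Set.Ioc x (x + 1)))) x

end Stepanov

/-- Square-function approximation: for sequences `(f_j)`, `(g_j)` of measurable functions,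
`‖(Σ_j |g_j|²)^{1/2} - (Σ_j |f_j|²)^{1/2}‖_{S^{2^k}} ≤ (Σ_j ‖g_j - f_j‖_{S^{2^k}}²)^{1/2}`,
all quantities valued in `[0, ∞]`; the pointwise difference of the two square functions is
interpreted as the extended-real distance `(A - B) ⊔ (B - A)`. -/
theorem stmt_16 (k : ℕ) (hk : 1 ≤ k) (f g : ℕ → ℝ → ℂ)
    (hf : ∀ j, Measurable (f j)) (hg : ∀ j, Measurable (g j)) :
    (⨆ x : ℝ, ∫⁻ s in Set.Ioc x (x + 1),
        (((∑' j : ℕ, (‖g j s‖₊ : ENNReal) ^ 2) ^ ((1 : ℝ) / 2)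
            - (∑' j : ℕ, (‖f j s‖₊ : ENNReal) ^ 2) ^ ((1 : ℝ) / 2))
          ⊔ ((∑' j : ℕ, (‖f j s‖₊ : ENNReal) ^ 2) ^ ((1 : ℝ) / 2)
            - (∑' j : ℕ, (‖g j s‖₊ : ENNReal) ^ 2) ^ ((1 : ℝ) / 2)))
          ^ ((2 : ℝ) ^ k)) ^ (1 / (2 : ℝ) ^ k)
      ≤ (∑' j : ℕ, (stepanov ((2 : ℝ) ^ k) (fun s => g j s - f j s)) ^ 2)
          ^ ((1 : ℝ) / 2) := by
  have hp : (2 : ℝ) ≤ 2 ^ k := le_self_pow₀ one_le_two (by lia)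
  simpa only [stepanovENorm, stepanov, eLpNorm'_count, enorm_eq_self, enorm_eq_nnnorm,
    ENNReal.rpow_two, Pi.sub_apply] using
    stmt_16_general one_le_two hp fun j ↦ ((hg j).sub (hf j)).aestronglyMeasurable
end

section
/- Let h(x) := (1/π) log(|x| / |x − 1|), which is the Hilbert transform of χ_{[0,1]}. Then for every q ∈ [1, ∞): for each n ∈ ℤ the integral ∫_n^{n+1} |h(x)|^q dx is finite, yet Σ_{n ∈ ℤ} (∫_n^{n+1} |h(x)|^q dx)^{1/q} = ∞. Consequently, h does not belong to the amalgam space (L^q, ℓ¹), even though ‖χ_{[0,1]}‖_{(L^q, ℓ¹)} = 1; hence the Hilbert transform is not bounded on (L^q, ℓ¹). -/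
open MeasureTheory

/-- `h = H(χ_{[0,1]})`, the Hilbert transform of the indicator of `[0,1]`. -/
noncomputable def hHT (x : ℝ) : ℝ := (1 / Real.pi) * Real.log (|x| / |x - 1|)

/-! Away from the null set `{0, 1}`, `π h(x) = log |x| - log |x - 1|`, and a logarithmic singularity
is weaker than every power singularity, so `h` is locally in `L^q` for every finite `q`. At infinity
the two logarithms cancel only to first order: `h(x) ≥ 1 / (π x)` for `x > 1`, so the local norms of
`h` dominate the tail of a harmonic series. -/

open Set
open scoped ENNReal

section LocalIntegrability

theorem intervalIntegrable_abs_rpow {r : ℝ} (hr : -1 < r) (a b : ℝ) :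
    IntervalIntegrable (fun x : ℝ => |x| ^ r) volume a b := by
  refine intervalIntegrable_of_even (fun x => by rw [abs_neg]) fun c hc => ?_
  refine (intervalIntegral.intervalIntegrable_rpow' hr).congr fun x hx => ?_
  rw [uIoc_of_le hc.le] at hx
  simp only [abs_of_pos hx.1]

theorem memLp_abs_rpow_restrict_Ioc {p : ℝ≥0∞} (hp : p ≠ ∞) {r : ℝ} (hr : -1 < r * p.toReal)
    (a b : ℝ) : MemLp (fun x : ℝ => |x| ^ r) p (volume.restrict (Ioc a b)) := by
  have hmeas : AEStronglyMeasurable (fun x : ℝ => |x| ^ r) (volume.restrict (Ioc a b)) :=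
    (by fun_prop : Measurable fun x : ℝ => |x| ^ r).aestronglyMeasurable
  rcases eq_or_ne p 0 with rfl | hp0
  · exact memLp_zero_iff_aestronglyMeasurable.2 hmeas
  refine (integrable_norm_rpow_iff hmeas hp0 hp).1 ?_
  refine (intervalIntegrable_abs_rpow hr a b).1.congr (.of_forall fun x => ?_)
  dsimp only
  rw [Real.norm_of_nonneg (by positivity), ← Real.rpow_mul (abs_nonneg x)]

theorem abs_log_le_rpow_add_rpow_neg_div (x : ℝ) {ε : ℝ} (hε : 0 < ε) :
    |Real.log x| ≤ (|x| ^ ε + |x| ^ (-ε)) / ε := by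
  have hpos : 0 ≤ |x| ^ ε / ε := by positivity
  have hneg : 0 ≤ |x| ^ (-ε) / ε := by positivity
  have hlog : Real.log x ≤ |x| ^ ε / ε := by
    simpa only [Real.log_abs] using Real.log_le_rpow_div (abs_nonneg x) hε
  have hlog_inv : -Real.log x ≤ |x| ^ (-ε) / ε := by
    simpa only [Real.log_inv, Real.log_abs, Real.inv_rpow (abs_nonneg x),
      ← Real.rpow_neg (abs_nonneg x)] using
      Real.log_le_rpow_div (inv_nonneg.2 (abs_nonneg x)) hε
  rw [add_div]
  exact abs_le.2 ⟨by linarith, by linarith⟩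

theorem memLp_log_restrict_Ioc {p : ℝ≥0∞} (hp : p ≠ ∞) (a b : ℝ) :
    MemLp Real.log p (volume.restrict (Ioc a b)) := by
  have hp_nonneg : 0 ≤ p.toReal := ENNReal.toReal_nonneg
  set ε : ℝ := 1 / (p.toReal + 1) with hε_def
  have hε : 0 < ε := by positivity
  have hεp : ε * p.toReal < 1 := by
    rw [hε_def, one_div_mul_eq_div, div_lt_one (by positivity)]
    exact lt_add_one _
  have hpos := memLp_abs_rpow_restrict_Ioc hp (r := ε)
    (by linarith [mul_nonneg hε.le hp_nonneg]) a b
  have hneg := memLp_abs_rpow_restrict_Ioc hp (r := -ε) (by linarith) a b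
  refine ((hpos.add hneg).mul_const ε⁻¹).mono Real.measurable_log.aestronglyMeasurable ?_
  refine .of_forall fun x => ?_
  exact (abs_log_le_rpow_add_rpow_neg_div x hε).trans (le_abs_self _)

theorem memLp_log_sub_const_restrict_Ioc {p : ℝ≥0∞} (hp : p ≠ ∞) (c a b : ℝ) :
    MemLp (fun x => Real.log (x - c)) p (volume.restrict (Ioc a b)) := by
  have hshift : MeasurePreserving (fun x : ℝ => x - c) (volume.restrict (Ioc a b))
      (volume.restrict (Ioc (a - c) (b - c))) := by
    simpa using (measurePreserving_sub_right volume c).restrict_preimage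
      (measurableSet_Ioc (a := a - c) (b := b - c))
  exact (memLp_log_restrict_Ioc hp (a - c) (b - c)).comp_measurePreserving hshift

theorem hHT_ae_eq : hHT =ᵐ[volume] fun x => 1 / Real.pi * (Real.log x - Real.log (x - 1)) := by
  filter_upwards [Measure.ae_ne volume 0, Measure.ae_ne volume 1] with x hx0 hx1
  rw [hHT, Real.log_div (abs_ne_zero.2 hx0) (abs_ne_zero.2 (sub_ne_zero.2 hx1)), Real.log_abs,
    Real.log_abs]

theorem memLp_hHT_restrict_Ioc {p : ℝ≥0∞} (hp : p ≠ ∞) (a b : ℝ) :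
    MemLp hHT p (volume.restrict (Ioc a b)) :=
  (((memLp_log_restrict_Ioc hp a b).sub (memLp_log_sub_const_restrict_Ioc hp 1 a b)).const_mul
    (1 / Real.pi)).ae_eq (Filter.EventuallyEq.symm (ae_restrict_of_ae hHT_ae_eq))

theorem integrableOn_norm_hHT_rpow {q : ℝ} (hq : 0 ≤ q) (a b : ℝ) :
    IntegrableOn (fun x => ‖hHT x‖ ^ q) (Ioc a b) := by
  simpa only [IntegrableOn, ENNReal.toReal_ofReal hq] using
    (memLp_hHT_restrict_Ioc (ENNReal.ofReal_ne_top (r := q)) a b).integrable_norm_rpow'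

end LocalIntegrability

section LocalNorm

variable {E : Type*} [NormedAddCommGroup E]

/-- The local `L^q` norm of `f` on the unit cell `(n, n + 1]`, whose sum over `n : ℤ` is the norm
of `f` in the amalgam space `(L^q, ℓ¹)`. It is a Bochner integral, so it is `0` rather than infinite
when `‖f‖ ^ q` is not integrable on the cell. -/
noncomputable def localLpNorm (f : ℝ → E) (q : ℝ) (n : ℤ) : ℝ :=
  (∫ x in Ioc (n : ℝ) (n + 1), ‖f x‖ ^ q) ^ (1 / q)

theorem le_localLpNorm {f : ℝ → E} {q c : ℝ} {n : ℤ} (hq : 0 < q) (hc : 0 ≤ c)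
    (hf : IntegrableOn (fun x => ‖f x‖ ^ q) (Ioc (n : ℝ) (n + 1)))
    (hcf : ∀ x ∈ Ioc (n : ℝ) (n + 1), c ≤ ‖f x‖) : c ≤ localLpNorm f q n := by
  have hle : c ^ q ≤ ∫ x in Ioc (n : ℝ) (n + 1), ‖f x‖ ^ q := by
    simpa using setIntegral_mono_on (integrableOn_const (C := c ^ q) (by simp)) hf
      measurableSet_Ioc fun x hx => Real.rpow_le_rpow hc (hcf x hx) hq.le
  rw [localLpNorm, one_div]
  exact (Real.le_rpow_inv_iff_of_pos hc ((Real.rpow_nonneg hc q).trans hle) hq).2 hle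

theorem localLpNorm_indicator_one {q : ℝ} (hq : q ≠ 0) {s : Set ℝ} (hs : MeasurableSet s) (n : ℤ) :
    localLpNorm (s.indicator fun _ => (1 : ℝ)) q n =
      volume.real (s ∩ Ioc (n : ℝ) (n + 1)) ^ (1 / q) := by
  have hpow : (fun x => ‖s.indicator (fun _ => (1 : ℝ)) x‖ ^ q) = s.indicator 1 := by
    ext x
    by_cases hx : x ∈ s <;> simp [hx, Real.zero_rpow hq]
  rw [localLpNorm, hpow, integral_indicator_one hs, measureReal_restrict_apply hs]

theorem tsum_localLpNorm_indicator_Icc_zero_one {q : ℝ} (hq : q ≠ 0) :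
    ∑' n : ℤ, localLpNorm ((Icc (0 : ℝ) 1).indicator fun _ => (1 : ℝ)) q n = 1 := by
  have hcell (n : ℤ) : localLpNorm ((Icc (0 : ℝ) 1).indicator fun _ => (1 : ℝ)) q n =
      volume.real (Ioc (0 : ℝ) 1 ∩ Ioc (n : ℝ) (n + 1)) ^ (1 / q) := by
    rw [localLpNorm_indicator_one hq measurableSet_Icc, measureReal_congr
      (Ioc_ae_eq_Icc.symm.inter (ae_eq_refl (Ioc (n : ℝ) (n + 1))))]
  simp only [hcell]
  rw [tsum_eq_single 0]
  · simp
  · intro n hn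
    have hdisj : Disjoint (Ioc (0 : ℝ) 1) (Ioc (n : ℝ) (n + 1)) := by
      simpa using pairwise_disjoint_Ioc_intCast ℝ hn.symm
    rw [hdisj.inter_eq, measureReal_empty, Real.zero_rpow (one_div_ne_zero hq)]

end LocalNorm

section Divergence

theorem one_div_pi_mul_le_hHT {x : ℝ} (hx : 1 < x) : 1 / (Real.pi * x) ≤ hHT x := by
  have hx_pos : 0 < x := by linarith
  have hx_sub : 0 < x - 1 := by linarith
  rw [hHT, abs_of_pos hx_pos, abs_of_pos hx_sub, one_div_mul_eq_div, ← div_div, div_right_comm]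
  gcongr
  calc 1 / x = 1 - (x / (x - 1))⁻¹ := by field_simp; ring
    _ ≤ Real.log (x / (x - 1)) := Real.one_sub_inv_le_log_of_pos (div_pos hx_pos hx_sub)

theorem one_div_pi_mul_le_localLpNorm_hHT {q : ℝ} (hq : 0 < q) {n : ℤ} (hn : 1 ≤ n) :
    1 / (Real.pi * (n + 1)) ≤ localLpNorm hHT q n := by
  have hn' : (1 : ℝ) ≤ n := mod_cast hn
  refine le_localLpNorm hq (by positivity) (integrableOn_norm_hHT_rpow hq.le _ _) fun x hx => ?_
  have hx_one : 1 < x := hn'.trans_lt hx.1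
  calc 1 / (Real.pi * (n + 1)) ≤ 1 / (Real.pi * x) := by gcongr; exact hx.2
    _ ≤ hHT x := one_div_pi_mul_le_hHT hx_one
    _ ≤ ‖hHT x‖ := le_abs_self _

theorem not_summable_localLpNorm_hHT {q : ℝ} (hq : 0 < q) : ¬ Summable (localLpNorm hHT q) := by
  intro hsum
  have hinj : Function.Injective fun k : ℕ => (k : ℤ) + 1 := fun _ _ h => by simpa using h
  have hle (k : ℕ) : 1 / Real.pi * (1 / ((k + 2 : ℕ) : ℝ)) ≤ localLpNorm hHT q (k + 1) := by
    convert one_div_pi_mul_le_localLpNorm_hHT hq (n := k + 1) (by omega) using 1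
    rw [one_div_mul_one_div]
    push_cast
    ring
  have hharmonic : Summable fun k : ℕ => 1 / Real.pi * (1 / ((k + 2 : ℕ) : ℝ)) :=
    (hsum.comp_injective hinj).of_nonneg_of_le (fun k => by positivity) hle
  rw [summable_mul_left_iff (by positivity),
    summable_nat_add_iff 2 (f := fun k : ℕ => 1 / (k : ℝ))] at hharmonic
  exact Real.not_summable_one_div_natCast hharmonic

end Divergence

theorem stmt_19_general {q : ℝ} (hq : 0 < q) :
    (∀ n : ℤ, IntegrableOn (fun x : ℝ => |hHT x| ^ q) (Ioc (n : ℝ) (n + 1))) ∧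
    ¬ Summable (fun n : ℤ => (∫ x in Ioc (n : ℝ) (n + 1), |hHT x| ^ q) ^ (1 / q)) ∧
    (∑' n : ℤ,
        (∫ x in Ioc (n : ℝ) (n + 1),
          ‖(Icc (0 : ℝ) 1).indicator (fun _ => (1 : ℝ)) x‖ ^ q) ^ (1 / q)) = 1 :=
  ⟨fun n => integrableOn_norm_hHT_rpow hq.le n (n + 1), not_summable_localLpNorm_hHT hq,
    tsum_localLpNorm_indicator_Icc_zero_one hq.ne'⟩

/-- The Hilbert transform `h(x) = (1/π) log(|x|/|x-1|)` of `χ_{[0,1]}` has every local piece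
`∫_n^{n+1} |h|^q` finite, yet `Σ_{n ∈ ℤ} (∫_n^{n+1} |h|^q)^{1/q} = ∞`, so `h ∉ (L^q, ℓ¹)`;
meanwhile `‖χ_{[0,1]}‖_{(L^q, ℓ¹)} = 1`.  Hence the Hilbert transform is not bounded on the
amalgam space `(L^q, ℓ¹)`. -/
theorem stmt_19 (q : ℝ) (hq : 1 ≤ q) :
    (∀ n : ℤ, IntegrableOn (fun x : ℝ => |hHT x| ^ q) (Set.Ioc (n : ℝ) (n + 1))) ∧
    ¬ Summable (fun n : ℤ =>
        (∫ x in Set.Ioc (n : ℝ) (n + 1), |hHT x| ^ q) ^ (1 / q)) ∧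
    (∑' n : ℤ,
        (∫ x in Set.Ioc (n : ℝ) (n + 1),
          ‖Set.indicator (Set.Icc (0 : ℝ) 1) (fun _ => (1 : ℝ)) x‖ ^ q) ^ (1 / q)) = 1 :=
  stmt_19_general (zero_lt_one.trans_le hq)
end
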